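/- Let n ≥ 2 and D ≥ 1 be integers. Let Q(n,D) be the set of polynomials P(T,Y) = Y^n + a_{n−1}(T) Y^{n−1} + ⋯ + a_1(T) Y + a_0(T) with all a_i ∈ ℤ[T] of degree at most D, and Q(n,D,H) the subset of those all of whose integer coefficients a_{i,j} (the coefficient of a_i(T) at T^j) satisfy |a_{i,j}| ≤ H. Let S ⊆ Q(n,D) consist of all P satisfying: (a) the Galois group of the splitting field of P over the rational function field ℚ(T) is isomorphic to the symmetric group S_n; (b) the discriminant Δ(T) ∈ ℤ[T] of P with respect to Y is irreducible over ℚ; and (c) the polynomial a_{n−1,D} Y^{n−1} + a_{n−2,D} Y^{n−2} + ⋯ + a_{0,D} has degree n−1 and is irreducible over ℚ. Then |S ∩ Q(n,D,H)| / |Q(n,D,H)| = 1 − O(log H / √H) as H → ∞. -/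

import Mathlib

/-!
Polynomials in `Q(n,D,H)` correspond to integer vectors in a box of dimension `d = n (D + 1)`. Call a set of
vectors negligible (`Negl`) if it has `O(H ^ d log H / √H)` points in the box of size `H`. The theorem says that
each of the conditions (a), (b), (c) fails only on a negligible set (`negl_bad`).

Conditions (a) and (c) are handled by a large sieve (`sieve_asymp`): a set of integer vectors that avoids a
positive proportion of the residue classes modulo every large prime is negligible. This is Turán's second-moment
inequality for the primes up to `√H`, with Fejér weights that are exactly equidistributed modulo products of two
of them. A positive proportion of polynomials over `𝔽_p` is irreducible (`irr_count`), which gives (c). A positive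
proportion of monic polynomials has any one of the patterns: irreducible; linear times irreducible; irreducible
quadratic times distinct linear factors. If `P(0,Y)` shows the three patterns modulo three primes, then the
Frobenius elements generate a doubly transitive group with a transposition, so the group is `S_n` (`gal_symm`).

For (b) with `n = 2` the sieve applies to the discriminant `a₁² - 4 a₀`. For `n ≥ 3` all coefficients but
`t = a_{0,D-1}` are fixed, outside of a negligible set on which certain one-variable polynomials become
reducible (`FamHyp`). The family is `F + t T^(D-1)`, and its discriminant as a polynomial in `T` has degree
`2 (n - 1) D` and describes the projection to the `(t, T)`-plane of the critical curve `F_Y(T, Y) = 0`,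
`t = -F(T, Y) / T^(D-1)`. This curve has a place over `t = ∞` at which `T` has a simple pole and `t` has a pole
of order `(n - 1) D + 1`, and another one at which both have simple poles. The first one forces every factor of
the discriminant over `ℚ(t)` to have degree at least `(n - 1) D + 1`, more than half of the total degree, so that
the discriminant is irreducible (`famK_irreducible`). Both together show that its root field contains no
quadratic extension of `ℚ(t)` (`famK_quad`).

If the discriminant is reducible at an integer `t`, then for some `k` a symmetric expression in `k` of its roots
is an integer, which is a root of a resolvent polynomial (`exists_root_resolvent`). By the two facts about the
generic discriminant, the resolvents are separable with no factor of degree one or two over `ℚ(t)`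
(`resolvent_coprime`). The determinant method with auxiliary curves of degree two then bounds the number of
`|t| ≤ H` at which a resolvent has an integral root by `O(√H)`, uniformly in the fixed coefficients
(`integral_points`, `fibre_bound`). Summing over the `O(H ^ (d - 1))` lines gives `O(H ^ d / √H)` vectors.
-/

open Polynomial Filter Asymptotics

noncomputable section

/-- The Sylvester matrix of `p` and `q`, viewed as polynomials of degrees `m` and `n`
respectively: the first `n` rows carry the coefficients of `p`, the last `m` rows those
of `q`. Its determinant is the resultant `Res(p,q)`. -/
def sylvesterMatrix {R : Type*} [CommRing R] (p q : Polynomial R) (m n : ℕ) :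
    Matrix (Fin (m + n)) (Fin (m + n)) R :=
  Matrix.of fun i j =>
    if (i : ℕ) < n then
      if (i : ℕ) ≤ (j : ℕ) ∧ (j : ℕ) ≤ (i : ℕ) + m then
        p.coeff (m - ((j : ℕ) - (i : ℕ))) else 0
    else
      if (i : ℕ) - n ≤ (j : ℕ) ∧ (j : ℕ) ≤ ((i : ℕ) - n) + n then
        q.coeff (n - ((j : ℕ) - ((i : ℕ) - n))) else 0

/-- The resultant of `p` (of degree `m`) and `q` (of degree `n`). -/
def resultantOf {R : Type*} [CommRing R] (p q : Polynomial R) (m n : ℕ) : R :=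
  (sylvesterMatrix p q m n).det

/-- The discriminant of a monic polynomial `p` of degree `n`:
`(-1)^(n(n-1)/2)` times the resultant of `p` and its derivative. -/
def discOf {R : Type*} [CommRing R] (p : Polynomial R) (n : ℕ) : R :=
  (-1) ^ (n * (n - 1) / 2) * resultantOf p (Polynomial.derivative p) n (n - 1)

/-- `Q(n,D)`: monic polynomials of degree `n` in `Y` over `ℤ[T]` whose coefficients
have degree at most `D` in `T`. -/
def QSet (n D : ℕ) : Set (Polynomial (Polynomial ℤ)) :=
  {P | P.Monic ∧ P.natDegree = n ∧ ∀ i, (P.coeff i).natDegree ≤ D}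

/-- All integer coefficients of `P(T,Y)` have absolute value at most `H`. -/
def QHeightLE (P : Polynomial (Polynomial ℤ)) (H : ℕ) : Prop :=
  ∀ i j, |(P.coeff i).coeff j| ≤ (H : ℤ)

/-- `P(T,Y)` viewed as a polynomial in `Y` over `ℚ(T)`. -/
def toQT (P : Polynomial (Polynomial ℤ)) : Polynomial (RatFunc ℚ) :=
  P.map ((algebraMap (Polynomial ℚ) (RatFunc ℚ)).comp
    (Polynomial.mapRingHom (Int.castRingHom ℚ)))

/-- The polynomial `a_{n-1,D} Y^{n-1} + ⋯ + a_{0,D}` built from the top `T`-coefficients. -/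
def topCoeffPoly (P : Polynomial (Polynomial ℤ)) (n D : ℕ) : Polynomial ℤ :=
  ∑ i ∈ Finset.range n, Polynomial.C ((P.coeff i).coeff D) * Polynomial.X ^ i

namespace S9

/-! ### The determinant method -/

lemma sum_range_le_of_injective {e : ℕ} (k : Fin e → ℕ) (hk : Function.Injective k) :
    ∑ i ∈ Finset.range e, i ≤ ∑ i, k i := by
  classical
  have h := Finset.sum_range_le_sum (s := Finset.univ.image (fun i => (k i : ℤ))) (c := 0)
    (by simp)
  rw [Finset.card_image_of_injective _ (fun a b hab => hk (by exact_mod_cast hab)),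
    Finset.sum_image (fun a _ b _ hab => hk (by exact_mod_cast hab))] at h
  simp only [Finset.card_univ, Fintype.card_fin, zero_add] at h
  zify
  exact h

/-- If the coefficient of degree `k` of each `Ψ l` is divisible by `p ^ k`, a determinant of values
of the `Ψ l` is divisible by `p ^ (0 + 1 + ⋯ + (e - 1))`: expanding the rows into monomials, only the
terms with distinct exponents survive. -/
lemma det_dvd {e : ℕ} (p : ℤ) (Ψ : Fin e → ℤ[X]) (hΨ : ∀ l k, p ^ k ∣ (Ψ l).coeff k)
    (s : Fin e → ℤ) :
    p ^ (∑ i ∈ Finset.range e, i) ∣ (Matrix.of fun l r => (Ψ l).eval (s r)).det := by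
  classical
  obtain ⟨K, hK⟩ : ∃ K, ∀ l, (Ψ l).natDegree < K :=
    ⟨(∑ l, (Ψ l).natDegree) + 1, fun l => Nat.lt_succ_of_le
      (Finset.single_le_sum (f := fun l => (Ψ l).natDegree) (fun _ _ => Nat.zero_le _)
        (Finset.mem_univ l))⟩
  have hrow : (Matrix.of fun l r => (Ψ l).eval (s r)) =
      fun l => ∑ k ∈ Finset.range K, (Ψ l).coeff k • (fun r => s r ^ k) := by
    funext l r
    simp [Finset.sum_apply, eval_eq_sum_range' (hK l)]
  have := (Matrix.detRowAlternating (R := ℤ) (n := Fin e)).toMultilinearMap.map_sum_finset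
    (fun l k => (Ψ l).coeff k • (fun r => s r ^ k)) (fun _ => Finset.range K)
  have h2 : (Matrix.of fun l r => (Ψ l).eval (s r)).det =
      ∑ κ ∈ Fintype.piFinset (fun _ : Fin e => Finset.range K),
        Matrix.detRowAlternating (fun l => (Ψ l).coeff (κ l) • (fun r => s r ^ (κ l))) := by
    rw [hrow]; exact this
  rw [h2]
  refine Finset.dvd_sum fun κ _ => ?_
  rw [AlternatingMap.map_smul_univ]
  by_cases hκ : Function.Injective κ
  · refine Dvd.dvd.mul_right ?_ _
    refine (pow_dvd_pow p (sum_range_le_of_injective κ hκ)).trans ?_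
    rw [← Finset.prod_pow_eq_pow_sum]
    exact Finset.prod_dvd_prod_of_dvd _ _ fun l _ => hΨ l (κ l)
  · have : Matrix.detRowAlternating (R := ℤ) (fun l : Fin e => (fun r => s r ^ (κ l))) = 0 := by
      simp only [Function.Injective, not_forall] at hκ
      obtain ⟨a, b, hab, hne⟩ := hκ
      exact AlternatingMap.map_eq_zero_of_eq _ _ (by simp [hab]) hne
    rw [this]; simp

/-- On one nonsingular residue class modulo `p`, the curve `R = 0` is modulo `p ^ (m + 1)` the graph
of a polynomial function `y = φ(t)`. -/
lemma hensel_class (R : ℤ[X][X]) (p : ℕ) (hp : p.Prime) (t₀ y₀ : ℤ)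
    (hd : ¬ (p : ℤ) ∣ R.derivative.evalEval t₀ y₀) (m : ℕ) :
    ∃ φ : ℤ[X], ∀ t y : ℤ, (p : ℤ) ∣ t - t₀ → (p : ℤ) ∣ y - y₀ → R.evalEval t y = 0 →
      (p : ℤ) ^ (m + 1) ∣ y - φ.eval t := by
  have hp' : Prime (p : ℤ) := Nat.prime_iff_prime_int.mp hp
  obtain ⟨w, b, hw⟩ : IsCoprime (R.derivative.evalEval t₀ y₀) (p : ℤ) :=
    ((Prime.coprime_iff_not_dvd hp').2 hd).symm
  induction m with
  | zero => exact ⟨C y₀, fun t y _ hy _ => by simpa using hy⟩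
  | succ m ih =>
    obtain ⟨φ, hφ⟩ := ih
    -- Newton step: `w` is an inverse of `R_Y(t₀, y₀)` modulo `p`.
    refine ⟨φ - C w * R.eval φ, fun t y ht hy h0 => ?_⟩
    obtain ⟨z, hz⟩ := hφ t y ht hy h0
    have hev : ∀ (Q : ℤ[X][X]) (y : ℤ), Q.evalEval t y = (Q.map (evalRingHom t)).eval y := by
      intro Q y; rw [map_evalRingHom_eval]
    have hφe : (R.eval φ).eval t = (R.map (evalRingHom t)).eval (φ.eval t) := by
      rw [← coe_evalRingHom, eval, hom_eval₂, eval_map]; simp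
    obtain ⟨k, hk⟩ := (R.map (evalRingHom t)).binomExpansion (φ.eval t) (y - φ.eval t)
    rw [add_sub_cancel, ← hev, h0] at hk
    have hder : (p : ℤ) ∣ (R.map (evalRingHom t)).derivative.eval (φ.eval t) -
        R.derivative.evalEval t₀ y₀ := by
      rw [derivative_map, ← hev]
      have h1 : (p : ℤ) ∣ φ.eval t - y₀ := by
        have : (p : ℤ) ∣ y - φ.eval t := (dvd_pow_self _ (Nat.succ_ne_zero m)).trans ⟨z, hz⟩
        have h2 := dvd_sub hy this
        simpa using h2
      have h3 : (p : ℤ) ∣ R.derivative.evalEval t (φ.eval t) - R.derivative.evalEval t y₀ := by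
        rw [hev, hev]; exact h1.trans (sub_dvd_eval_sub _ _ _)
      have h4 : (p : ℤ) ∣ R.derivative.evalEval t y₀ - R.derivative.evalEval t₀ y₀ := by
        exact ht.trans (sub_dvd_eval_sub _ _ _)
      have := dvd_add h3 h4
      simpa using this
    obtain ⟨c, hc⟩ := hder
    have e1 : (φ - C w * R.eval φ).eval t
        = φ.eval t - w * (R.map (evalRingHom t)).eval (φ.eval t) := by
      simp [hφe]
    rw [e1]
    set A := (R.map (evalRingHom t)).eval (φ.eval t)
    set B := (R.map (evalRingHom t)).derivative.eval (φ.eval t)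
    set d := R.derivative.evalEval t₀ y₀
    have hB : B = d + p * c := by linear_combination hc
    rw [hz] at hk
    refine ⟨z * (b - w * c) - w * k * z ^ 2 * (p : ℤ) ^ m, ?_⟩
    have hy : y = φ.eval t + (p : ℤ) ^ (m + 1) * z := by linear_combination hz
    rw [hy]
    rw [hB] at hk
    have e2 : ((p : ℤ) ^ (m + 1) * z) ^ 2 = (p : ℤ) ^ (m + 1 + 1) * (z ^ 2 * (p : ℤ) ^ m) := by
      ring
    rw [e2] at hk
    have e3 : (p : ℤ) ^ (m + 1 + 1) = (p : ℤ) ^ (m + 1) * p := pow_succ _ _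
    linear_combination (-w) * hk - (p : ℤ) ^ (m + 1) * z * hw + z * (w * c - b) * e3

/-- If `e` points of one nonsingular residue class mod `p` lie on `R = 0`, the determinant of the
values of `e` monomials at them is highly divisible by `p`. -/
lemma det_class (R : ℤ[X][X]) (p : ℕ) (hp : p.Prime) (t₀ y₀ : ℤ)
    (hd : ¬ (p : ℤ) ∣ R.derivative.evalEval t₀ y₀) {e : ℕ} (a b : Fin e → ℕ)
    (t y : Fin e → ℤ) (ht : ∀ r, (p : ℤ) ∣ t r - t₀) (hy : ∀ r, (p : ℤ) ∣ y r - y₀)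
    (h0 : ∀ r, R.evalEval (t r) (y r) = 0) :
    (p : ℤ) ^ (∑ i ∈ Finset.range e, i) ∣ (Matrix.of fun l r => t r ^ a l * y r ^ b l).det := by
  classical
  set E := ∑ i ∈ Finset.range e, i
  obtain ⟨φ, hφ⟩ := hensel_class R p hp t₀ y₀ hd E
  choose s hs using ht
  -- in the parameter `s`, where `t = t₀ + p s`, the monomials satisfy the hypothesis of `det_dvd`
  have key := det_dvd (p : ℤ)
    (fun l => ((X ^ a l * φ ^ b l).comp (C t₀ + X)).comp (C (p : ℤ) * X)) (fun l k => by
      rw [comp_C_mul_X_coeff]; exact Dvd.intro_left _ rfl) s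
  have hev : ∀ l r, (((X ^ a l * φ ^ b l).comp (C t₀ + X)).comp (C (p : ℤ) * X)).eval (s r)
      = t r ^ a l * φ.eval (t r) ^ b l := by
    intro l r
    have : t₀ + p * s r = t r := by linear_combination -(hs r)
    simp [this]
  simp only [hev] at key
  set I := Ideal.span {(p : ℤ) ^ E}
  have hdet : Ideal.Quotient.mk I (Matrix.of fun l r => t r ^ a l * y r ^ b l).det
      = Ideal.Quotient.mk I (Matrix.of fun l r => t r ^ a l * φ.eval (t r) ^ b l).det := by
    rw [RingHom.map_det, RingHom.map_det]
    congr 1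
    ext l r
    have : Ideal.Quotient.mk I (y r) = Ideal.Quotient.mk I (φ.eval (t r)) := by
      rw [Ideal.Quotient.eq, Ideal.mem_span_singleton]
      exact (pow_dvd_pow _ (Nat.le_succ E)).trans
        (hφ _ _ ⟨s r, hs r⟩ (hy r) (h0 r))
    change Ideal.Quotient.mk I (t r ^ a l * y r ^ b l) =
      Ideal.Quotient.mk I (t r ^ a l * φ.eval (t r) ^ b l)
    rw [map_mul, map_mul, map_pow _ (y r), this, ← map_pow]
  rw [← Ideal.mem_span_singleton, ← Ideal.Quotient.eq_zero_iff_mem, hdet,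
    Ideal.Quotient.eq_zero_iff_mem, Ideal.mem_span_singleton]
  exact key

lemma abs_det_le {e : ℕ} (M : Matrix (Fin e) (Fin e) ℤ) (b : Fin e → ℤ)
    (h : ∀ l r, |M l r| ≤ b l) : |M.det| ≤ (e.factorial : ℤ) * ∏ l, b l := by
  rw [← Matrix.det_transpose, Matrix.det_apply]
  refine (Finset.abs_sum_le_sum_abs _ _).trans ?_
  have : ∀ σ ∈ (Finset.univ : Finset (Equiv.Perm (Fin e))),
      |Equiv.Perm.sign σ • ∏ i, M.transpose (σ i) i| ≤ ∏ l, b l := by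
    intro σ _
    rw [Units.smul_def, smul_eq_mul, abs_mul]
    have : |((Equiv.Perm.sign σ : ℤˣ) : ℤ)| = 1 := by
      rcases Int.units_eq_one_or (Equiv.Perm.sign σ) with h | h <;> simp [h]
    rw [this, one_mul, Finset.abs_prod]
    exact Finset.prod_le_prod (fun _ _ => abs_nonneg _) fun i _ => h _ _
  refine (Finset.sum_le_card_nsmul _ _ _ this).trans ?_
  simp [Fintype.card_perm]

/-- If all `e × e` minors of a matrix with `e` columns vanish, then some nonzero vector is annihilated
by all its rows. -/
lemma exists_coeffs {ι : Type*} {e : ℕ} (v : ι → Fin e → ℚ)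
    (h : ∀ s : Fin e → ι, (Matrix.of fun r => v (s r)).det = 0) :
    ∃ c : Fin e → ℚ, c ≠ 0 ∧ ∀ i, ∑ l, c l * v i l = 0 := by
  classical
  by_cases hs : Submodule.span ℚ (Set.range v) = ⊤
  · exfalso
    obtain ⟨b, hb, hspan, hli⟩ := exists_linearIndependent ℚ (Set.range v)
    rw [hs] at hspan
    let B := Module.Basis.mk hli (by simp [hspan])
    have : Fintype b := FiniteDimensional.fintypeBasisIndex B
    have hcard : Fintype.card b = e := by
      rw [← Module.finrank_eq_card_basis B]; simp
    let E : Fin e ≃ b := (Fintype.equivFinOfCardEq hcard).symm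
    choose s hs using fun r => hb (E r).2
    have hrow : LinearIndependent ℚ (Matrix.of fun r => v (s r)).row := by
      have : (Matrix.of fun r => v (s r)).row = (Subtype.val : b → Fin e → ℚ) ∘ E := by
        funext r; simpa using hs r
      rw [this]
      exact hli.comp _ E.injective
    have hu := Matrix.linearIndependent_rows_iff_isUnit.1 hrow
    rw [Matrix.isUnit_iff_isUnit_det, h s] at hu
    simp at hu
  · obtain ⟨f, hf, hle⟩ := Submodule.exists_le_ker_of_lt_top _ (lt_top_iff_ne_top.2 hs)
    refine ⟨fun l => f (Pi.single l 1), fun h0 => hf ?_, fun i => ?_⟩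
    · refine LinearMap.pi_ext' fun l => LinearMap.ext_ring ?_
      simpa using congrFun h0 l
    · have h1 : f (v i) = 0 := hle (Submodule.subset_span ⟨i, rfl⟩)
      rw [← h1]
      conv_rhs => rw [← Finset.univ_sum_single (v i)]
      rw [map_sum]
      refine Finset.sum_congr rfl fun l _ => ?_
      rw [show Pi.single l (v i l) = v i l • (Pi.single l (1 : ℚ) : Fin e → ℚ) by
        rw [← Pi.single_smul']; simp, map_smul, smul_eq_mul, mul_comm]

/-- The bivariate polynomial `∑ c_l T^(l/3) Y^(l%3)`. -/
def auxPoly {e : ℕ} (c : Fin e → ℚ) : ℚ[X][X] :=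
  ∑ l : Fin e, monomial ((l : ℕ) % 3) (monomial ((l : ℕ) / 3) (c l))

lemma auxPoly_ne_zero {e : ℕ} (c : Fin e → ℚ) (hc : c ≠ 0) : auxPoly c ≠ 0 := by
  obtain ⟨l, hl⟩ := Function.ne_iff.1 hc
  intro h
  apply hl
  have := congrArg (fun A : ℚ[X][X] => (A.coeff ((l : ℕ) % 3)).coeff ((l : ℕ) / 3)) h
  simp only [auxPoly, finsetSum_coeff, coeff_zero, coeff_monomial] at this
  rw [Finset.sum_eq_single l] at this
  · simpa using this
  · intro k _ hk
    by_cases h1 : (k : ℕ) % 3 = l % 3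
    · rw [if_pos h1, coeff_monomial, if_neg]
      intro h2; apply hk; ext; omega
    · rw [if_neg h1, coeff_zero]
  · simp

lemma auxPoly_natDegree {e : ℕ} (c : Fin e → ℚ) : (auxPoly c).natDegree ≤ 2 := by
  refine natDegree_sum_le_of_forall_le _ _ fun l _ => (natDegree_monomial_le _).trans (by omega)

lemma auxPoly_coeff {e : ℕ} (c : Fin e → ℚ) (i : ℕ) : ((auxPoly c).coeff i).natDegree ≤ e := by
  rw [auxPoly, finsetSum_coeff]
  refine natDegree_sum_le_of_forall_le _ _ fun l _ => ?_
  rw [coeff_monomial]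
  split_ifs
  · exact (natDegree_monomial_le _).trans (by omega)
  · simp

lemma auxPoly_eval {e : ℕ} (c : Fin e → ℚ) (t y : ℚ) :
    (auxPoly c).evalEval t y = ∑ l : Fin e, c l * (t ^ ((l : ℕ) / 3) * y ^ ((l : ℕ) % 3)) := by
  simp only [auxPoly, evalEval, eval_finsetSum, eval_monomial, eval_mul, eval_pow, eval_C]
  exact Finset.sum_congr rfl fun l _ => by ring

lemma sum_exps (m : ℕ) : ∑ l ∈ Finset.range (3 * m), l / 3 = 3 * ∑ i ∈ Finset.range m, i ∧
    ∑ l ∈ Finset.range (3 * m), l % 3 = 3 * m := by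
  induction m with
  | zero => simp
  | succ m ih =>
    rw [show 3 * (m + 1) = 3 * m + 1 + 1 + 1 by ring]
    simp only [Finset.sum_range_succ, ih]
    omega

/-- The points of height at most `H` on one nonsingular residue class of `R = 0` modulo a prime
`p ≥ √H` lie on an auxiliary curve `A = 0` of degree at most two in `Y`. -/
lemma exists_aux (R : ℤ[X][X]) (B H p : ℕ) (hp : p.Prime) (hpH : H ≤ p ^ 2)
    (hH : (12 * (B + 1)).factorial < H) (t₀ y₀ : ℤ)
    (hd : ¬ (p : ℤ) ∣ R.derivative.evalEval t₀ y₀) :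
    ∃ A : ℚ[X][X], A ≠ 0 ∧ A.natDegree ≤ 2 ∧ (∀ i, (A.coeff i).natDegree ≤ 12 * (B + 1)) ∧
      ∀ t y : ℤ, |t| ≤ H → |y| ≤ (H : ℤ) ^ B → (p : ℤ) ∣ t - t₀ → (p : ℤ) ∣ y - y₀ →
        R.evalEval t y = 0 → A.evalEval (t : ℚ) (y : ℚ) = 0 := by
  set e := 12 * (B + 1) with he
  let ι := {z : ℤ × ℤ // |z.1| ≤ H ∧ |z.2| ≤ (H : ℤ) ^ B ∧ (p : ℤ) ∣ z.1 - t₀ ∧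
    (p : ℤ) ∣ z.2 - y₀ ∧ R.evalEval z.1 z.2 = 0}
  have hdet : ∀ s : Fin e → ι, (Matrix.of fun r (l : Fin e) =>
      ((s r).1.1 : ℚ) ^ ((l : ℕ) / 3) * ((s r).1.2 : ℚ) ^ ((l : ℕ) % 3)).det = 0 := by
    intro s
    set M : Matrix (Fin e) (Fin e) ℤ := Matrix.of fun (l : Fin e) r =>
      (s r).1.1 ^ ((l : ℕ) / 3) * (s r).1.2 ^ ((l : ℕ) % 3) with hM
    have h1 := det_class R p hp t₀ y₀ hd (fun l : Fin e => (l : ℕ) / 3) (fun l => (l : ℕ) % 3)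
      (fun r => (s r).1.1) (fun r => (s r).1.2) (fun r => (s r).2.2.2.1)
      (fun r => (s r).2.2.2.2.1) (fun r => (s r).2.2.2.2.2)
    have h2 := abs_det_le M (fun l => (H : ℤ) ^ ((l : ℕ) / 3) * ((H : ℤ) ^ B) ^ ((l : ℕ) % 3))
      (by
        intro l r
        simp only [hM, Matrix.of_apply, abs_mul, abs_pow]
        have := (s r).2.1
        have := (s r).2.2.1
        gcongr)
    -- `|det M|` is at most `e! * H ^ (e (e - 3) / 6 + B e)`, while a nonzero determinant is at least
    -- `p ^ (e (e - 1) / 2) ≥ H ^ (e (e - 1) / 4)`; the choice `e = 12 (B + 1)` makes these incompatible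
    have hM0 : M.det = 0 := by
      by_contra hne
      have h3 := Int.le_of_dvd (abs_pos.2 hne) ((dvd_abs _ _).2 h1)
      have h4 := h3.trans h2
      have hs := sum_exps (4 * (B + 1))
      rw [show 3 * (4 * (B + 1)) = e by rw [he]; ring] at hs
      rw [Finset.prod_mul_distrib, Finset.prod_pow_eq_pow_sum, Finset.prod_pow_eq_pow_sum,
        Fin.sum_univ_eq_sum_range (fun l => l / 3), Fin.sum_univ_eq_sum_range (fun l => l % 3),
        hs.1, hs.2, ← pow_mul, ← pow_add] at h4
      have h5 : p ^ (∑ i ∈ Finset.range e, i) ≤ e.factorial *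
        H ^ (3 * ∑ i ∈ Finset.range (4 * (B + 1)), i + B * e) := by exact_mod_cast h4
      have g1 := Finset.sum_range_id_mul_two e
      have g2 := Finset.sum_range_id_mul_two (4 * (B + 1))
      set b := B + 1 with hb
      have k1 : ∑ i ∈ Finset.range e, i = 2 * (3 * b * (12 * B + 11)) := by
        have : e - 1 = 12 * B + 11 := by omega
        rw [this, he] at g1
        linarith
      have k2 : 3 * ∑ i ∈ Finset.range (4 * b), i = 6 * b * (4 * B + 3) := by
        have : 4 * b - 1 = 4 * B + 3 := by omega
        rw [this] at g2
        linarith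
      rw [k1, k2, pow_mul] at h5
      have h6 : H ^ (3 * b * (12 * B + 11)) ≤ (p ^ 2) ^ (3 * b * (12 * B + 11)) := by gcongr
      have hH0 : 0 < H := by omega
      have h7 : e.factorial * H ^ (6 * b * (4 * B + 3) + B * e) <
          H * H ^ (6 * b * (4 * B + 3) + B * e) := by
        gcongr
      have h8 : H * H ^ (6 * b * (4 * B + 3) + B * e) ≤ H ^ (3 * b * (12 * B + 11)) := by
        rw [← pow_succ']
        apply Nat.pow_le_pow_right hH0
        rw [he]
        nlinarith
      omega
    have : (Matrix.of fun r (l : Fin e) =>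
      ((s r).1.1 : ℚ) ^ ((l : ℕ) / 3) * ((s r).1.2 : ℚ) ^ ((l : ℕ) % 3)) =
        (M.map (Int.castRingHom ℚ)).transpose := by
      ext r l; simp [hM]
    rw [this, Matrix.det_transpose]
    have h9 := (Int.castRingHom ℚ).map_det M
    rw [hM0] at h9
    simpa using h9.symm
  obtain ⟨c, hc, hcz⟩ := exists_coeffs (fun (z : ι) (l : Fin e) =>
      ((z.1.1 : ℚ)) ^ ((l : ℕ) / 3) * ((z.1.2 : ℚ)) ^ ((l : ℕ) % 3)) hdet
  refine ⟨auxPoly c, auxPoly_ne_zero c hc, auxPoly_natDegree c, auxPoly_coeff c, ?_⟩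
  intro t y h1 h2 h3 h4 h5
  rw [auxPoly_eval]
  exact hcz ⟨(t, y), h1, h2, h3, h4, h5⟩

lemma natDegree_det_le {ι : Type*} [Fintype ι] [DecidableEq ι] {R : Type*} [CommRing R]
    (M : Matrix ι ι R[X]) (b : ℕ) (h : ∀ i j, (M i j).natDegree ≤ b) :
    M.det.natDegree ≤ Fintype.card ι * b := by
  rw [Matrix.det_apply]
  refine natDegree_sum_le_of_forall_le _ _ fun σ _ => ?_
  refine (natDegree_smul_le _ _).trans ((natDegree_prod_le _ _).trans ?_)
  refine (Finset.sum_le_card_nsmul _ _ b fun i _ => h _ _).trans ?_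
  simp

lemma natDegree_resultant_le {R : Type*} [CommRing R] (f g : R[X][X]) (m n b : ℕ)
    (hf : ∀ i, (f.coeff i).natDegree ≤ b) (hg : ∀ i, (g.coeff i).natDegree ≤ b) :
    (f.resultant g m n).natDegree ≤ (m + n) * b := by
  have := natDegree_det_le (sylvester f g m n) b (fun i j => by
    refine Fin.addCases (fun j => ?_) (fun j => ?_) j
    · simp only [sylvester, Matrix.of_apply, Fin.addCases_left]
      split_ifs
      · exact hg _
      · simp
    · simp only [sylvester, Matrix.of_apply, Fin.addCases_right]
      split_ifs
      · exact hf _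
      · simp)
  simpa [resultant] using this

/-- Two plane curves without common factor over `ℚ(T)` meet over few abscissae. -/
lemma exists_eliminant (f g : ℚ[X][X]) (hf : f.Monic) (m n b : ℕ)
    (hm : f.natDegree ≤ m) (hn : g.natDegree ≤ n)
    (hfb : ∀ i, (f.coeff i).natDegree ≤ b) (hgb : ∀ i, (g.coeff i).natDegree ≤ b)
    (hco : IsCoprime (f.map (algebraMap ℚ[X] (RatFunc ℚ))) (g.map (algebraMap ℚ[X] (RatFunc ℚ)))) :
    ∃ r : ℚ[X], r ≠ 0 ∧ r.natDegree ≤ (m + n) * b ∧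
      ∀ t y : ℚ, f.evalEval t y = 0 → g.evalEval t y = 0 → r.eval t = 0 := by
  have hinj : Function.Injective (algebraMap ℚ[X] (RatFunc ℚ)) := RatFunc.algebraMap_injective ℚ
  by_cases h0 : f.natDegree = 0
  · have : f = 1 := eq_one_of_monic_natDegree_zero hf h0
    refine ⟨1, one_ne_zero, by simp, fun t y h => ?_⟩
    rw [this] at h; simp at h
  refine ⟨f.resultant g, ?_, ?_, ?_⟩
  · intro hz
    have h1 := resultant_map_map f g f.natDegree g.natDegree (algebraMap ℚ[X] (RatFunc ℚ))
    rw [hz, map_zero] at h1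
    have h2 : (f.map (algebraMap ℚ[X] (RatFunc ℚ))).natDegree = f.natDegree :=
      natDegree_map_eq_of_injective hinj _
    have h3 : (g.map (algebraMap ℚ[X] (RatFunc ℚ))).natDegree = g.natDegree :=
      natDegree_map_eq_of_injective hinj _
    rw [← h2, ← h3] at h1
    exact (resultant_eq_zero_iff.1 h1).2 hco
  · refine (natDegree_resultant_le f g _ _ b hfb hgb).trans ?_
    gcongr
  · intro t y h1 h2
    obtain ⟨p, q, -, -, e⟩ := exists_mul_add_mul_eq_C_resultant f g le_rfl le_rfl (Or.inl h0)
    have := congrArg (evalEval t y) e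
    simpa [h1, h2, evalEval_C] using this.symm

/-- `R ∈ ℤ[T][Y]` over `ℚ[T]`. -/
abbrev toQ (R : ℤ[X][X]) : ℚ[X][X] := R.map (mapRingHom (Int.castRingHom ℚ))

lemma toQ_evalEval (R : ℤ[X][X]) (t y : ℤ) :
    (toQ R).evalEval (t : ℚ) (y : ℚ) = (R.evalEval t y : ℤ) := by
  have := map_mapRingHom_evalEval (Int.castRingHom ℚ) R t y
  simpa using this

lemma toQ_coeff_natDegree (R : ℤ[X][X]) (b : ℕ) (h : ∀ i, (R.coeff i).natDegree ≤ b) (i : ℕ) :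
    ((toQ R).coeff i).natDegree ≤ b := by
  rw [coeff_map]; exact natDegree_map_le.trans (h i)

/-- Over `ℚ(T)`, `R` is separable and has no factor of degree one or two. The latter is expressed
as coprimality to every nonzero `A` of `Y`-degree at most two. -/
def NoSmallFactor (R : ℤ[X][X]) : Prop :=
  IsCoprime ((toQ R).map (algebraMap ℚ[X] (RatFunc ℚ)))
      ((toQ R).derivative.map (algebraMap ℚ[X] (RatFunc ℚ))) ∧
    ∀ A : ℚ[X][X], A ≠ 0 → A.natDegree ≤ 2 →
      IsCoprime ((toQ R).map (algebraMap ℚ[X] (RatFunc ℚ)))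
        (A.map (algebraMap ℚ[X] (RatFunc ℚ)))

lemma card_roots_int (r : ℚ[X]) (hr : r ≠ 0) (s : Finset ℤ) (hs : ∀ t ∈ s, r.eval (t : ℚ) = 0) :
    s.card ≤ r.natDegree := by
  classical
  refine le_trans ?_ (card_roots' r)
  refine le_trans ?_ (Multiset.toFinset_card_le _)
  rw [← Finset.card_image_of_injective s (Int.cast_injective (α := ℚ))]
  refine Finset.card_le_card fun x hx => ?_
  obtain ⟨t, ht, rfl⟩ := Finset.mem_image.1 hx
  simp [hr, hs t ht]

/-- Few abscissae in one nonsingular residue class. -/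
lemma card_class (R : ℤ[X][X]) (hR : R.Monic) (hns : NoSmallFactor R) (d b B H p : ℕ)
    (hd : R.natDegree ≤ d) (hb : ∀ i, (R.coeff i).natDegree ≤ b)
    (hp : p.Prime) (hpH : H ≤ p ^ 2) (hH : (12 * (B + 1)).factorial < H) (t₀ y₀ : ℤ)
    (hder : ¬ (p : ℤ) ∣ R.derivative.evalEval t₀ y₀) (s : Finset ℤ) (y : ℤ → ℤ)
    (hs : ∀ t ∈ s, |t| ≤ H ∧ |y t| ≤ (H : ℤ) ^ B ∧ (p : ℤ) ∣ t - t₀ ∧ (p : ℤ) ∣ y t - y₀ ∧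
      R.evalEval t (y t) = 0) :
    s.card ≤ (d + 2) * (b + 12 * (B + 1)) := by
  obtain ⟨A, hA0, hA2, hAc, hA⟩ := exists_aux R B H p hp hpH hH t₀ y₀ hder
  obtain ⟨r, hr0, hrd, hr⟩ := exists_eliminant (toQ R) A (hR.map _) d 2 (b + 12 * (B + 1))
    (natDegree_map_le.trans hd) hA2
    (fun i => (toQ_coeff_natDegree R b hb i).trans (Nat.le_add_right _ _))
    (fun i => (hAc i).trans (Nat.le_add_left _ _)) (hns.2 A hA0 hA2)
  refine (card_roots_int r hr0 s fun t ht => ?_).trans hrd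
  obtain ⟨h1, h2, h3, h4, h5⟩ := hs t ht
  exact hr t (y t) (by rw [toQ_evalEval, h5]; simp) (hA t (y t) h1 h2 h3 h4 h5)

/-- A chain of `K` distinct primes in `[s, 2^K s]`. -/
lemma exists_primes (s : ℕ) (hs : s ≠ 0) (K : ℕ) : ∃ S : Finset ℕ, S.card = K ∧
    ∀ p ∈ S, p.Prime ∧ s ≤ p ∧ p ≤ 2 ^ K * s := by
  classical
  suffices h : ∃ (S : Finset ℕ) (x : ℕ), S.card = K ∧ s ≤ x ∧ x ≤ 2 ^ K * s ∧
      ∀ p ∈ S, p.Prime ∧ s ≤ p ∧ p ≤ x by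
    obtain ⟨S, x, h1, h2, h3, h4⟩ := h
    exact ⟨S, h1, fun p hp => ⟨(h4 p hp).1, (h4 p hp).2.1, (h4 p hp).2.2.trans h3⟩⟩
  induction K with
  | zero => exact ⟨∅, s, by simp⟩
  | succ K ih =>
    obtain ⟨S, x, h1, h2, h3, h4⟩ := ih
    obtain ⟨q, hq, hq1, hq2⟩ := Nat.exists_prime_lt_and_le_two_mul x (by omega)
    refine ⟨insert q S, q, ?_, by omega, ?_, ?_⟩
    · rw [Finset.card_insert_of_notMem, h1]
      intro hqS; have := (h4 q hqS).2.2; omega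
    · rw [pow_succ]; nlinarith
    · intro p hp
      rcases Finset.mem_insert.1 hp with rfl | hp
      · exact ⟨hq, by omega, le_rfl⟩
      · have := h4 p hp; exact ⟨this.1, this.2.1, by omega⟩

lemma exists_prime_not_dvd (S : Finset ℕ) (hS : ∀ p ∈ S, p.Prime) (s : ℕ) (hs : ∀ p ∈ S, s ≤ p)
    (z : ℤ) (hz : z ≠ 0) (hb : |z| < (s : ℤ) ^ S.card) : ∃ p ∈ S, ¬ (p : ℤ) ∣ z := by
  by_contra! h
  have h1 : (∏ p ∈ S, p) ∣ z.natAbs := by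
    refine Finset.prod_primes_dvd _ (fun p hp => (hS p hp).prime) fun p hp => ?_
    exact Int.natCast_dvd.1 (h p hp)
  have h2 := Nat.le_of_dvd (Int.natAbs_pos.2 hz) h1
  have h3 : s ^ S.card ≤ ∏ p ∈ S, p := Finset.pow_card_le_prod _ _ _ hs
  have h4 : (s : ℤ) ^ S.card ≤ (z.natAbs : ℤ) := by exact_mod_cast h3.trans h2
  rw [Int.natCast_natAbs] at h4
  omega

lemma abs_eval_le (c : ℤ[X]) (b : ℕ) (X H t : ℤ) (hb : c.natDegree ≤ b)
    (hc : ∀ j, |c.coeff j| ≤ X) (hH : 1 ≤ H) (ht : |t| ≤ H) :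
    |c.eval t| ≤ (b + 1) * X * H ^ b := by
  rw [eval_eq_sum_range' (Nat.lt_succ_of_le hb)]
  refine (Finset.abs_sum_le_sum_abs _ _).trans ?_
  have hX : 0 ≤ X := (abs_nonneg _).trans (hc 0)
  have : ∀ i ∈ Finset.range (b + 1), |c.coeff i * t ^ i| ≤ X * H ^ b := by
    intro i hi
    rw [abs_mul, abs_pow]
    have h1 : |t| ^ i ≤ H ^ i := by gcongr
    have h2 : H ^ i ≤ H ^ b := pow_le_pow_right₀ hH (by simp at hi; omega)
    exact mul_le_mul (hc i) (h1.trans h2) (by positivity) hX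
  refine (Finset.sum_le_card_nsmul _ _ _ this).trans ?_
  simp [mul_assoc]

lemma abs_root_le (r : ℤ[X]) (hr : r.Monic) (d : ℕ) (hd : r.natDegree ≤ d) (X : ℤ) (hX : 1 ≤ X)
    (hc : ∀ i, |r.coeff i| ≤ X) (y : ℤ) (hy : r.eval y = 0) : |y| ≤ d * X := by
  by_cases h1 : |y| < 1
  · have : |y| = 0 := by have := abs_nonneg y; omega
    rw [this]; positivity
  push Not at h1
  have hd0 : r.natDegree ≠ 0 := by
    intro h0
    rw [eq_one_of_monic_natDegree_zero hr h0] at hy; simp at hy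
  obtain ⟨k, hk⟩ := Nat.exists_eq_succ_of_ne_zero hd0
  have h2 := eval_eq_sum_range (p := r) y
  rw [Finset.sum_range_succ, hy, coeff_natDegree, hr.leadingCoeff, one_mul] at h2
  have h3 : |y| ^ r.natDegree ≤ r.natDegree * (X * |y| ^ k) := by
    rw [← abs_pow, show y ^ r.natDegree = -∑ x ∈ Finset.range r.natDegree, r.coeff x * y ^ x by
      linear_combination -h2, abs_neg]
    refine (Finset.abs_sum_le_sum_abs _ _).trans ?_
    refine (Finset.sum_le_card_nsmul _ _ (X * |y| ^ k) ?_).trans (by simp)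
    intro i hi
    rw [abs_mul, abs_pow]
    have := pow_le_pow_right₀ h1 (show i ≤ k by simp at hi; omega)
    exact mul_le_mul (hc i) this (by positivity) (by omega)
  have h4 : |y| ≤ r.natDegree * X := by
    have hpos : 0 < |y| ^ k := by positivity
    rw [hk, pow_succ] at h3
    rw [hk]
    nlinarith
  refine h4.trans ?_
  gcongr

/-- The curve `R = 0` has at most `p d` points modulo `p`. -/
lemma card_residues (R : ℤ[X][X]) (hR : R.Monic) (d p : ℕ) (hp : p.Prime) (hd : R.natDegree ≤ d)
    (s : Finset ℤ) (y : ℤ → ℤ) (h0 : ∀ t ∈ s, R.evalEval t (y t) = 0) :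
    (s.image fun t : ℤ => ((t : ZMod p), (y t : ZMod p))).card ≤ p * d := by
  classical
  have : Fact p.Prime := ⟨hp⟩
  have key : (s.image fun t : ℤ => ((t : ZMod p), (y t : ZMod p))) ⊆
      (Finset.univ : Finset (ZMod p)).biUnion fun a =>
        ((((R.map (mapRingHom (Int.castRingHom (ZMod p)))).map (evalRingHom a)).roots).toFinset).image
          (fun b => (a, b)) := by
    intro z hz
    obtain ⟨t, ht, rfl⟩ := Finset.mem_image.1 hz
    simp only [Finset.mem_biUnion, Finset.mem_univ, true_and, Finset.mem_image]
    refine ⟨(t : ZMod p), (y t : ZMod p), ?_, rfl⟩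
    rw [Multiset.mem_toFinset, mem_roots ((hR.map _).map _).ne_zero, IsRoot,
      map_evalRingHom_eval]
    have := map_mapRingHom_evalEval (Int.castRingHom (ZMod p)) R t (y t)
    rw [h0 t ht] at this
    simpa using this
  refine (Finset.card_le_card key).trans (Finset.card_biUnion_le.trans ?_)
  refine (Finset.sum_le_card_nsmul _ _ d fun a _ => ?_).trans ?_
  · refine Finset.card_image_le.trans ((Multiset.toFinset_card_le _).trans ((card_roots' _).trans ?_))
    exact natDegree_map_le.trans (natDegree_map_le.trans hd)
  · simp [ZMod.card]

/-- The determinant method: for a monic `R` without factor of degree at most two in `Y`, the equation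
`R(t, y) = 0` is solvable in `y ∈ ℤ` for only `O(√H)` integers `|t| ≤ H`, uniformly in the `R` of
bounded degree whose coefficients are polynomially bounded in `H`. For a prime `p` of size `√H`,
the points fall into at most `p d` classes modulo `p`, and each nonsingular class lies on an auxiliary
curve of degree at most two in `Y`, which meets `R = 0` in a bounded number of points. -/
theorem integral_points (d b C0 : ℕ) : ∃ K H0 : ℕ, ∀ H ≥ H0, ∀ R : ℤ[X][X], R.Monic →
    R.natDegree ≤ d → (∀ i, (R.coeff i).natDegree ≤ b) →
    (∀ i j, |(R.coeff i).coeff j| ≤ C0 * (H : ℤ) ^ b) → NoSmallFactor R →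
    ∀ s : Finset ℤ, (∀ t ∈ s, |t| ≤ H ∧ ∃ y, R.evalEval t y = 0) →
      s.card ≤ K * (Nat.sqrt H + 1) := by
  classical
  set B := 2 * b + 2 with hB
  set B3 := B * (d + 1) with hB3
  set κ := (d + 2) * (b + 12 * (B + 1)) with hκ
  refine ⟨2 * d * b + 2 ^ (2 * B3) * d * κ * (2 * B3), (12 * (B + 1)).factorial + 1 + (b + 1) * (C0 + 1) + d ^ 2 + 1,
    ?_⟩
  intro H hH R hR hd hb hC hns s hs
  have hH1 : 1 ≤ H := by omega
  have hH1' : (1 : ℤ) ≤ H := by exact_mod_cast hH1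
  have hHc : ((b : ℤ) + 1) * (C0 + 1) ≤ H := by
    have : (b + 1) * (C0 + 1) ≤ H := by omega
    exact_mod_cast this
  have hHd : d ≤ H := by nlinarith
  have hHd2 : d ^ 2 ≤ H := by omega
  have hev : ∀ t : ℤ, |t| ≤ H → ∀ i, |(R.coeff i).eval t| ≤ (H : ℤ) ^ (2 * b + 1) := by
    intro t ht i
    refine (abs_eval_le _ b _ H t (hb i) (hC i) hH1' ht).trans ?_
    calc ((b : ℤ) + 1) * (C0 * (H : ℤ) ^ b) * H ^ b = ((b + 1) * C0) * (H ^ b * H ^ b) := by ring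
      _ ≤ H * (H ^ b * H ^ b) := by
        gcongr
        nlinarith
      _ = _ := by ring
  have hroot : ∀ t : ℤ, |t| ≤ H → ∀ y, R.evalEval t y = 0 → |y| ≤ (H : ℤ) ^ B := by
    intro t ht y hy
    rw [← map_evalRingHom_eval] at hy
    have := abs_root_le _ (hR.map _) d (natDegree_map_le.trans hd) ((H : ℤ) ^ (2 * b + 1))
      (one_le_pow₀ hH1') (fun i => by rw [coeff_map]; exact hev t ht i) y hy
    refine this.trans ?_
    calc (d : ℤ) * H ^ (2 * b + 1) ≤ H * H ^ (2 * b + 1) := by gcongr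
      _ = _ := by rw [hB]; ring
  have hderiv : ∀ t : ℤ, |t| ≤ H → ∀ y, R.evalEval t y = 0 →
      |R.derivative.evalEval t y| ≤ (H : ℤ) ^ B3 := by
    intro t ht y hy
    have hyB := hroot t ht y hy
    by_cases hd0 : d = 0
    · have : R = 1 := eq_one_of_monic_natDegree_zero hR (by omega)
      rw [this]; simp
    rw [← map_evalRingHom_eval]
    rw [eval_eq_sum_range' (n := d) (natDegree_map_le.trans_lt
      ((natDegree_derivative_le _).trans_lt (by omega)))]
    refine (Finset.abs_sum_le_sum_abs _ _).trans ?_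
    refine (Finset.sum_le_card_nsmul _ _ ((H : ℤ) ^ (2 * b + 1) * d * ((H : ℤ) ^ B) ^ d) ?_).trans ?_
    · intro i hi
      have hi' : i < d := by simpa using hi
      rw [coeff_map, coeff_derivative, abs_mul, abs_pow]
      have e1 : |(evalRingHom t) (R.coeff (i + 1) * ((i : ℤ[X]) + 1))| ≤ (H : ℤ) ^ (2 * b + 1) * d := by
        rw [map_mul, abs_mul]
        refine mul_le_mul (hev t ht _) ?_ (abs_nonneg _) (by positivity)
        have : (evalRingHom t) ((i : ℤ[X]) + 1) = ((i + 1 : ℕ) : ℤ) := by simp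
        rw [this, abs_of_nonneg (by positivity)]
        exact_mod_cast hi'
      have e2 : |y| ^ i ≤ ((H : ℤ) ^ B) ^ d := by
        calc |y| ^ i ≤ ((H : ℤ) ^ B) ^ i := by gcongr
          _ ≤ _ := pow_le_pow_right₀ (one_le_pow₀ hH1') hi'.le
      exact mul_le_mul e1 e2 (by positivity) (by positivity)
    · rw [Finset.card_range, nsmul_eq_mul]
      calc (d : ℤ) * ((H : ℤ) ^ (2 * b + 1) * d * ((H : ℤ) ^ B) ^ d)
          = (d : ℤ) ^ 2 * H ^ (2 * b + 1) * (H ^ B) ^ d := by ring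
        _ ≤ H * H ^ (2 * b + 1) * (H ^ B) ^ d := by
          gcongr
          exact_mod_cast hHd2
        _ = _ := by rw [hB3, hB, mul_add, mul_one, pow_add, ← pow_mul]; ring
  choose! y hy using fun t (ht : t ∈ s) => (hs t ht).2
  set σ := Nat.sqrt H + 1 with hσ
  have hσH : H < σ ^ 2 := by rw [sq]; exact Nat.lt_succ_sqrt H
  obtain ⟨S, hScard, hS⟩ := exists_primes σ (by omega) (2 * B3)
  obtain ⟨g, hg0, hgd, hg⟩ := exists_eliminant (toQ R) (toQ R).derivative (hR.map _) d d b
    (natDegree_map_le.trans hd) ((natDegree_derivative_le _).trans (by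
      have : (toQ R).natDegree ≤ d := natDegree_map_le.trans hd
      omega)) (toQ_coeff_natDegree R b hb) (fun i => by
        rw [coeff_derivative]
        refine natDegree_mul_le.trans ?_
        have := toQ_coeff_natDegree R b hb (i + 1)
        rw [show ((i : ℚ[X]) + 1) = ((i + 1 : ℕ) : ℚ[X]) by push_cast; rfl, natDegree_natCast]
        omega) hns.1
  set s1 := s.filter fun t => R.derivative.evalEval t (y t) = 0
  set s2 := fun p : ℕ => s.filter fun t => ¬ (p : ℤ) ∣ R.derivative.evalEval t (y t)
  -- the points with `R_Y = 0` are controlled by the eliminant; otherwise, since `|R_Y| ≤ H ^ B3`,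
  -- one of the `2 * B3` primes above `√H` does not divide `R_Y`
  have hcover : s ⊆ s1 ∪ S.biUnion s2 := by
    intro t ht
    by_cases h0 : R.derivative.evalEval t (y t) = 0
    · exact Finset.mem_union_left _ (Finset.mem_filter.2 ⟨ht, h0⟩)
    · refine Finset.mem_union_right _ ?_
      obtain ⟨p, hpS, hp⟩ := exists_prime_not_dvd S (fun p hp => (hS p hp).1) σ
        (fun p hp => (hS p hp).2.1) _ h0 (by
          refine (hderiv t (hs t ht).1 _ (hy t ht)).trans_lt ?_
          rw [hScard, pow_mul (σ : ℤ)]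
          have h1 : (H : ℤ) < (σ : ℤ) ^ 2 := by exact_mod_cast hσH
          have h3 : B3 ≠ 0 := by rw [hB3, hB]; positivity
          exact pow_lt_pow_left₀ h1 (by positivity) h3)
      exact Finset.mem_biUnion.2 ⟨p, hpS, Finset.mem_filter.2 ⟨ht, hp⟩⟩
  have hs1 : s1.card ≤ 2 * d * b := by
    refine (card_roots_int g hg0 s1 fun t ht => ?_).trans (hgd.trans (by ring_nf; rfl))
    have ht' := Finset.mem_filter.1 ht
    refine hg t (y t) (by rw [toQ_evalEval, hy t ht'.1]; simp) ?_
    have := toQ_evalEval R.derivative t (y t)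
    rw [ht'.2] at this
    rw [toQ, derivative_map]
    simpa using this
  have hs2 : ∀ p ∈ S, (s2 p).card ≤ 2 ^ (2 * B3) * σ * d * κ := by
    intro p hp
    have hfib := Finset.card_le_mul_card_image (s := s2 p)
      (f := fun t : ℤ => ((t : ZMod p), (y t : ZMod p))) κ (by
        intro z hz
        obtain ⟨t₀, ht₀, rfl⟩ := Finset.mem_image.1 hz
        have ht₀' := Finset.mem_filter.1 ht₀
        refine card_class R hR hns d b B H p hd hb (hS p hp).1 ?_ (by omega) t₀ (y t₀) ht₀'.2 _ y ?_
        · exact hσH.le.trans (Nat.pow_le_pow_left (hS p hp).2.1 2)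
        · intro t ht
          have ht' := Finset.mem_filter.1 ht
          have hts := (Finset.mem_filter.1 ht'.1).1
          have h1 := hs t hts
          have h2 := Prod.mk.inj ht'.2
          refine ⟨h1.1, hroot t h1.1 _ (hy t hts), ?_, ?_, hy t hts⟩
          · exact (ZMod.intCast_eq_intCast_iff_dvd_sub _ _ _).1 h2.1.symm
          · exact (ZMod.intCast_eq_intCast_iff_dvd_sub _ _ _).1 h2.2.symm)
    have hres := card_residues R hR d p (hS p hp).1 hd (s2 p) y
      (fun t ht => hy t (Finset.mem_filter.1 ht).1)
    calc (s2 p).card ≤ _ := hfib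
      _ ≤ κ * (p * d) := by gcongr
      _ ≤ κ * ((2 ^ (2 * B3) * σ) * d) := by gcongr; exact (hS p hp).2.2
      _ = _ := by ring
  calc s.card ≤ (s1 ∪ S.biUnion s2).card := Finset.card_le_card hcover
    _ ≤ s1.card + (S.biUnion s2).card := Finset.card_union_le _ _
    _ ≤ 2 * d * b + S.card * (2 ^ (2 * B3) * σ * d * κ) := by
      gcongr
      exact Finset.card_biUnion_le_card_mul _ _ _ hs2
    _ ≤ _ := by
      rw [hScard]
      have : 1 ≤ σ := by omega
      nlinarith

/-! ### Resolvents detecting factorizations -/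

/-- The value at `u` of the factor `∏_{i ∈ S} (X - τ i)`. -/
def subsetVal {A : Type*} [CommRing A] {N : ℕ} (u : ℕ) (τ : Fin N → A) (S : Finset (Fin N)) : A :=
  ∏ i ∈ S, ((u : A) - τ i)

/-- The polynomial whose roots are the values at `u` of the degree-`k` factors of `∏ (X - τ i)`. -/
def rootResolvent {A : Type*} [CommRing A] {N : ℕ} (k u : ℕ) (τ : Fin N → A) : A[X] :=
  ∏ S ∈ Finset.powersetCard k (Finset.univ : Finset (Fin N)), (X - C (subsetVal u τ S))

lemma rootResolvent_map {A B : Type*} [CommRing A] [CommRing B] (φ : A →+* B) {N : ℕ} (k u : ℕ)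
    (τ : Fin N → A) : (rootResolvent k u τ).map φ = rootResolvent k u (φ ∘ τ) := by
  simp [rootResolvent, subsetVal, Polynomial.map_prod, map_prod]

lemma rootResolvent_monic {A : Type*} [CommRing A] {N : ℕ} (k u : ℕ) (τ : Fin N → A) :
    (rootResolvent k u τ).Monic := monic_prod_of_monic _ _ fun _ _ => monic_X_sub_C _

lemma rootResolvent_perm {A : Type*} [CommRing A] {N : ℕ} (k u : ℕ) (τ : Fin N → A)
    (e : Equiv.Perm (Fin N)) : rootResolvent k u (τ ∘ e) = rootResolvent k u τ := by
  unfold rootResolvent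
  refine Finset.prod_nbij' (fun S => S.map e.toEmbedding) (fun S => S.map e.symm.toEmbedding)
    ?_ ?_ ?_ ?_ ?_
  · intro S hS; simp_all [Finset.mem_powersetCard]
  · intro S hS; simp_all [Finset.mem_powersetCard]
  · intro S _; ext; simp
  · intro S _; ext; simp
  · intro S _; simp [subsetVal]

/-- The elementary symmetric substitution. -/
def esymmHom (N : ℕ) : MvPolynomial (Fin N) ℤ →ₐ[ℤ] MvPolynomial (Fin N) ℤ :=
  MvPolynomial.aeval fun i : Fin N => MvPolynomial.esymm (Fin N) ℤ ((i : ℕ) + 1)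

/-- By the fundamental theorem of symmetric polynomials, the resolvent of the generic polynomial is
a polynomial in the elementary symmetric functions of its roots. -/
lemma exists_univResolvent (N k u : ℕ) : ∃ G : (MvPolynomial (Fin N) ℤ)[X], G.Monic ∧
    G.map (esymmHom N : MvPolynomial (Fin N) ℤ →+* MvPolynomial (Fin N) ℤ) =
      rootResolvent k u (MvPolynomial.X : Fin N → MvPolynomial (Fin N) ℤ) := by
  have hl : rootResolvent k u (MvPolynomial.X : Fin N → MvPolynomial (Fin N) ℤ) ∈
      lifts (esymmHom N : MvPolynomial (Fin N) ℤ →+* MvPolynomial (Fin N) ℤ) := by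
    rw [lifts_iff_coeff_lifts]
    intro r
    have hsym : ((rootResolvent k u (MvPolynomial.X : Fin N → MvPolynomial (Fin N) ℤ)).coeff
        r).IsSymmetric := by
      intro e
      have h1 := rootResolvent_map (MvPolynomial.rename (R := ℤ) e).toRingHom k u
        (MvPolynomial.X : Fin N → MvPolynomial (Fin N) ℤ)
      have h2 : ((MvPolynomial.rename (R := ℤ) e).toRingHom :
          MvPolynomial (Fin N) ℤ → _) ∘ MvPolynomial.X = MvPolynomial.X ∘ e := by
        funext i; simp
      rw [h2, rootResolvent_perm] at h1
      have h3 := congrArg (fun p => p.coeff r) h1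
      simpa [coeff_map] using h3
    obtain ⟨g, hg⟩ := MvPolynomial.esymmAlgHom_surjective (σ := Fin N) (R := ℤ) (n := N) (by simp)
      ⟨_, hsym⟩
    refine ⟨g, ?_⟩
    have := congrArg Subtype.val hg
    simp only at this
    rw [← this]
    exact (MvPolynomial.esymmAlgHom_apply (σ := Fin N) (R := ℤ) (n := N) g).symm
  obtain ⟨G, h1, -, h2⟩ := lifts_and_natDegree_eq_and_monic hl (rootResolvent_monic _ _ _)
  exact ⟨G, h2, h1⟩

/-- The resolvent written in terms of the elementary symmetric functions. -/
def univResolvent (N k u : ℕ) : (MvPolynomial (Fin N) ℤ)[X] := (exists_univResolvent N k u).choose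

/-- The resolvent of a monic polynomial `F` of degree `N`. -/
def resolvent {A : Type*} [CommRing A] (F : A[X]) (N k u : ℕ) : A[X] :=
  (univResolvent N k u).map (MvPolynomial.aeval (R := ℤ)
    (fun i : Fin N => (-1) ^ ((i : ℕ) + 1) * F.coeff (N - ((i : ℕ) + 1)))).toRingHom

lemma resolvent_monic {A : Type*} [CommRing A] (F : A[X]) (N k u : ℕ) :
    (resolvent F N k u).Monic := (exists_univResolvent N k u).choose_spec.1.map _

lemma resolvent_map {A B : Type*} [CommRing A] [CommRing B] (φ : A →+* B) (F : A[X]) (N k u : ℕ) :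
    (resolvent F N k u).map φ = resolvent (F.map φ) N k u := by
  rw [resolvent, resolvent, Polynomial.map_map]
  congr 1
  ext i
  · simp
  · simp

lemma resolvent_prod {A : Type*} [CommRing A] {N : ℕ} (τ : Fin N → A) (k u : ℕ) :
    resolvent (∏ i, (X - C (τ i))) N k u = rootResolvent k u τ := by
  have h := (exists_univResolvent N k u).choose_spec.2
  have h2 := congrArg (Polynomial.map (MvPolynomial.aeval (R := ℤ) τ).toRingHom) h
  rw [rootResolvent_map, Polynomial.map_map] at h2
  have h3 : ((MvPolynomial.aeval (R := ℤ) τ).toRingHom : MvPolynomial (Fin N) ℤ → A) ∘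
      MvPolynomial.X = τ := by
    funext i; simp
  rw [h3] at h2
  rw [← h2, resolvent]
  congr 1
  ext i
  · simp
  · have e1 : (∏ i, (X - C (τ i))) = ((Finset.univ.val.map τ).map fun t => X - C t).prod := by
      rw [Multiset.map_map]; rfl
    have hcard : Multiset.card (Finset.univ.val.map τ) = N := by simp
    have e2 := Multiset.prod_X_sub_C_coeff (Finset.univ.val.map τ) (k := N - ((i : ℕ) + 1))
      (by rw [hcard]; omega)
    rw [hcard, ← e1, show N - (N - ((i : ℕ) + 1)) = i + 1 by omega] at e2
    simp only [AlgHom.toRingHom_eq_coe, RingHom.coe_coe, MvPolynomial.aeval_X, esymmHom,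
      RingHom.comp_apply, MvPolynomial.aeval_esymm_eq_multiset_esymm, e2]
    rw [← mul_assoc, ← mul_pow]; simp

/-- Some small `u` separates the values at `u` of all sub-products of `∏ (X - τ i)`. -/
lemma exists_separating {L : Type*} [Field L] [CharZero L] {N : ℕ} (τ : Fin N → L)
    (hτ : Function.Injective τ) :
    ∃ u < 4 ^ N * N + 1, ∀ S S' : Finset (Fin N), subsetVal u τ S = subsetVal u τ S' → S = S' := by
  classical
  let g : Finset (Fin N) → L[X] := fun S => ∏ i ∈ S, (X - C (τ i))
  have hg : Function.Injective g := by
    intro S S' h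
    ext i
    have : ∀ S : Finset (Fin N), i ∈ S ↔ (g S).eval (τ i) = 0 := by
      intro S
      simp only [g, eval_prod, Finset.prod_eq_zero_iff, eval_sub, eval_X, eval_C, sub_eq_zero]
      constructor
      · intro h; exact ⟨i, h, rfl⟩
      · rintro ⟨j, hj, hij⟩; rwa [hτ hij]
    rw [this, this, h]
  let Z := (Finset.univ : Finset (Finset (Fin N) × Finset (Fin N))).filter fun z => z.1 ≠ z.2
  let W : L[X] := ∏ z ∈ Z, (g z.1 - g z.2)
  have hdeg : ∀ S, (g S).natDegree ≤ N := by
    intro S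
    rw [natDegree_prod_of_monic _ _ fun i _ => monic_X_sub_C _]
    simpa using S.card_le_univ
  have hW0 : W ≠ 0 := Finset.prod_ne_zero_iff.2 fun z hz =>
    sub_ne_zero.2 fun h => (Finset.mem_filter.1 hz).2 (hg h)
  have hWd : W.natDegree ≤ 4 ^ N * N := by
    refine (natDegree_prod_le _ _).trans ((Finset.sum_le_card_nsmul _ _ N fun z _ => ?_).trans ?_)
    · exact (natDegree_sub_le _ _).trans (max_le (hdeg _) (hdeg _))
    · rw [smul_eq_mul]
      gcongr
      refine (Finset.card_filter_le _ _).trans ?_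
      simp only [Finset.card_univ, Fintype.card_prod, Fintype.card_finset, Fintype.card_fin]
      rw [← mul_pow]
      norm_num
  by_contra! hcon
  apply hW0
  refine Polynomial.eq_zero_of_natDegree_lt_card_of_eval_eq_zero' W
    ((Finset.range (4 ^ N * N + 1)).image (Nat.cast : ℕ → L)) ?_ ?_
  · intro x hx
    obtain ⟨u, hu, rfl⟩ := Finset.mem_image.1 hx
    obtain ⟨S, S', h1, h2⟩ := hcon u (Finset.mem_range.1 hu)
    simp only [W, eval_prod]
    refine Finset.prod_eq_zero (i := (S, S')) (Finset.mem_filter.2 ⟨Finset.mem_univ _, h2⟩) ?_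
    simpa [g, eval_prod, subsetVal, sub_eq_zero] using h1
  · rw [Finset.card_image_of_injective _ Nat.cast_injective, Finset.card_range]
    omega

/-- An intermediate field contains the coefficients of `∏_{i ∈ S} (X - τ i)` as soon as it contains
a separating value of that product. -/
lemma factor_descends {K L : Type*} [Field K] [Field L] [Algebra K L] [FiniteDimensional K L]
    [IsGalois K L] {F : K[X]} {N : ℕ} {τ : Fin N → L} (hτ : Function.Injective τ)
    (hF : F.map (algebraMap K L) = ∏ i, (X - C (τ i))) {u : ℕ}
    (hu : ∀ S S' : Finset (Fin N), subsetVal u τ S = subsetVal u τ S' → S = S')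
    (E : IntermediateField K L) (S : Finset (Fin N)) (hE : subsetVal u τ S ∈ E) :
    ∃ G : E[X], G.Monic ∧ G.natDegree = S.card ∧
      G.map (algebraMap E L) = ∏ i ∈ S, (X - C (τ i)) := by
  classical
  have hroot : ∀ x : L, (F.map (algebraMap K L)).eval x = 0 ↔ ∃ i, τ i = x := by
    intro x
    rw [hF, eval_prod, Finset.prod_eq_zero_iff]
    simp [sub_eq_zero, eq_comm]
  have hl : (∏ i ∈ S, (X - C (τ i))) ∈ lifts (algebraMap E L) := by
    rw [lifts_iff_coeff_lifts]
    intro r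
    have hmem : (∏ i ∈ S, (X - C (τ i))).coeff r ∈ IntermediateField.fixedField E.fixingSubgroup := by
      rintro ⟨σ, hσ⟩
      have hπ : ∀ i, ∃ j, τ j = σ (τ i) := by
        intro i
        rw [← hroot]
        have h1 : (F.map (algebraMap K L)).eval (τ i) = 0 := (hroot _).2 ⟨i, rfl⟩
        rw [eval_map_algebraMap] at h1 ⊢
        have := aeval_algHom_apply (σ : L →ₐ[K] L) (τ i) F
        change aeval (σ (τ i)) F = σ (aeval (τ i) F) at this
        rw [this, h1, map_zero]
      choose π hπ using hπ
      have hπi : Function.Injective π := by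
        intro i j hij
        apply hτ
        apply σ.injective
        rw [← hπ, ← hπ, hij]
      have hS : S.map ⟨π, hπi⟩ = S := by
        apply hu
        have h1 : σ (subsetVal u τ S) = subsetVal u τ S := hσ ⟨_, hE⟩
        conv_rhs => rw [← h1]
        simp [subsetVal, map_prod, hπ]
      change σ _ = _
      have h3 : (∏ i ∈ S, (X - C (τ i))).map (σ : L →+* L) = ∏ i ∈ S, (X - C (τ i)) := by
        conv_rhs => rw [← hS]
        simp [Polynomial.map_prod, hπ]
      conv_rhs => rw [← h3]
      simp [coeff_map]
    rw [IsGalois.fixedField_fixingSubgroup] at hmem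
    exact ⟨⟨_, hmem⟩, rfl⟩
  obtain ⟨G, h1, h2, h3⟩ := lifts_and_natDegree_eq_and_monic hl
    (monic_prod_of_monic _ _ fun i _ => monic_X_sub_C _)
  refine ⟨G, h3, ?_, h1⟩
  rw [h2, natDegree_prod_of_monic _ _ fun i _ => monic_X_sub_C _]
  simp

/-- Let `F` be irreducible of degree `N` such that its root field has no quadratic subextension
(this is `hquad`), and `S` a nonempty set of at most `N / 2` roots. Then the separating value `y`
attached to `S` has degree more than two over `K`. Otherwise `K(y)(τ i)`, for `i ∈ S`, has degree at
most `2 * |S| ≤ N`, so it equals `K(τ i)` and contains `y`; then `y ∈ K`, and `F` has a factor of degree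
`|S| < N`. -/
lemma value_not_quadratic {K L : Type*} [Field K] [CharZero K] [Field L] [Algebra K L]
    [FiniteDimensional K L]
    [IsGalois K L] {F : K[X]} (hirr : Irreducible F) (hmon : F.Monic) {N : ℕ} (hN : F.natDegree = N)
    (hquad : ∀ (g : K[X]) (c : K), F ∣ g ^ 2 - C c → ∃ c' : K, F ∣ g - C c')
    {τ : Fin N → L} (hτ : Function.Injective τ)
    (hF : F.map (algebraMap K L) = ∏ i, (X - C (τ i))) {u : ℕ}
    (hu : ∀ S S' : Finset (Fin N), subsetVal u τ S = subsetVal u τ S' → S = S')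
    (S : Finset (Fin N)) (hS : S.Nonempty) (hS2 : 2 * S.card ≤ N) (A : K[X]) (hA : A ≠ 0)
    (hA2 : A.natDegree ≤ 2) : aeval (subsetVal u τ S) A ≠ 0 := by
  classical
  intro hy
  set y := subsetVal u τ S with hydef
  obtain ⟨i, hi⟩ := hS
  have hFi : aeval (τ i) F = 0 := by
    rw [← eval_map_algebraMap, hF, eval_prod]
    exact Finset.prod_eq_zero (Finset.mem_univ i) (by simp)
  have hmin : minpoly K (τ i) = F := (minpoly.eq_of_irreducible_of_monic hirr hFi hmon).symm
  have hcard : 0 < S.card := Finset.card_pos.2 ⟨i, hi⟩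
  have hdeg : ∀ E : IntermediateField K L, y ∈ E → (minpoly E (τ i)).natDegree ≤ S.card := by
    intro E hE
    obtain ⟨G, h1, h2, h3⟩ := factor_descends hτ hF hu E S hE
    rw [← h2]
    refine natDegree_le_of_dvd (minpoly.dvd _ _ ?_) h1.ne_zero
    rw [← eval_map_algebraMap, h3, eval_prod]
    exact Finset.prod_eq_zero hi (by simp)
  have hItg : ∀ x : L, IsIntegral K x := fun x => Algebra.IsIntegral.isIntegral x
  -- the value lies in the root field
  have hyτ : y ∈ IntermediateField.adjoin K {τ i} := by
    let E := IntermediateField.adjoin K {y}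
    have hyE : y ∈ E := IntermediateField.mem_adjoin_simple_self K y
    have h1 : Module.finrank K E ≤ 2 := by
      rw [IntermediateField.adjoin.finrank (hItg y)]
      exact (natDegree_le_of_dvd (minpoly.dvd _ _ hy) hA).trans hA2
    let M := IntermediateField.adjoin E {τ i}
    have h2 : Module.finrank E M ≤ S.card := by
      rw [IntermediateField.adjoin.finrank (Algebra.IsIntegral.isIntegral _)]
      exact hdeg E hyE
    have h3 : Module.finrank K E * Module.finrank E M = Module.finrank K M :=
      Module.finrank_mul_finrank K E M
    have h4 : IntermediateField.adjoin K {τ i} ≤ M.restrictScalars K := by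
      rw [IntermediateField.adjoin_simple_le_iff]
      exact IntermediateField.mem_adjoin_simple_self E (τ i)
    have h5 : Module.finrank K (IntermediateField.adjoin K {τ i}) = N := by
      rw [IntermediateField.adjoin.finrank (hItg _), hmin, hN]
    have h6 : Module.finrank K (M.restrictScalars K) ≤
        Module.finrank K (IntermediateField.adjoin K {τ i}) := by
      change Module.finrank K M ≤ _
      rw [h5, ← h3]
      nlinarith
    rw [IntermediateField.eq_of_le_of_finrank_le h4 h6]
    exact M.algebraMap_mem ⟨y, hyE⟩
  -- completing the square, `hquad` applies to `y + b / 2`, where `b` is the trace coefficient of `y`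
  have hyK : ∃ c : K, algebraMap K L c = y := by
    have h1 := (IntermediateField.mem_adjoin_simple_iff K y).1 hyτ
    have : y ∈ Algebra.adjoin K {τ i} := by
      rw [← IntermediateField.adjoin_simple_toSubalgebra_of_isAlgebraic (hItg _).isAlgebraic]
      exact hyτ
    rw [Algebra.adjoin_singleton_eq_range_aeval] at this
    obtain ⟨g, hg⟩ := this
    have hg : aeval (τ i) g = y := hg
    have hmd : (minpoly K y).natDegree ≤ 2 :=
      (natDegree_le_of_dvd (minpoly.dvd _ _ hy) hA).trans hA2
    have hpos := minpoly.natDegree_pos (hItg y)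
    have hm := minpoly.monic (hItg y)
    have h0 := minpoly.aeval K y
    rw [aeval_eq_sum_range] at h0
    have hlc : (minpoly K y).coeff (minpoly K y).natDegree = 1 := hm
    obtain hd | hd : (minpoly K y).natDegree = 1 ∨ (minpoly K y).natDegree = 2 := by omega
    · rw [hd] at h0 hlc
      simp only [Finset.sum_range_succ, Finset.sum_range_zero, hlc] at h0
      refine ⟨-(minpoly K y).coeff 0, ?_⟩
      rw [Algebra.smul_def] at h0
      simp at h0
      rw [map_neg]; linear_combination -h0
    · rw [hd] at h0 hlc
      simp only [Finset.sum_range_succ, Finset.sum_range_zero, hlc, Algebra.smul_def] at h0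
      set b := (minpoly K y).coeff 1
      set c := (minpoly K y).coeff 0
      simp at h0
      have h2 : (algebraMap K L 2) = 2 := map_ofNat _ 2
      have h20 : (2 : L) ≠ 0 := by
        rw [← h2, _root_.map_ne_zero]; exact two_ne_zero
      obtain ⟨c', hc'⟩ := hquad (g + C (b / 2)) (b ^ 2 / 4 - c) (by
        rw [← hmin]
        refine minpoly.dvd _ _ ?_
        simp only [map_sub, map_pow, map_add, aeval_C, hg, map_div₀, h2]
        rw [show (algebraMap K L 4) = 4 from map_ofNat _ 4]
        have h40 : (4 : L) ≠ 0 := by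
          rw [show (4 : L) = 2 * 2 by norm_num]; exact mul_ne_zero h20 h20
        field_simp
        linear_combination 16 * h0)
      refine ⟨c' - b / 2, ?_⟩
      have h7 : aeval (τ i) (g + C (b / 2) - C c') = 0 := by
        obtain ⟨z, hz⟩ := hc'
        rw [hz, map_mul, hFi, zero_mul]
      simp only [map_sub, map_add, aeval_C, hg] at h7
      rw [map_sub]; linear_combination -h7
  have hbot : y ∈ (⊥ : IntermediateField K L) := IntermediateField.mem_bot.2 hyK
  have h8 := hdeg ⊥ hbot
  have h9 : (minpoly (⊥ : IntermediateField K L) (τ i)).natDegree = N := by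
    rw [← hN, ← hmin, ← IntermediateField.adjoin.finrank (hItg _),
      ← IntermediateField.adjoin.finrank (Algebra.IsIntegral.isIntegral _)]
    have := Module.finrank_mul_finrank K (⊥ : IntermediateField K L)
      (IntermediateField.adjoin (⊥ : IntermediateField K L) {τ i})
    rw [IntermediateField.finrank_bot, one_mul] at this
    rw [this]
    have h10 : IntermediateField.restrictScalars K
      (IntermediateField.adjoin (⊥ : IntermediateField K L) {τ i}) =
        IntermediateField.adjoin K {τ i} := by
      apply le_antisymm
      · intro x hx
        have : IntermediateField.adjoin (⊥ : IntermediateField K L) {τ i} ≤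
            IntermediateField.extendScalars (F := ⊥) (E := IntermediateField.adjoin K {τ i})
              bot_le := by
          rw [IntermediateField.adjoin_simple_le_iff]
          exact IntermediateField.mem_adjoin_simple_self K (τ i)
        exact this hx
      · rw [IntermediateField.adjoin_simple_le_iff]
        exact IntermediateField.mem_adjoin_simple_self (⊥ : IntermediateField K L) (τ i)
    rw [← h10]
    rfl
  omega

/-- If `F` is irreducible and its root field has no quadratic subextension, then for a suitable `u`
the resolvents of `F` are separable and have no factor of degree one or two. -/
theorem resolvent_coprime {K : Type*} [Field K] [CharZero K] {F : K[X]} (hirr : Irreducible F)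
    (hmon : F.Monic) {N : ℕ} (hN : F.natDegree = N)
    (hquad : ∀ (g : K[X]) (c : K), F ∣ g ^ 2 - C c → ∃ c' : K, F ∣ g - C c') :
    ∃ u < 4 ^ N * N + 1, ∀ k, 1 ≤ k → 2 * k ≤ N →
      IsCoprime (resolvent F N k u) (derivative (resolvent F N k u)) ∧
      ∀ A : K[X], A ≠ 0 → A.natDegree ≤ 2 → IsCoprime (resolvent F N k u) A := by
  classical
  let L := F.SplittingField
  have hsep : F.Separable := hirr.separable
  have hgal : IsGalois K L := IsGalois.of_separable_splitting_field hsep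
  have hspl := SplittingField.splits F
  let r := (F.map (algebraMap K L)).roots
  have hnd : r.Nodup := nodup_roots hsep.map
  have hrc : r.toFinset.card = N := by
    rw [Multiset.toFinset_card_of_nodup hnd, ← hN, ← hspl.natDegree_eq_card_roots, natDegree_map]
  let e := r.toFinset.equivFinOfCardEq hrc
  let τ : Fin N → L := fun i => (e.symm i : L)
  have hτ : Function.Injective τ := fun i j h => e.symm.injective (Subtype.ext h)
  have hF : F.map (algebraMap K L) = ∏ i, (X - C (τ i)) := by
    rw [hspl.eq_prod_roots_of_monic (hmon.map _)]
    rw [Equiv.prod_comp e.symm (fun x : r.toFinset => (X - C (x : L)))]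
    rw [Finset.prod_coe_sort r.toFinset (fun x : L => X - C x), Finset.prod,
      Multiset.toFinset_val, hnd.dedup]
  have : CharZero L := charZero_of_injective_algebraMap (algebraMap K L).injective
  obtain ⟨u, hu1, hu⟩ := exists_separating τ hτ
  refine ⟨u, hu1, fun k hk1 hk2 => ?_⟩
  have hres : (resolvent F N k u).map (algebraMap K L) = rootResolvent k u τ := by
    rw [resolvent_map, hF, resolvent_prod]
  constructor
  · change (resolvent F N k u).Separable
    rw [← separable_map (algebraMap K L), hres, rootResolvent]
    refine separable_prod_X_sub_C_iff'.2 ?_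
    intro S _ S' _ h
    exact hu _ _ h
  · intro A hA hA2
    rw [← isCoprime_map (algebraMap K L), hres, rootResolvent]
    refine IsCoprime.prod_left fun S hS => ?_
    rw [(irreducible_X_sub_C _).coprime_iff_not_dvd, dvd_iff_isRoot, IsRoot.def,
      eval_map_algebraMap]
    rw [Finset.mem_powersetCard] at hS
    refine value_not_quadratic hirr hmon hN hquad hτ hF hu S ?_ ?_ A hA hA2
    · rw [← Finset.card_pos]; omega
    · omega

/-- The monic polynomial whose roots are those of `f` multiplied by the coefficient of degree `N`. -/
def monicize {A : Type*} [CommRing A] (f : A[X]) (N : ℕ) : A[X] :=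
  X ^ N + ∑ i ∈ Finset.range N, C (f.coeff i * f.coeff N ^ (N - 1 - i)) * X ^ i

lemma monicize_map {A B : Type*} [CommRing A] [CommRing B] (φ : A →+* B) (f : A[X]) (N : ℕ) :
    (monicize f N).map φ = monicize (f.map φ) N := by
  simp [monicize, Polynomial.map_sum]

lemma monicize_aux {A : Type*} [CommRing A] (f : A[X]) (N : ℕ) :
    (∑ i ∈ Finset.range N, C (f.coeff i * f.coeff N ^ (N - 1 - i)) * X ^ i).degree < (N : WithBot ℕ) := by
  refine lt_of_le_of_lt (degree_sum_le _ _) ((Finset.sup_lt_iff (WithBot.bot_lt_coe N)).2 ?_)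
  intro i hi
  exact lt_of_le_of_lt (degree_C_mul_X_pow_le _ _) (WithBot.coe_lt_coe.2 (Finset.mem_range.1 hi))

lemma monicize_monic {A : Type*} [CommRing A] (f : A[X]) (N : ℕ) : (monicize f N).Monic :=
  monic_X_pow_add (monicize_aux f N)

lemma monicize_natDegree {A : Type*} [CommRing A] [Nontrivial A] (f : A[X]) (N : ℕ) :
    (monicize f N).natDegree = N := by
  unfold monicize
  rw [natDegree_add_eq_left_of_degree_lt, natDegree_X_pow]
  rw [degree_X_pow]; exact monicize_aux f N

lemma monicize_comp {A : Type*} [CommRing A] (f : A[X]) (N : ℕ) (hN : 1 ≤ N)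
    (hf : f.natDegree ≤ N) :
    (monicize f N).comp (C (f.coeff N) * X) = C (f.coeff N ^ (N - 1)) * f := by
  conv_rhs => enter [2]; rw [f.as_sum_range_C_mul_X_pow' (Nat.lt_succ_of_le hf)]
  rw [Finset.sum_range_succ, mul_add, monicize, add_comm (X ^ N)]
  simp only [add_comp, Polynomial.sum_comp, mul_comp, C_comp, pow_comp, X_comp]
  congr 1
  · rw [Finset.mul_sum]
    refine Finset.sum_congr rfl fun i hi => ?_
    have := Finset.mem_range.1 hi
    rw [mul_pow, ← C_pow, ← mul_assoc, ← mul_assoc, ← C_mul, ← C_mul, mul_assoc, ← pow_add,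
      show N - 1 - i + i = N - 1 by omega, mul_comm (f.coeff i)]
  · rw [mul_pow, ← C_pow, ← mul_assoc, ← C_mul, ← pow_succ, Nat.sub_add_cancel hN]

/-- Scaling of the variable by a nonzero constant. -/
def scaleEquiv {K : Type*} [Field K] (L : K) (hL : L ≠ 0) : K[X] ≃ₐ[K] K[X] :=
  letI := invertibleOfNonzero hL
  algEquivCMulXAddC L 0

lemma scaleEquiv_apply {K : Type*} [Field K] (L : K) (hL : L ≠ 0) (f : K[X]) :
    scaleEquiv L hL f = f.comp (C L * X) := by
  simp [scaleEquiv, algEquivCMulXAddC, comp, aeval_def]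

lemma scaleEquiv_monicize {K : Type*} [Field K] (f : K[X]) (N : ℕ) (hN : 1 ≤ N)
    (hf : f.natDegree ≤ N) (hL : f.coeff N ≠ 0) :
    Associated (scaleEquiv _ hL (monicize f N)) f := by
  rw [scaleEquiv_apply, monicize_comp f N hN hf]
  exact associated_unit_mul_left _ _ (isUnit_C.2 (IsUnit.pow _ (Ne.isUnit hL)))

lemma monicize_irreducible_iff {K : Type*} [Field K] (f : K[X]) (N : ℕ) (hN : 1 ≤ N)
    (hf : f.natDegree ≤ N) (hL : f.coeff N ≠ 0) :
    Irreducible (monicize f N) ↔ Irreducible f := by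
  rw [← (scaleEquiv_monicize f N hN hf hL).irreducible_iff,
    MulEquiv.irreducible_iff (scaleEquiv _ hL)]

lemma monicize_quad {K : Type*} [Field K] (f : K[X]) (N : ℕ) (hN : 1 ≤ N)
    (hf : f.natDegree ≤ N) (hL : f.coeff N ≠ 0)
    (hquad : ∀ (g : K[X]) (c : K), f ∣ g ^ 2 - C c → ∃ c' : K, f ∣ g - C c')
    (g : K[X]) (c : K) (h : monicize f N ∣ g ^ 2 - C c) : ∃ c' : K, monicize f N ∣ g - C c' := by
  have hass := scaleEquiv_monicize f N hN hf hL
  have key : ∀ q : K[X], monicize f N ∣ q ↔ f ∣ scaleEquiv _ hL q := by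
    intro q
    rw [← hass.dvd_iff_dvd_left, map_dvd_iff]
  rw [key] at h
  obtain ⟨c', hc'⟩ := hquad (scaleEquiv _ hL g) c (by
    rw [map_sub, map_pow, scaleEquiv_apply _ _ (C c), C_comp] at h; exact h)
  refine ⟨c', ?_⟩
  rw [key, map_sub, scaleEquiv_apply _ _ (C c'), C_comp]
  exact hc'

lemma exists_roots_fun {K : Type*} [Field K] (p : K[X]) (hp : p.Monic) (hs : p.Splits) :
    ∃ a : Fin p.natDegree → K, p = ∏ i, (X - C (a i)) := by
  have hlen : p.roots.toList.length = p.natDegree := by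
    rw [Multiset.length_toList, hs.natDegree_eq_card_roots]
  refine ⟨fun i => p.roots.toList.get (i.cast hlen.symm), ?_⟩
  conv_lhs => rw [hs.eq_prod_roots_of_monic hp]
  rw [← List.prod_ofFn, ← Multiset.prod_coe]
  congr 1
  rw [List.ofFn_congr hlen.symm]
  conv_lhs => rw [← Multiset.coe_toList p.roots]
  rw [Multiset.map_coe]
  congr 1
  apply List.ext_getElem <;> simp

/-- If a monic integer polynomial is reducible over `ℚ`, then for some `k ≤ N / 2` all its resolvents
have an integer root, namely the value at `u` of a monic factor of degree `k`. -/
theorem exists_root_resolvent (G : ℤ[X]) (hG : G.Monic) (N : ℕ) (hN : G.natDegree = N)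
    (hN1 : 1 ≤ N) (hred : ¬ Irreducible (G.map (Int.castRingHom ℚ))) :
    ∃ k, 1 ≤ k ∧ 2 * k ≤ N ∧ ∀ u, ∃ y : ℤ, (resolvent G N k u).eval y = 0 := by
  have h1 : ¬ Irreducible G := by
    rw [hG.irreducible_iff_irreducible_map_fraction_map (K := ℚ)]
    exact hred
  rw [hG.irreducible_iff_natDegree'] at h1
  push Not at h1
  obtain ⟨f, g, hf, hg, hfg, hdeg⟩ := h1 (by rintro rfl; simp at hN; omega)
  rw [Finset.mem_Ioc] at hdeg
  refine ⟨g.natDegree, hdeg.1, by omega, fun u => ⟨g.eval (u : ℤ), ?_⟩⟩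
  let φ := Int.castRingHom ℂ
  have hφ : Function.Injective φ := Int.cast_injective
  obtain ⟨a, ha⟩ := exists_roots_fun (g.map φ) (hg.map φ) (IsAlgClosed.splits _)
  obtain ⟨b, hb⟩ := exists_roots_fun (f.map φ) (hf.map φ) (IsAlgClosed.splits _)
  have hNk : N = (g.map φ).natDegree + (f.map φ).natDegree := by
    rw [hg.natDegree_map, hf.natDegree_map, ← hN, ← hfg, hf.natDegree_mul hg, add_comm]
  have hkk : g.natDegree = (g.map φ).natDegree := (hg.natDegree_map _).symm
  subst hNk
  have hτ : G.map φ = ∏ i, (X - C (Fin.append a b i)) := by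
    rw [Fin.prod_univ_add]
    simp only [Fin.append_left, Fin.append_right]
    rw [← ha, ← hb, ← Polynomial.map_mul, mul_comm, hfg]
  apply hφ
  rw [map_zero, ← eval_map_apply, resolvent_map, hτ, resolvent_prod, rootResolvent, eval_prod]
  refine Finset.prod_eq_zero (i := Finset.univ.map (Fin.castAddEmb _)) ?_ ?_
  · rw [Finset.mem_powersetCard]
    simp [hkk]
  · have : φ (g.eval (u : ℤ)) = subsetVal u (Fin.append a b)
        (Finset.univ.map (Fin.castAddEmb (f.map φ).natDegree)) := by
      rw [← eval_map_apply]
      refine (congrArg (eval (φ u)) ha).trans ?_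
      rw [eval_prod]
      simp [subsetVal]
    rw [this]; simp

/-! ### Discriminants and their top coefficients -/

/-- The Sylvester matrix of `resultantOf` is Mathlib's up to transposition and reversal of the order. -/
lemma resultantOf_eq {R : Type*} [CommRing R] (p q : R[X]) (m n : ℕ) :
    resultantOf p q m n = resultant p q m n := by
  unfold resultantOf resultant
  rw [← Matrix.det_transpose (sylvester p q m n),
    ← Matrix.det_submatrix_equiv_self Fin.revPerm (sylvester p q m n).transpose]
  congr 1
  ext i j
  simp only [sylvesterMatrix, Matrix.of_apply, Matrix.submatrix_apply, Matrix.transpose_apply,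
    sylvester, Fin.revPerm_apply]
  by_cases hi : (i : ℕ) < n
  · have e : i.rev = Fin.natAdd m ⟨n - 1 - i, by omega⟩ := by
      ext; simp [Fin.val_rev]; omega
    rw [e, Fin.addCases_right]
    have := i.2
    have := j.2
    simp only [Fin.val_rev, Set.mem_Icc, if_pos hi]
    have h1 : ((i : ℕ) ≤ j ∧ (j : ℕ) ≤ i + m) ↔
        (n - 1 - (i : ℕ) ≤ m + n - (j + 1) ∧ m + n - ((j : ℕ) + 1) ≤ n - 1 - i + m) := by omega
    by_cases hc : (i : ℕ) ≤ j ∧ (j : ℕ) ≤ i + m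
    · rw [if_pos hc, if_pos (h1.1 hc)]
      congr 1; omega
    · rw [if_neg hc, if_neg (fun h => hc (h1.2 h))]
  · have := i.2
    have := j.2
    have e : i.rev = Fin.castAdd n ⟨m + n - 1 - i, by omega⟩ := by
      ext; simp [Fin.val_rev]; omega
    rw [e, Fin.addCases_left]
    simp only [Fin.val_rev, Set.mem_Icc, if_neg hi]
    have h1 : ((i : ℕ) - n ≤ j ∧ (j : ℕ) ≤ i - n + n) ↔
        (m + n - 1 - (i : ℕ) ≤ m + n - (j + 1) ∧ m + n - ((j : ℕ) + 1) ≤ m + n - 1 - i + n) := by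
      omega
    by_cases hc : (i : ℕ) - n ≤ j ∧ (j : ℕ) ≤ i - n + n
    · rw [if_pos hc, if_pos (h1.1 hc)]
      congr 1; omega
    · rw [if_neg hc, if_neg (fun h => hc (h1.2 h))]

lemma discOf_eq {R : Type*} [CommRing R] (p : R[X]) (n : ℕ) :
    discOf p n = (-1) ^ (n * (n - 1) / 2) * resultant p (derivative p) n (n - 1) := by
  rw [discOf, resultantOf_eq]

lemma discOf_map {R S : Type*} [CommRing R] [CommRing S] (φ : R →+* S) (p : R[X]) (n : ℕ) :
    discOf (p.map φ) n = φ (discOf p n) := by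
  rw [discOf_eq, discOf_eq, derivative_map, resultant_map_map]
  simp

/-- In characteristic zero the discriminant of a polynomial of degree `n` vanishes exactly when the
polynomial is inseparable. -/
lemma discOf_eq_zero_iff {K : Type*} [Field K] [CharZero K] (p : K[X]) (n : ℕ) (hn : 1 ≤ n)
    (hp : p.natDegree = n) : discOf p n = 0 ↔ ¬ IsCoprime p (derivative p) := by
  have hp0 : p ≠ 0 := by rintro rfl; simp at hp; omega
  have h := resultant_eq_zero_iff (f := p) (g := derivative p)
  rw [natDegree_derivative, hp] at h
  rw [discOf_eq, mul_eq_zero, h]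
  simp [hp0]

/-- Replacing `P` by `(m + 1) P - Y P'`, which has smaller degree, in the resultant defining the
discriminant. -/
lemma disc_formula {A : Type*} [CommRing A] (P : A[X]) (m : ℕ) (hP : P.natDegree ≤ m + 1)
    (h1 : P.coeff (m + 1) = 1) :
    ((m : A) + 1) ^ m * resultant P (derivative P) (m + 1) m =
      (-1) ^ m * ((m : A) + 1) *
        resultant (C ((m : A) + 1) * P - derivative P * X) (derivative P) m m := by
  have hd : (derivative P).natDegree ≤ m := (natDegree_derivative_le P).trans (by omega)
  rw [← resultant_C_mul_left, ← resultant_add_mul_left (C ((m : A) + 1) * P) (derivative P) (-X) (m + 1) m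
    (by rw [natDegree_neg]; exact (Nat.add_le_add_right natDegree_X_le _).trans (by omega)) hd,
    mul_neg, ← sub_eq_add_neg, resultant_succ_left_deg]
  · rw [coeff_derivative, h1, one_mul]
  · rw [natDegree_le_iff_coeff_eq_zero]
    intro i hi
    obtain ⟨i, rfl⟩ : ∃ i', i = i' + 1 := ⟨i - 1, by omega⟩
    rw [coeff_sub, coeff_C_mul, coeff_mul_X, coeff_derivative]
    obtain rfl | hlt := eq_or_lt_of_le (show m ≤ i by omega)
    · rw [h1]; ring
    · rw [coeff_eq_zero_of_natDegree_lt (lt_of_le_of_lt hP (by omega))]; ring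

lemma coeff_det {B : Type*} [CommRing B] {ι : Type*} [Fintype ι] [DecidableEq ι]
    (M : Matrix ι ι B[X]) (D : ℕ) (hM : ∀ i j, (M i j).natDegree ≤ D) :
    M.det.coeff (Fintype.card ι * D) = (M.map fun p => p.coeff D).det := by
  rw [Matrix.det_apply, Matrix.det_apply, finsetSum_coeff]
  refine Finset.sum_congr rfl fun σ _ => ?_
  have h : (∏ i, M (σ i) i).coeff (Fintype.card ι * D) = ∏ i, (M (σ i) i).coeff D := by
    rw [← Finset.card_univ]
    exact coeff_prod_of_natDegree_le (f := fun i => M (σ i) i) _ _ fun i _ => hM _ _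
  simp only [Units.smul_def, coeff_smul, h, Matrix.map_apply]

/-- The coefficient of maximal possible degree in `T` of a resultant is the resultant of the polynomials
formed by the coefficients of `T ^ D`. -/
lemma coeff_resultant {B : Type*} [CommRing B] (p q : B[X][X]) (p' q' : B[X]) (D m n : ℕ)
    (hp : ∀ i, (p.coeff i).natDegree ≤ D) (hq : ∀ i, (q.coeff i).natDegree ≤ D)
    (hp' : ∀ i, (p.coeff i).coeff D = p'.coeff i) (hq' : ∀ i, (q.coeff i).coeff D = q'.coeff i) :
    (resultant p q m n).coeff ((m + n) * D) = resultant p' q' m n := by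
  have h := coeff_det (sylvester p q m n) D (by
    intro i j
    induction j using Fin.addCases <;> simp only [sylvester, Matrix.of_apply, Fin.addCases_left,
      Fin.addCases_right] <;> split_ifs <;> simp [hp, hq])
  rw [Fintype.card_fin] at h
  unfold resultant
  rw [h]
  congr 1
  ext i j
  induction j using Fin.addCases <;> simp only [sylvester, Matrix.of_apply, Fin.addCases_left,
      Fin.addCases_right, Matrix.map_apply] <;> split_ifs <;> simp [hp', hq']

/-- The discriminant of `P = Y ^ (m + 1) + ⋯` has degree at most `2 * m * D` in `T`; its coefficient
there is, up to sign, `α` times the resultant of `q` and `q'`, where `q` collects the coefficients of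
`T ^ D` in `P` and `α` is the coefficient of `Y ^ m` in `q`. -/
lemma disc_top {B : Type*} [CommRing B] [IsDomain B] [CharZero B] (P : B[X][X]) (q : B[X])
    (m D : ℕ) (hm : 1 ≤ m) (hD : 1 ≤ D)
    (hP : P.natDegree ≤ m + 1) (h1 : P.coeff (m + 1) = 1) (hPD : ∀ i, (P.coeff i).natDegree ≤ D)
    (hq : ∀ i, (P.coeff i).coeff D = q.coeff i) :
    (discOf P (m + 1)).natDegree ≤ 2 * m * D ∧
    ∃ ε : B, (ε = 1 ∨ ε = -1) ∧
      (discOf P (m + 1)).coeff (2 * m * D) =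
        ε * (q.coeff m * resultant q (derivative q) m (m - 1)) := by
  have hd : ∀ i, ((derivative P).coeff i).natDegree ≤ D := by
    intro i
    rw [coeff_derivative, show ((i : B[X]) + 1) = C ((i : B) + 1) by simp]
    exact (natDegree_mul_C_le _ _).trans (hPD _)
  have hG : ∀ i, ((C ((m : B[X]) + 1) * P - derivative P * X).coeff i).natDegree ≤ D := by
    intro i
    rw [coeff_sub, coeff_C_mul, show ((m : B[X]) + 1) = C ((m : B) + 1) by simp]
    refine (natDegree_sub_le _ _).trans (max_le ((natDegree_C_mul_le _ _).trans (hPD _)) ?_)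
    cases i with
    | zero => simp
    | succ i => rw [coeff_mul_X]; exact hd _
  have hd' : ∀ i, ((derivative P).coeff i).coeff D = (derivative q).coeff i := by
    intro i
    rw [coeff_derivative, coeff_derivative, show ((i : B[X]) + 1) = C ((i : B) + 1) by simp,
      coeff_mul_C, hq]
  have hG' : ∀ i, ((C ((m : B[X]) + 1) * P - derivative P * X).coeff i).coeff D =
      (C ((m : B) + 1) * q - derivative q * X).coeff i := by
    intro i
    rw [coeff_sub, coeff_sub, coeff_sub, coeff_C_mul, coeff_C_mul,
      show ((m : B[X]) + 1) = C ((m : B) + 1) by simp, coeff_C_mul, hq]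
    cases i with
    | zero => simp
    | succ i => rw [coeff_mul_X, coeff_mul_X, hd']
  have hm0 : ((m : B) + 1) ≠ 0 := by exact_mod_cast Nat.succ_ne_zero m
  have hqn : ∀ i, m < i → q.coeff i = 0 := by
    intro i hi
    rw [← hq]
    obtain rfl | hlt := eq_or_lt_of_le (show m + 1 ≤ i by omega)
    · rw [h1, coeff_one, if_neg (by omega)]
    · rw [coeff_eq_zero_of_natDegree_lt (lt_of_le_of_lt hP hlt), coeff_zero]
  have hqd : q.natDegree ≤ m := natDegree_le_iff_coeff_eq_zero.2 hqn
  have hform := disc_formula P m hP h1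
  set ρ := resultant (C ((m : B[X]) + 1) * P - derivative P * X) (derivative P) m m with hρ
  have hρd : ρ.natDegree ≤ (m + m) * D := natDegree_resultant_le _ _ m m D hG hd
  have hρc := coeff_resultant _ _ _ _ D m m hG hd hG' hd'
  rw [← hρ] at hρc
  have hcast : ((m : B[X]) + 1) = C ((m : B) + 1) := by simp
  rw [hcast, ← C_pow] at hform
  have hsgn : ∀ r : ℕ, ((-1 : B[X]) ^ r) = C ((-1) ^ r) := by simp
  have hform2 : C (((m : B) + 1) ^ m) * discOf P (m + 1) =
      C ((-1) ^ ((m + 1) * m / 2) * ((-1) ^ m * ((m : B) + 1))) * ρ := by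
    rw [discOf_eq, Nat.add_sub_cancel, mul_left_comm, hform, hsgn, hsgn]
    simp only [C_mul]; ring
  have h2m : 2 * m * D = (m + m) * D := by ring
  constructor
  · rw [← natDegree_C_mul (pow_ne_zero m hm0), hform2, h2m]
    exact (natDegree_C_mul_le _ _).trans hρd
  · have hc := congrArg (fun p => p.coeff (2 * m * D)) hform2
    simp only [coeff_C_mul] at hc
    rw [h2m, hρc] at hc
    obtain ⟨l, rfl⟩ : ∃ l, m = l + 1 := ⟨m - 1, by omega⟩
    have hqd' : (derivative q).natDegree ≤ l := (natDegree_derivative_le q).trans (by omega)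
    rw [resultant_add_right_deg _ _ _ _ 1 hqd', pow_one, sub_eq_add_neg, ← mul_neg,
      resultant_add_mul_left _ _ _ _ _ (by
        rw [natDegree_neg]; exact (Nat.add_le_add_right natDegree_X_le _).trans (by omega)) hqd',
      resultant_C_mul_left] at hc
    have hco : (C (((l + 1 : ℕ) : B) + 1) * q + derivative q * -X).coeff (l + 1) =
        q.coeff (l + 1) := by
      rw [mul_neg, ← sub_eq_add_neg, coeff_sub, coeff_C_mul, coeff_mul_X, coeff_derivative]
      push_cast; ring
    rw [hco] at hc
    refine ⟨(-1) ^ ((l + 1 + 1) * (l + 1) / 2) * (-1) ^ (l + 1), ?_, ?_⟩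
    · rw [← pow_add]; exact neg_one_pow_eq_or B _
    · rw [h2m]
      apply mul_left_cancel₀ (pow_ne_zero (l + 1) hm0)
      rw [hc, Nat.add_sub_cancel]
      ring

/-! ### Orders and ramification in Laurent series -/

/-- Hensel's lemma for power series and not necessarily monic polynomials. -/
lemma hensel_powerSeries {k : Type*} [Field k] (f : (PowerSeries k)[X]) (κ : k)
    (h0 : PowerSeries.constantCoeff (f.eval (PowerSeries.C κ)) = 0)
    (h1 : PowerSeries.constantCoeff (f.derivative.eval (PowerSeries.C κ)) ≠ 0) :
    ∃ y : PowerSeries k, f.eval y = 0 ∧ PowerSeries.constantCoeff y = κ := by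
  set w : PowerSeries k :=
    PowerSeries.C (PowerSeries.constantCoeff (f.derivative.eval (PowerSeries.C κ)))⁻¹ with hw
  let c : ℕ → PowerSeries k := fun n => Nat.rec (PowerSeries.C κ) (fun _ b => b - w * f.eval b) n
  have hc0 : c 0 = PowerSeries.C κ := rfl
  have hc : ∀ n, c (n + 1) = c n - w * f.eval (c n) := fun _ => rfl
  have hev : ∀ (g : (PowerSeries k)[X]) (y z : PowerSeries k),
      PowerSeries.constantCoeff y = PowerSeries.constantCoeff z →
      PowerSeries.constantCoeff (g.eval y) = PowerSeries.constantCoeff (g.eval z) := by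
    intro g y z h
    rw [← eval_map_apply, ← eval_map_apply, h]
  have key : ∀ n, PowerSeries.constantCoeff (c n) = κ ∧ (PowerSeries.X : PowerSeries k) ^ (n + 1) ∣ f.eval (c n) := by
    intro n
    induction n with
    | zero =>
      refine ⟨by simp [hc0], ?_⟩
      rw [zero_add, pow_one, PowerSeries.X_dvd_iff, hc0, h0]
    | succ n ih =>
      obtain ⟨ih1, d, hd⟩ := ih
      constructor
      · rw [hc, hd, map_sub, ih1, map_mul, map_mul, map_pow]
        simp
      · obtain ⟨e, he⟩ := f.binomExpansion (c n) (-(w * f.eval (c n)))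
        rw [hc, sub_eq_add_neg, he]
        have h2 : (PowerSeries.X : PowerSeries k) ∣ 1 - w * f.derivative.eval (c n) := by
          rw [PowerSeries.X_dvd_iff, map_sub, map_mul, hev f.derivative (c n) (PowerSeries.C κ)
            (by simp [ih1]), hw]
          simp [h1]
        obtain ⟨g, hg⟩ := h2
        refine ⟨d * g + e * w ^ 2 * d ^ 2 * PowerSeries.X ^ n, ?_⟩
        rw [show f.eval (c n) + f.derivative.eval (c n) * -(w * f.eval (c n)) +
          e * (-(w * f.eval (c n))) ^ 2 = f.eval (c n) * (1 - w * f.derivative.eval (c n)) +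
          e * (w * f.eval (c n)) ^ 2 by ring, hg, hd]
        ring
  have hcauchy : ∀ m n, m ≤ n → (PowerSeries.X : PowerSeries k) ^ (m + 1) ∣ c n - c m := by
    intro m n hmn
    induction n, hmn using Nat.le_induction with
    | base => simp
    | succ n hmn ih =>
      have : (PowerSeries.X : PowerSeries k) ^ (m + 1) ∣ w * f.eval (c n) :=
        Dvd.dvd.mul_left ((pow_dvd_pow _ (by omega)).trans (key n).2) _
      rw [hc, sub_right_comm]
      exact dvd_sub ih this
  let y : PowerSeries k := PowerSeries.mk fun m => PowerSeries.coeff m (c m)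
  have hy : ∀ n, (PowerSeries.X : PowerSeries k) ^ (n + 1) ∣ y - c n := by
    intro n
    rw [PowerSeries.X_pow_dvd_iff]
    intro m hm
    have := PowerSeries.X_pow_dvd_iff.1 (hcauchy m n (by omega)) m (by omega)
    rw [map_sub, PowerSeries.coeff_mk]
    rw [map_sub] at this
    linear_combination -this
  refine ⟨y, ?_, ?_⟩
  · ext m
    have h2 : (PowerSeries.X : PowerSeries k) ^ (m + 1) ∣ f.eval y := by
      have h3 := (hy m).trans (f.sub_dvd_eval_sub y (c m))
      have := dvd_add h3 (key m).2
      simpa using this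
    rw [PowerSeries.X_pow_dvd_iff.1 h2 m (by omega), map_zero]
  · have := PowerSeries.X_dvd_iff.1 (by simpa using hy 0)
    rw [map_sub, (key 0).1] at this
    linear_combination this

/-- The order of a sum with a unique term of minimal order is the order of that term. -/
lemma order_sum {ι : Type*} (s : Finset ι) (x : ι → LaurentSeries ℂ) (i₀ : ι) (hi₀ : i₀ ∈ s)
    (h0 : x i₀ ≠ 0) (h : ∀ i ∈ s, i ≠ i₀ → x i = 0 ∨ (x i₀).order < (x i).order) :
    ∑ i ∈ s, x i ≠ 0 ∧ (∑ i ∈ s, x i).order = (x i₀).order := by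
  classical
  have hco : ∀ m ≤ (x i₀).order, (∑ i ∈ s, x i).coeff m = (x i₀).coeff m := by
    intro m hm
    rw [HahnSeries.coeff_sum]
    refine Finset.sum_eq_single_of_mem i₀ hi₀ fun i hi hne => ?_
    obtain h1 | h1 := h i hi hne
    · rw [h1, HahnSeries.coeff_zero]
    · exact HahnSeries.coeff_eq_zero_of_lt_order (lt_of_le_of_lt hm h1)
  have h1 : (∑ i ∈ s, x i).coeff (x i₀).order ≠ 0 := by
    rw [hco _ le_rfl]; exact HahnSeries.coeff_order_eq_zero.not.2 h0
  have h2 : ∑ i ∈ s, x i ≠ 0 := HahnSeries.ne_zero_of_coeff_ne_zero h1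
  refine ⟨h2, le_antisymm (HahnSeries.order_le_of_coeff_ne_zero h1) ?_⟩
  by_contra! hlt
  have h3 := hco _ hlt.le
  rw [HahnSeries.coeff_eq_zero_of_lt_order hlt] at h3
  exact HahnSeries.coeff_order_eq_zero.not.2 h2 h3

lemma sum_ne_zero_of_order {ι : Type*} (s : Finset ι) (hs : s.Nonempty) (x : ι → LaurentSeries ℂ)
    (h0 : ∀ i ∈ s, x i ≠ 0) (hinj : ∀ i ∈ s, ∀ j ∈ s, (x i).order = (x j).order → i = j) :
    ∑ i ∈ s, x i ≠ 0 := by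
  obtain ⟨i₀, hi₀, hmin⟩ := Finset.exists_min_image s (fun i => (x i).order) hs
  refine (order_sum s x i₀ hi₀ (h0 _ hi₀) fun i hi hne => Or.inr ?_).1
  exact lt_of_le_of_ne (hmin i hi) fun h => hne (hinj _ hi₀ _ hi h).symm

lemma order_pow' (x : LaurentSeries ℂ) (hx : x ≠ 0) (n : ℕ) : (x ^ n).order = n * x.order := by
  induction n with
  | zero => simp
  | succ n ih =>
    rw [pow_succ, HahnSeries.order_mul (pow_ne_zero _ hx) hx, ih]; push_cast; ring

/-- Powers of an element of order `-1` are independent over elements with order divisible by `M`. -/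
lemma powers_independent (M : ℕ) (T : LaurentSeries ℂ) (hT0 : T ≠ 0) (hT : T.order = -1)
    (c : ℕ → LaurentSeries ℂ) (hc : ∀ i < M, c i ≠ 0 → (M : ℤ) ∣ (c i).order)
    (h : ∑ i ∈ Finset.range M, c i * T ^ i = 0) : ∀ i < M, c i = 0 := by
  classical
  by_contra! hcon
  obtain ⟨i₁, hi₁, hci₁⟩ := hcon
  have hs : ∑ i ∈ (Finset.range M).filter (fun i => c i ≠ 0), c i * T ^ i = 0 := by
    rw [Finset.sum_filter]
    refine Eq.trans (Finset.sum_congr rfl fun i _ => ?_) h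
    split_ifs with h1
    · rfl
    · push Not at h1; rw [h1, zero_mul]
  refine sum_ne_zero_of_order _ ⟨i₁, by simp [hi₁, hci₁]⟩ _ ?_ ?_ hs
  · intro i hi
    simp only [Finset.mem_filter, Finset.mem_range] at hi
    exact mul_ne_zero hi.2 (pow_ne_zero _ hT0)
  · intro i hi j hj hij
    simp only [Finset.mem_filter, Finset.mem_range] at hi hj
    rw [HahnSeries.order_mul hi.2 (pow_ne_zero _ hT0), HahnSeries.order_mul hj.2 (pow_ne_zero _ hT0),
      order_pow' _ hT0, order_pow' _ hT0, hT] at hij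
    obtain ⟨a, ha⟩ := hc i hi.1 hi.2
    obtain ⟨b, hb⟩ := hc j hj.1 hj.2
    have hd : (M : ℤ) ∣ (i : ℤ) - j := ⟨a - b, by rw [ha, hb] at hij; linarith⟩
    have := Int.eq_zero_of_abs_lt_dvd hd (by rw [abs_lt]; omega)
    omega

/-- If all orders of elements of `K` are divisible by `M` (ramification), then an element of order
`-1` has degree at least `M` over `K`. -/
lemma natDegree_ge_of_root {K : Type*} [Field K] [Algebra K (LaurentSeries ℂ)] (M : ℕ)
    (T : LaurentSeries ℂ) (hT0 : T ≠ 0) (hT : T.order = -1)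
    (hK : ∀ c : K, c ≠ 0 → (M : ℤ) ∣ (algebraMap K (LaurentSeries ℂ) c).order)
    (g : K[X]) (hg : g ≠ 0) (hroot : aeval T g = 0) : M ≤ g.natDegree := by
  by_contra! hlt
  rw [aeval_eq_sum_range' hlt] at hroot
  simp only [Algebra.smul_def] at hroot
  have := powers_independent M T hT0 hT (fun i => algebraMap K _ (g.coeff i)) (fun i _ h => by
    refine hK _ ?_
    rintro h0
    simp [h0] at h) hroot g.natDegree hlt
  simp [hg] at this

/-- If `s` is quadratic over `K` with `s ^ 2 = c ∈ K`, and `M` divides the orders of `s` and of all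
elements of `K`, then `M` divides the orders of all elements of `K(s)`. -/
lemma order_quadratic {K : Type*} [Field K] [Algebra K (LaurentSeries ℂ)] (M : ℕ)
    (hK : ∀ c : K, c ≠ 0 → (M : ℤ) ∣ (algebraMap K (LaurentSeries ℂ) c).order)
    (s : LaurentSeries ℂ) (hs : (M : ℤ) ∣ s.order) (c : K) (hsc : s ^ 2 = algebraMap K _ c)
    (hsK : ∀ c' : K, s ≠ algebraMap K _ c') (a b : K)
    (hab : algebraMap K (LaurentSeries ℂ) a + algebraMap K _ b * s ≠ 0) :
    (M : ℤ) ∣ (algebraMap K (LaurentSeries ℂ) a + algebraMap K _ b * s).order := by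
  have hs0 : s ≠ 0 := by intro h; exact hsK 0 (by simp [h])
  by_cases hb : b = 0
  · subst hb
    have : algebraMap K (LaurentSeries ℂ) a + algebraMap K _ 0 * s = algebraMap K _ a := by simp
    rw [this] at hab ⊢
    exact hK a (by rintro rfl; simp at hab)
  have hb' : algebraMap K (LaurentSeries ℂ) b ≠ 0 := by simpa using hb
  have hbs : (M : ℤ) ∣ (algebraMap K (LaurentSeries ℂ) b * s).order := by
    rw [HahnSeries.order_mul hb' hs0]; exact dvd_add (hK b hb) hs
  by_cases ha : a = 0
  · subst ha; simpa using hbs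
  have ha' : algebraMap K (LaurentSeries ℂ) a ≠ 0 := by simpa using ha
  have hbs0 : algebraMap K (LaurentSeries ℂ) b * s ≠ 0 := mul_ne_zero hb' hs0
  set A := algebraMap K (LaurentSeries ℂ) a with hA
  set B := algebraMap K (LaurentSeries ℂ) b * s with hB
  have hab2 : A - B ≠ 0 := by
    intro h
    apply hsK (a / b)
    rw [map_div₀, eq_div_iff hb']
    rw [hA, hB] at h
    linear_combination -h
  -- the norm has order divisible by `M`
  have hnorm : (M : ℤ) ∣ (A + B).order + (A - B).order := by
    rw [← HahnSeries.order_mul hab hab2]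
    have e : (A + B) * (A - B) = algebraMap K _ (a ^ 2 - b ^ 2 * c) := by
      rw [map_sub, map_pow, map_mul, map_pow, ← hsc, hA, hB]; ring
    rw [e]
    apply hK
    intro h0
    rw [h0, map_zero] at e
    exact mul_ne_zero hab hab2 e
  have horder_neg : ∀ x : LaurentSeries ℂ, (-x).order = x.order := fun x => HahnSeries.order_neg
  have h2 : ∀ x : LaurentSeries ℂ, x ≠ 0 → (2 * x) ≠ 0 ∧ (2 * x).order = x.order := by
    intro x hx
    have e2 : (2 : LaurentSeries ℂ) = HahnSeries.C (2 : ℂ) := (map_ofNat HahnSeries.C 2).symm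
    have h20 : (2 : LaurentSeries ℂ) ≠ 0 := by rw [e2]; simp
    refine ⟨mul_ne_zero h20 hx, ?_⟩
    rw [HahnSeries.order_mul h20 hx, e2]
    simp
  have m1 := HahnSeries.min_order_le_order_add hab
  have m2 := HahnSeries.min_order_le_order_add (x := A) (y := -B) (by rwa [← sub_eq_add_neg])
  have e3 : (A + B) + (A - B) = 2 * A := by ring
  have e4 : (A + B) + -(A - B) = 2 * B := by ring
  have m3 := HahnSeries.min_order_le_order_add (x := A + B) (y := A - B)
    (by rw [e3]; exact (h2 A ha').1)
  have m4 := HahnSeries.min_order_le_order_add (x := A + B) (y := -(A - B))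
    (by rw [e4]; exact (h2 B hbs0).1)
  rw [e3, (h2 A ha').2] at m3
  rw [e4, (h2 B hbs0).2, horder_neg] at m4
  rw [horder_neg, ← sub_eq_add_neg] at m2
  have haM := hK a ha
  rw [← hA] at haM
  -- at least one of `A + B`, `A - B` has the order of `A` or `B`
  have key : (A + B).order = A.order ∨ (A + B).order = B.order ∨
      (A - B).order = A.order ∨ (A - B).order = B.order := by omega
  obtain h | h | h | h := key
  · rwa [h]
  · rwa [h]
  · rw [h] at hnorm; exact (Int.dvd_add_left haM).1 hnorm
  · rw [h] at hnorm; exact (Int.dvd_add_left hbs).1 hnorm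

/-- If `M` divides the orders of all elements of `K`, and `T` of order `-1` has degree less than
`2 * M` over `K`, then a square root of an element of `K` that lies in `K(T)` and has order divisible by
`M` already lies in `K`: otherwise `T` would have degree at least `M` over the quadratic field `K(s)`. -/
lemma no_quadratic {K : Type*} [Field K] [Algebra K (LaurentSeries ℂ)] (M : ℕ)
    (T : LaurentSeries ℂ) (hT0 : T ≠ 0) (hT : T.order = -1)
    (hK : ∀ c : K, c ≠ 0 → (M : ℤ) ∣ (algebraMap K (LaurentSeries ℂ) c).order)
    (f : K[X]) (hf : f ≠ 0) (hroot : aeval T f = 0) (hM : f.natDegree < 2 * M)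
    (g : K[X]) (c : K) (hgc : aeval T g ^ 2 = algebraMap K _ c)
    (hs : (M : ℤ) ∣ (aeval T g).order) : ∃ c' : K, aeval T g = algebraMap K _ c' := by
  classical
  by_contra! hcon
  set s := aeval T g with hsdef
  have hItg : IsIntegral K T := by
    rw [← isAlgebraic_iff_isIntegral]; exact ⟨f, hf, hroot⟩
  have hfin : FiniteDimensional K (IntermediateField.adjoin K {T}) :=
    IntermediateField.adjoin.finiteDimensional hItg
  have hrank : Module.finrank K (IntermediateField.adjoin K {T}) < 2 * M := by
    rw [IntermediateField.adjoin.finrank hItg]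
    exact lt_of_le_of_lt (natDegree_le_of_dvd (minpoly.dvd _ _ hroot) hf) hM
  have hTm : T ∈ IntermediateField.adjoin K {T} := IntermediateField.mem_adjoin_simple_self K T
  have hsm : s ∈ IntermediateField.adjoin K {T} := by
    have : s = algebraMap (IntermediateField.adjoin K {T}) _ (aeval (⟨T, hTm⟩ : IntermediateField.adjoin K {T}) g) := by
      rw [← aeval_algebraMap_apply]; rfl
    rw [this]; exact Subtype.property _
  let v : Fin M ⊕ Fin M → IntermediateField.adjoin K {T} :=
    Sum.elim (fun i => ⟨T, hTm⟩ ^ (i : ℕ)) (fun i => ⟨s, hsm⟩ * ⟨T, hTm⟩ ^ (i : ℕ))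
  have hdep : ¬ LinearIndependent K v := by
    intro h
    have := h.fintype_card_le_finrank
    simp at this
    omega
  rw [Fintype.not_linearIndependent_iff] at hdep
  obtain ⟨w, hw, i₀, hi₀⟩ := hdep
  rw [Fintype.sum_sum_type, ← Finset.sum_add_distrib] at hw
  let a : ℕ → K := fun i => if h : i < M then w (Sum.inl ⟨i, h⟩) else 0
  let b : ℕ → K := fun i => if h : i < M then w (Sum.inr ⟨i, h⟩) else 0
  have hsum : ∑ i ∈ Finset.range M, (algebraMap K _ (a i) + algebraMap K _ (b i) * s) * T ^ i = 0 := by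
    rw [Finset.sum_range]
    have := congrArg (algebraMap (IntermediateField.adjoin K {T}) (LaurentSeries ℂ)) hw
    rw [map_zero, map_sum] at this
    rw [← this]
    refine Finset.sum_congr rfl fun i _ => ?_
    simp only [a, b, v, i.2, dif_pos, Sum.elim_inl, Sum.elim_inr, map_add, Algebra.smul_def,
      map_mul, map_pow]
    change _ = algebraMap K (LaurentSeries ℂ) _ * T ^ (i : ℕ) + algebraMap K (LaurentSeries ℂ) _ * (s * T ^ (i : ℕ))
    ring
  have hzero := powers_independent M T hT0 hT _ (fun i _ h =>
    order_quadratic M hK s hs c hgc hcon (a i) (b i) h) hsum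
  have hab : ∀ i < M, a i = 0 ∧ b i = 0 := by
    intro i hi
    have h := hzero i hi
    have hb : b i = 0 := by
      by_contra hb
      apply hcon (-a i / b i)
      have hb' : algebraMap K (LaurentSeries ℂ) (b i) ≠ 0 := by simpa using hb
      rw [map_div₀, eq_div_iff hb', map_neg]
      linear_combination h
    rw [hb] at h
    simp at h
    exact ⟨h, hb⟩
  apply hi₀
  obtain i | i := i₀
  · have := (hab i i.2).1
    simpa [a] using this
  · have := (hab i i.2).2
    simpa [b] using this

/-! ### Places at infinity of the critical curve -/

/-- The uniformizer `u` of `ℂ((u))`. -/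
def uu : LaurentSeries ℂ := HahnSeries.single (1 : ℤ) (1 : ℂ)
/-- The element `T = 1/u` of `ℂ((u))`. -/
def tt : LaurentSeries ℂ := HahnSeries.single (-1 : ℤ) (1 : ℂ)

lemma uu_ne_zero : uu ≠ 0 := by simp [uu]
lemma tt_ne_zero : tt ≠ 0 := by simp [tt]
lemma uu_order : uu.order = 1 := HahnSeries.order_single one_ne_zero
lemma tt_order : tt.order = -1 := HahnSeries.order_single one_ne_zero
lemma uu_mul_tt : uu * tt = 1 := by
  rw [uu, tt, HahnSeries.single_mul_single]; simp

/-- The embedding `ℚ → ℂ((u))`. -/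
def qL : ℚ →+* LaurentSeries ℂ := (HahnSeries.C).comp (algebraMap ℚ ℂ)

/-- Multiplying a polynomial in `T = 1/u` of degree at most `D` by `u ^ D` gives a power series. -/
lemma exists_rev (D : ℕ) (p : ℚ[X]) (hp : p.natDegree ≤ D) : ∃ r : PowerSeries ℂ,
    HahnSeries.ofPowerSeries ℤ ℂ r = uu ^ D * eval₂ qL tt p ∧
      PowerSeries.constantCoeff r = algebraMap ℚ ℂ (p.coeff D) := by
  refine ⟨∑ i ∈ Finset.range (D + 1), PowerSeries.C (algebraMap ℚ ℂ (p.coeff i)) * PowerSeries.X ^ (D - i), ?_, ?_⟩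
  · rw [eval₂_eq_sum_range' _ (Nat.lt_succ_of_le hp), map_sum, Finset.mul_sum]
    refine Finset.sum_congr rfl fun i hi => ?_
    have hi : i ≤ D := by simpa [Nat.lt_succ_iff] using hi
    have e : uu ^ D * tt ^ i = uu ^ (D - i) := by
      conv_lhs => rw [← Nat.sub_add_cancel hi, pow_add, mul_assoc, ← mul_pow, uu_mul_tt, one_pow, mul_one]
    rw [mul_left_comm, e, map_mul, map_pow, HahnSeries.ofPowerSeries_X, HahnSeries.ofPowerSeries_C]
    rfl
  · rw [map_sum, Finset.sum_eq_single D]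
    · simp
    · intro i hi hne
      have hi : i < D := by
        have : i < D + 1 := by simpa using hi
        omega
      rw [map_mul, map_pow, PowerSeries.constantCoeff_X, zero_pow (by omega), mul_zero]
    · simp

lemma order_ofPowerSeries (r : PowerSeries ℂ) (hr : PowerSeries.constantCoeff r ≠ 0) :
    HahnSeries.ofPowerSeries ℤ ℂ r ≠ 0 ∧ (HahnSeries.ofPowerSeries ℤ ℂ r).order = 0 := by
  have hu : IsUnit r := PowerSeries.isUnit_iff_constantCoeff.2 (isUnit_iff_ne_zero.2 hr)
  have hc : (HahnSeries.ofPowerSeries ℤ ℂ r).coeff 0 = PowerSeries.constantCoeff r := by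
    have := HahnSeries.ofPowerSeries_apply_coeff (Γ := ℤ) r 0
    simpa using this
  have h0 : HahnSeries.ofPowerSeries ℤ ℂ r ≠ 0 := by
    intro h; rw [h] at hc; exact hr (by simpa using hc.symm)
  refine ⟨h0, le_antisymm (HahnSeries.order_le_of_coeff_ne_zero (by rwa [hc])) ?_⟩
  by_contra! hlt
  have h1 := (HahnSeries.coeff_order_eq_zero (x := HahnSeries.ofPowerSeries ℤ ℂ r)).not.2 h0
  apply h1
  rw [PowerSeries.coeff_coe, if_pos hlt]

/-- A nondegenerate critical point `κ` of the reduction of a rescaling of `F` lifts to a critical point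
`Y` of `F` in `ℂ((u))`, and the order of the critical value `F(Y)` is determined by the scaling. -/
lemma exists_place (Φ : (PowerSeries ℂ)[X]) (F : (LaurentSeries ℂ)[X]) (a : ℕ) (s : LaurentSeries ℂ)
    (hs : s ≠ 0)
    (hΦ : Φ.map (HahnSeries.ofPowerSeries ℤ ℂ) = C (uu ^ a) * F.comp (C s * X)) (κ : ℂ)
    (h0 : (Φ.map PowerSeries.constantCoeff).eval κ ≠ 0)
    (h1 : (derivative (Φ.map PowerSeries.constantCoeff)).eval κ = 0)
    (h2 : (derivative (derivative (Φ.map PowerSeries.constantCoeff))).eval κ ≠ 0) :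
    ∃ Y : LaurentSeries ℂ, (derivative F).eval Y = 0 ∧ F.eval Y ≠ 0 ∧ (F.eval Y).order = -a := by
  have hev : ∀ (g : (PowerSeries ℂ)[X]) (y : PowerSeries ℂ), PowerSeries.constantCoeff y = κ →
      PowerSeries.constantCoeff (g.eval y) = (g.map PowerSeries.constantCoeff).eval κ := by
    intro g y h
    rw [← h, eval_map_apply]
  obtain ⟨y, hy, hyκ⟩ := hensel_powerSeries (derivative Φ) κ
    (by rw [hev _ _ (by simp), ← derivative_map, h1])
    (by rw [hev _ _ (by simp), ← derivative_map, ← derivative_map]; exact h2)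
  set y' := HahnSeries.ofPowerSeries ℤ ℂ y with hy'
  have hu : uu ^ a ≠ 0 := pow_ne_zero _ uu_ne_zero
  refine ⟨s * y', ?_, ?_⟩
  · have e := congrArg (fun p => (derivative p).eval y') hΦ
    simp only [derivative_map, eval_map_apply, hy', hy, map_zero] at e
    simp only [← hy', derivative_mul, derivative_C, derivative_comp, derivative_X, zero_mul, zero_add,
      eval_mul, eval_C, eval_comp, eval_X, mul_one] at e
    have := (mul_eq_zero.1 e.symm).resolve_left hu
    exact (mul_eq_zero.1 this).resolve_left hs
  · have e := congrArg (fun p => p.eval y') hΦ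
    simp only [eval_map_apply, hy'] at e
    simp only [← hy', eval_mul, eval_C, eval_comp, eval_X] at e
    obtain ⟨h3, h4⟩ := order_ofPowerSeries (Φ.eval y) (by rw [hev _ _ hyκ]; exact h0)
    rw [e] at h3 h4
    have h5 : F.eval (s * y') ≠ 0 := right_ne_zero_of_mul h3
    refine ⟨h5, ?_⟩
    rw [HahnSeries.order_mul hu h5, order_pow' _ uu_ne_zero, uu_order] at h4
    linarith

/-- The embedding `ℚ[T] → ℂ((u))`, `T ↦ 1/u`. -/
def psiL : ℚ[X] →+* LaurentSeries ℂ := eval₂RingHom qL tt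

lemma map_psi_eq (F : ℚ[X][X]) (n : ℕ) (hF : F.Monic) (hn : F.natDegree = n) :
    F.map psiL = X ^ n + ∑ i ∈ Finset.range n, C (psiL (F.coeff i)) * X ^ i := by
  conv_lhs => rw [hF.as_sum, hn]
  simp [Polynomial.map_sum]

/-- The rescaling `Y = T ^ D Z` of a polynomial of degree `n`. -/
lemma place_alg {L : Type*} [Field L] (u t : L) (hut : u * t = 1) (a : ℕ → L) (n D : ℕ) :
    C (u ^ (D * n)) * (X ^ n + ∑ i ∈ Finset.range n, C (a i) * X ^ i).comp (C (t ^ D) * X) =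
      X ^ n + ∑ i ∈ Finset.range n, C (u ^ (D * (n - 1 - i)) * (u ^ D * a i)) * X ^ i := by
  have hut : ∀ a b : ℕ, b ≤ a → u ^ a * t ^ b = u ^ (a - b) := by
    intro a b h
    conv_lhs => rw [← Nat.sub_add_cancel h, pow_add, mul_assoc, ← mul_pow, hut, one_pow, mul_one]
  simp only [add_comp, X_pow_comp, Polynomial.sum_comp, mul_comp, C_comp]
  rw [mul_add, Finset.mul_sum]
  refine congrArg₂ (· + ·) ?_ (Finset.sum_congr rfl fun i hi => ?_)
  · rw [mul_pow, ← mul_assoc, ← C_pow, ← C_mul, ← pow_mul, hut _ _ le_rfl]; simp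
  · have hi : i < n := by simpa using hi
    rw [mul_pow, ← C_pow, ← mul_assoc (C (a i)), ← C_mul, ← mul_assoc, ← C_mul, ← pow_mul]
    refine congrArg₂ (· * ·) (congrArg C ?_) rfl
    have e := hut (D * n) (D * i) (Nat.mul_le_mul_left _ hi.le)
    have e2 : D * n - D * i = D * (n - 1 - i) + D := by
      rw [← Nat.mul_sub, show n - i = n - 1 - i + 1 by omega]; ring
    rw [mul_left_comm (u ^ (D * n)), e, e2, pow_add]; ring

/-- A point of the critical curve `F_Y = 0` over `T = ∞` at which `Y` has a pole of order `D`. After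
rescaling by `T ^ D`, `F` reduces to `Z ^ (m + 3) + α Z ^ (m + 2)`, with critical point
`-(m + 2) α / (m + 3)`. -/
lemma exists_place_two (F : ℚ[X][X]) (m D : ℕ) (hD : 1 ≤ D) (hF : F.Monic)
    (hn : F.natDegree = m + 3) (hFD : ∀ i, (F.coeff i).natDegree ≤ D)
    (hα : (F.coeff (m + 2)).coeff D ≠ 0) :
    ∃ Y : LaurentSeries ℂ, (derivative (F.map psiL)).eval Y = 0 ∧ (F.map psiL).eval Y ≠ 0 ∧
      ((F.map psiL).eval Y).order = -((D * (m + 3) : ℕ) : ℤ) := by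
  choose r hr1 hr2 using fun i => exists_rev D (F.coeff i) (hFD i)
  set α : ℂ := algebraMap ℚ ℂ ((F.coeff (m + 2)).coeff D) with hαdef
  have hα' : α ≠ 0 := by simpa [hαdef] using hα
  have hm3 : ((m : ℂ) + 3) ≠ 0 := by exact_mod_cast Nat.succ_ne_zero (m + 2)
  have hm2 : ((m : ℂ) + 2) ≠ 0 := by exact_mod_cast Nat.succ_ne_zero (m + 1)
  set κ : ℂ := -((m : ℂ) + 2) * α / (m + 3) with hκ
  have hκ0 : κ ≠ 0 := by rw [hκ]; exact div_ne_zero (mul_ne_zero (neg_ne_zero.2 hm2) hα') hm3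
  have hκ' : ((m : ℂ) + 3) * κ = -((m : ℂ) + 2) * α := by rw [hκ]; field_simp
  let Φ : (PowerSeries ℂ)[X] := X ^ (m + 3) +
    ∑ i ∈ Finset.range (m + 3), C (PowerSeries.X ^ (D * (m + 2 - i)) * r i) * X ^ i
  have hΦ0 : Φ.map PowerSeries.constantCoeff = X ^ (m + 3) + C α * X ^ (m + 2) := by
    simp only [Φ, Polynomial.map_add, Polynomial.map_pow, map_X, Polynomial.map_sum, Polynomial.map_mul, map_C]
    congr 1
    rw [Finset.sum_eq_single (m + 2)]
    · simp [hr2, hαdef]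
    · intro i hi hne
      have hi : i < m + 3 := by simpa using hi
      rw [map_mul, map_pow, PowerSeries.constantCoeff_X, zero_pow, zero_mul, C_0, zero_mul]
      exact Nat.mul_ne_zero (by omega) (by omega)
    · simp
  refine exists_place Φ (F.map psiL) (D * (m + 3)) (tt ^ D) (pow_ne_zero _ tt_ne_zero) ?_ κ ?_ ?_ ?_
  · rw [map_psi_eq F _ hF hn]
    refine Eq.trans ?_ (place_alg uu tt uu_mul_tt (fun i => psiL (F.coeff i)) (m + 3) D).symm
    simp only [Φ, Polynomial.map_add, Polynomial.map_pow, map_X, Polynomial.map_sum, Polynomial.map_mul, map_C]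
    refine congrArg₂ (· + ·) rfl (Finset.sum_congr rfl fun i hi => ?_)
    rw [map_mul, map_pow, HahnSeries.ofPowerSeries_X, hr1]
    rfl
  · rw [hΦ0]
    simp only [eval_add, eval_pow, eval_X, eval_mul, eval_C]
    intro h
    have h' : κ ^ (m + 2) * (κ + α) = 0 := by linear_combination h
    have h2 := (mul_eq_zero.1 h').resolve_left (pow_ne_zero _ hκ0)
    apply hα'
    linear_combination ((m : ℂ) + 3) * h2 - hκ'
  · rw [hΦ0]
    simp only [derivative_add, derivative_X_pow, derivative_C_mul, eval_add, eval_pow, eval_X, eval_mul, eval_C]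
    push_cast
    linear_combination κ ^ (m + 1) * hκ'
  · rw [hΦ0]
    simp only [derivative_add, derivative_X_pow, derivative_C_mul, eval_add, eval_pow, eval_X, eval_mul, eval_C]
    simp only [show m + 3 - 1 = m + 2 from rfl, show m + 2 - 1 = m + 1 from rfl, show m + 1 - 1 = m from rfl]
    push_cast
    intro h
    have h_lead : κ ^ m * (((m : ℂ) + 2) * α) = 0 := by
      linear_combination -h + κ ^ m * ((m : ℂ) + 2) * hκ'
    exact mul_ne_zero (pow_ne_zero _ hκ0) (mul_ne_zero hm2 hα') h_lead

/-- A point of the critical curve `F_Y = 0` over `T = ∞` at which `Y` is finite: there `F / T ^ D`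
reduces to `q`, and `Y` lifts a root of `q'`. -/
lemma exists_place_one (F : ℚ[X][X]) (n D : ℕ) (hD : 1 ≤ D) (hF : F.Monic)
    (hn : F.natDegree = n) (hFD : ∀ i, (F.coeff i).natDegree ≤ D) (q : ℚ[X])
    (hq : ∀ i, (F.coeff i).coeff D = q.coeff i) (hqi : Irreducible q) (hq'i : Irreducible (derivative q)) :
    ∃ Y : LaurentSeries ℂ, (derivative (F.map psiL)).eval Y = 0 ∧ (F.map psiL).eval Y ≠ 0 ∧
      ((F.map psiL).eval Y).order = -(D : ℤ) := by
  choose r hr1 hr2 using fun i => exists_rev D (F.coeff i) (hFD i)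
  obtain ⟨η, hη⟩ := IsAlgClosed.exists_eval₂_eq_zero (algebraMap ℚ ℂ) (derivative q)
    (by
      intro h
      have := hq'i.natDegree_pos
      rw [natDegree_eq_zero_iff_degree_le_zero.2 h.le] at this
      exact absurd this (lt_irrefl 0))
  have hsep1 := hqi.separable
  have hsep2 := hq'i.separable
  have cop : ∀ a b : ℚ[X], IsCoprime a b → eval₂ (algebraMap ℚ ℂ) η b = 0 → eval₂ (algebraMap ℚ ℂ) η a ≠ 0 := by
    rintro a b ⟨x, y, h⟩ hb ha
    have := congrArg (eval₂ (algebraMap ℚ ℂ) η) h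
    simp [eval₂_add, eval₂_mul, ha, hb] at this
  have hqn : ∀ i, n ≤ i → q.coeff i = 0 := by
    intro i hi
    rw [← hq]
    obtain rfl | hlt := hi.eq_or_lt
    · have : F.coeff n = 1 := by rw [← hn]; exact hF
      rw [this, coeff_one, if_neg (by omega)]
    · rw [coeff_eq_zero_of_natDegree_lt (p := F) (by omega), coeff_zero]
  let Φ : (PowerSeries ℂ)[X] := C (PowerSeries.X ^ D) * X ^ n +
    ∑ i ∈ Finset.range n, C (r i) * X ^ i
  have hΦ0 : Φ.map PowerSeries.constantCoeff = q.map (algebraMap ℚ ℂ) := by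
    simp only [Φ, Polynomial.map_add, Polynomial.map_pow, map_X, Polynomial.map_sum, Polynomial.map_mul, map_C, hr2, hq]
    rw [map_pow, PowerSeries.constantCoeff_X, zero_pow (by omega), C_0, zero_mul, zero_add]
    conv_rhs => rw [as_sum_range_C_mul_X_pow' (n := n) q (by
      by_contra! h
      have h1 := hqn _ h
      rw [coeff_natDegree, leadingCoeff_eq_zero] at h1
      exact hqi.ne_zero h1)]
    simp [Polynomial.map_sum]
  refine exists_place Φ (F.map psiL) D 1 one_ne_zero ?_ η ?_ ?_ ?_
  · rw [map_psi_eq F _ hF hn]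
    simp only [Φ, Polynomial.map_add, Polynomial.map_pow, map_X, Polynomial.map_sum, Polynomial.map_mul, map_C,
      C_1, one_mul, comp_X, mul_add, Finset.mul_sum]
    refine congrArg₂ (· + ·) ?_ ?_
    · rw [map_pow, HahnSeries.ofPowerSeries_X]; rfl
    · refine Finset.sum_congr rfl fun i hi => ?_
      rw [hr1, C_mul, mul_assoc]; rfl
  · rw [hΦ0, eval_map]
    exact cop _ _ hsep1 hη
  · rw [hΦ0, derivative_map, eval_map]; exact hη
  · rw [hΦ0, derivative_map, derivative_map, eval_map]
    exact cop _ _ hsep2.symm hη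

/-! ### Discriminants along a one-parameter family -/

lemma order_eval₂ (t1 : LaurentSeries ℂ) (h0 : t1 ≠ 0) (e : ℤ) (he : 0 < e) (ht : t1.order = -e)
    (p : ℚ[X]) (hp : p ≠ 0) :
    eval₂ qL t1 p ≠ 0 ∧ (eval₂ qL t1 p).order = -e * p.natDegree := by
  have hq : ∀ c : ℚ, c ≠ 0 → qL c ≠ 0 ∧ (qL c).order = 0 := by
    intro c hc
    have : algebraMap ℚ ℂ c ≠ 0 := by simpa using hc
    refine ⟨?_, ?_⟩
    · exact (_root_.map_ne_zero qL).2 hc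
    · change (HahnSeries.C (algebraMap ℚ ℂ c)).order = 0
      rw [HahnSeries.order_C]
  have hord : ∀ i : ℕ, p.coeff i ≠ 0 → qL (p.coeff i) * t1 ^ i ≠ 0 ∧
      (qL (p.coeff i) * t1 ^ i).order = -e * i := by
    intro i hi
    refine ⟨mul_ne_zero (hq _ hi).1 (pow_ne_zero _ h0), ?_⟩
    rw [HahnSeries.order_mul (hq _ hi).1 (pow_ne_zero _ h0), (hq _ hi).2, order_pow' _ h0, ht]; ring
  have hl : p.coeff p.natDegree ≠ 0 := by simpa using hp
  rw [eval₂_eq_sum_range]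
  have := order_sum (Finset.range (p.natDegree + 1)) (fun i => qL (p.coeff i) * t1 ^ i) p.natDegree
    (by simp) (hord _ hl).1 (fun i hi hne => by
      by_cases hc : p.coeff i = 0
      · left; simp [hc]
      · right
        rw [(hord _ hl).2, (hord _ hc).2]
        have : (i : ℤ) < p.natDegree := by
          have : i < p.natDegree + 1 := by simpa using hi
          omega
        nlinarith)
  rw [(hord _ hl).2] at this
  exact this

/-- An element `t1` of `ℂ((u))` of order `-e < 0` defines an embedding of `ℚ(t)` that multiplies orders
at infinity by `e`. -/
lemma exists_ratFunc_hom (t1 : LaurentSeries ℂ) (h0 : t1 ≠ 0) (e : ℤ) (he : 0 < e)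
    (ht : t1.order = -e) : ∃ φ : RatFunc ℚ →+* LaurentSeries ℂ,
      (∀ p : ℚ[X], φ (algebraMap ℚ[X] (RatFunc ℚ) p) = eval₂ qL t1 p) ∧
      ∀ c : RatFunc ℚ, c ≠ 0 → (φ c).order = -e * c.intDegree := by
  have hinj : Function.Injective (eval₂RingHom qL t1) := by
    rw [injective_iff_map_eq_zero]
    intro p hp
    by_contra h
    exact (order_eval₂ t1 h0 e he ht p h).1 hp
  refine ⟨IsFractionRing.lift hinj, fun p => IsFractionRing.lift_algebraMap hinj p, fun c hc => ?_⟩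
  set φ : RatFunc ℚ →+* LaurentSeries ℂ := IsFractionRing.lift hinj
  have hφ : ∀ p : ℚ[X], φ (algebraMap ℚ[X] (RatFunc ℚ) p) = eval₂ qL t1 p :=
    fun p => IsFractionRing.lift_algebraMap hinj p
  have hnum : c.num ≠ 0 := RatFunc.num_ne_zero hc
  have e1 : φ c * eval₂ qL t1 c.denom = eval₂ qL t1 c.num := by
    rw [← hφ, ← hφ, ← map_mul]
    congr 1
    conv_lhs => enter [1]; rw [← RatFunc.num_div_denom c]
    rw [div_mul_cancel₀]
    simpa using c.denom_ne_zero
  have h1 := order_eval₂ t1 h0 e he ht c.num hnum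
  have h2 := order_eval₂ t1 h0 e he ht c.denom c.denom_ne_zero
  have hφc : φ c ≠ 0 := by simpa using hc
  have e2 := congrArg HahnSeries.order e1
  rw [HahnSeries.order_mul hφc h2.1, h1.2, h2.2] at e2
  rw [RatFunc.intDegree]
  linear_combination e2

/-- The generic member `F + t T ^ j` of the family obtained by varying one coefficient. It is a
polynomial in `Y`, `T`, `t`, from the outermost variable to the innermost. -/
def famPoly {A : Type*} [CommRing A] (F : A[X][X]) (j : ℕ) : A[X][X][X] :=
  F.map (mapRingHom C) + C (C X * X ^ j)

/-- The discriminant of the generic member, as a polynomial in `T` over `A[t]`. -/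
def famDisc {A : Type*} [CommRing A] (F : A[X][X]) (n j : ℕ) : A[X][X] := discOf (famPoly F j) n

/-- Evaluation of a polynomial in `T` over `A[t]`. -/
def ev {A B : Type*} [CommRing A] [CommRing B] (c : A →+* B) (t T : B) : A[X][X] →+* B :=
  eval₂RingHom (eval₂RingHom c t) T

section
variable {A B B' : Type*} [CommRing A] [CommRing B] [CommRing B']

lemma ev_comp (φ : B →+* B') (c : A →+* B) (t T : B) (g : A[X][X]) :
    φ (ev c t T g) = ev (φ.comp c) (φ t) (φ T) g := by
  have : φ.comp (ev c t T) = ev (φ.comp c) (φ t) (φ T) := by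
    refine Polynomial.ringHom_ext' (Polynomial.ringHom_ext ?_ ?_) ?_ <;> simp [ev]
  exact congrArg (fun f => f g) this

lemma ev_swap (c : A →+* B) (t T : B) (g : A[X][X]) :
    ev c T t (Bivariate.swap g) = ev c t T g := by
  have : (ev c T t).comp (Bivariate.swap : A[X][X] ≃ₐ[A] A[X][X]).toAlgHom.toRingHom = ev c t T := by
    refine Polynomial.ringHom_ext' (Polynomial.ringHom_ext ?_ ?_) ?_ <;>
      simp [ev, Bivariate.swap_C_C, Bivariate.swap_X, Bivariate.swap_Y]
  exact congrArg (fun f => f g) this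

lemma famPoly_map_ev (F : A[X][X]) (j : ℕ) (c : A →+* B) (t T : B) :
    (famPoly F j).map (ev c t T) = F.map (eval₂RingHom c T) + C (t * T ^ j) := by
  rw [famPoly, Polynomial.map_add, Polynomial.map_map, map_C]
  congr 2
  · refine Polynomial.ringHom_ext ?_ ?_ <;> simp [ev]
  · simp [ev]

lemma ev_famDisc (F : A[X][X]) (n j : ℕ) (c : A →+* B) (t T : B) :
    ev c t T (famDisc F n j) = discOf (F.map (eval₂RingHom c T) + C (t * T ^ j)) n := by
  rw [famDisc, ← discOf_map, famPoly_map_ev]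

lemma famDisc_map (F : A[X][X]) (n j : ℕ) (φ : A →+* B) :
    (famDisc F n j).map (mapRingHom φ) = famDisc (F.map (mapRingHom φ)) n j := by
  rw [← coe_mapRingHom, famDisc, ← discOf_map, famDisc, coe_mapRingHom]
  congr 1
  rw [famPoly, famPoly, Polynomial.map_add, Polynomial.map_map, Polynomial.map_map, map_C]
  congr 2
  · refine Polynomial.ringHom_ext ?_ ?_ <;> simp
  · simp

lemma famDisc_eval (F : A[X][X]) (n j : ℕ) (t0 : A) :
    (famDisc F n j).map (evalRingHom t0) = discOf (F + C (C t0 * X ^ j)) n := by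
  rw [← coe_mapRingHom, famDisc, ← discOf_map]
  congr 1
  rw [famPoly, Polynomial.map_add, Polynomial.map_map, map_C]
  congr 2
  · conv_rhs => rw [← Polynomial.map_id (p := F)]
    congr 1
    refine Polynomial.ringHom_ext ?_ ?_ <;> simp
  · simp
end

section

/-- Genericity conditions on `F ∈ ℚ[T][Y]`, of degree `n = m + 3`, under which varying its coefficient
of `T ^ (D - 1) Y ^ 0` gives an irreducible discriminant whose root field has no quadratic subextension:
the polynomial `q` of the coefficients of `T ^ D`, its derivative, and the derivative of `F(0, Y)` are
irreducible, and `F(0, Y)` is separable if `D ≥ 2`. -/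
structure FamHyp (F : ℚ[X][X]) (m D : ℕ) (q : ℚ[X]) : Prop where
  monic : F.Monic
  deg : F.natDegree = m + 3
  one_le : 1 ≤ D
  coeff_le : ∀ i, (F.coeff i).natDegree ≤ D
  top : ∀ i, (F.coeff i).coeff D = q.coeff i
  qirr : Irreducible q
  qdeg : q.natDegree = m + 2
  qdirr : Irreducible (derivative q)
  hdirr : Irreducible (derivative (F.map (evalRingHom 0)))
  hsep : 2 ≤ D → IsCoprime (F.map (evalRingHom 0)) (derivative (F.map (evalRingHom 0)))

lemma fam_natDegree {A B : Type*} [CommRing A] [CommRing B] [Nontrivial B] (F : A[X][X]) (n : ℕ) (hn : 1 ≤ n)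
    (hF : F.Monic) (hd : F.natDegree = n) (φ : A[X] →+* B) (b : B) :
    (F.map φ + C b).Monic ∧ (F.map φ + C b).natDegree = n := by
  have h1 : (F.map φ).natDegree = n := by rw [hF.natDegree_map, hd]
  have h2 : (F.map φ + C b).natDegree = n := by rw [natDegree_add_C, h1]
  refine ⟨?_, h2⟩
  rw [Monic, leadingCoeff, h2, coeff_add, coeff_C, if_neg (by omega), add_zero, ← h1]
  exact hF.map φ

lemma disc_zero_of_root {K : Type*} [Field K] [CharZero K] (p : K[X]) (n : ℕ) (hn : 1 ≤ n)
    (hp : p.natDegree = n) (y : K) (h1 : p.eval y = 0) (h2 : (derivative p).eval y = 0) :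
    discOf p n = 0 := by
  rw [discOf_eq_zero_iff p n hn hp]
  rintro ⟨a, b, h⟩
  have := congrArg (eval y) h
  simp [h1, h2] at this

lemma root_of_disc_zero {K : Type*} [Field K] [CharZero K] [IsAlgClosed K] (p : K[X]) (n : ℕ) (hn : 1 ≤ n)
    (hp : p.natDegree = n) (h : discOf p n = 0) : ∃ y, p.eval y = 0 ∧ (derivative p).eval y = 0 := by
  rw [discOf_eq_zero_iff p n hn hp] at h
  by_contra! hcon
  apply h
  rw [Polynomial.isCoprime_iff_aeval_ne_zero_of_isAlgClosed K K]
  intro a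
  by_cases h0 : p.eval a = 0
  · right; simpa using hcon a h0
  · left; simpa using h0

variable {F : ℚ[X][X]} {m D : ℕ} {q : ℚ[X]}

/-- The generic discriminant has degree `2 (n - 1) D` in `T`, with leading coefficient free of `t`. -/
lemma famDisc_lead (h : FamHyp F m D q) :
    (famDisc F (m + 3) (D - 1)).natDegree ≤ 2 * (m + 2) * D ∧ ∃ c : ℚ, c ≠ 0 ∧
      (famDisc F (m + 3) (D - 1)).coeff (2 * (m + 2) * D) = C c := by
  have hD := h.one_le
  have hcoeff : ∀ i, (famPoly F (D - 1)).coeff i = (F.coeff i).map C + if i = 0 then C X * X ^ (D - 1) else 0 := by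
    intro i
    rw [famPoly, coeff_add, coeff_map, coeff_C, coe_mapRingHom]
  obtain ⟨h1, ε, hε, h2⟩ := disc_top (famPoly F (D - 1)) (q.map C) (m + 2) D (by omega) hD
    (by
      rw [famPoly, natDegree_add_C]
      exact natDegree_map_le.trans h.deg.le)
    (by
      rw [hcoeff, if_neg (by omega), add_zero]
      have : F.coeff (m + 2 + 1) = 1 := by rw [show m + 2 + 1 = F.natDegree from h.deg.symm]; exact h.monic
      rw [this, Polynomial.map_one])
    (by
      intro i
      rw [hcoeff]
      refine (natDegree_add_le _ _).trans (max_le (natDegree_map_le.trans (h.coeff_le i)) ?_)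
      split_ifs
      · exact (natDegree_C_mul_X_pow_le _ _).trans (by omega)
      · simp)
    (by
      intro i
      rw [hcoeff, coeff_add, coeff_map, coeff_map, h.top i]
      split_ifs
      · rw [coeff_C_mul, coeff_X_pow, if_neg (by omega)]; simp
      · simp)
  refine ⟨h1, ?_⟩
  rw [derivative_map, coeff_map, resultant_map_map] at h2
  have hne : q.coeff (m + 2) * resultant q (derivative q) (m + 2) (m + 2 - 1) ≠ 0 := by
    refine mul_ne_zero ?_ ?_
    · rw [← h.qdeg]; simpa using h.qirr.ne_zero
    · have := (resultant_eq_zero_iff (f := q) (g := derivative q))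
      rw [natDegree_derivative, h.qdeg] at this
      rw [Ne, this]
      rintro ⟨-, h'⟩
      exact h' h.qirr.separable
  obtain rfl | rfl := hε
  · exact ⟨_, hne, by rw [famDisc]; rw [h2]; simp⟩
  · exact ⟨_, neg_ne_zero.2 hne, by rw [famDisc]; rw [h2]; simp⟩

/-- The critical curve `F_Y = 0` is irreducible, because its fibre over `T = 0` is. -/
lemma fam_derivative_irreducible (h : FamHyp F m D q) :
    Irreducible ((derivative F).map (algebraMap ℚ[X] (RatFunc ℚ))) := by
  have hn0 : ((m : ℚ) + 3) ≠ 0 := by exact_mod_cast Nat.succ_ne_zero (m + 2)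
  set G : ℚ[X][X] := C (C ((m : ℚ) + 3)⁻¹) * derivative F with hG
  have hGd : (derivative F).natDegree ≤ m + 2 := by
    have := natDegree_derivative_le F; rw [h.deg] at this; omega
  have hGm : G.Monic := by
    refine monic_of_natDegree_le_of_coeff_eq_one (m + 2) (natDegree_C_mul_le _ _ |>.trans hGd) ?_
    have : F.coeff (m + 2 + 1) = 1 := by rw [show m + 2 + 1 = F.natDegree from h.deg.symm]; exact h.monic
    rw [hG, coeff_C_mul, coeff_derivative, this, one_mul]
    have : (((m + 2 : ℕ) : ℚ[X]) + 1) = C ((m : ℚ) + 3) := by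
      have : ((m : ℚ) + 3) = ((m + 3 : ℕ) : ℚ) := by push_cast; rfl
      rw [this, ← Polynomial.C_eq_natCast, ← map_one C, ← map_add]
      congr 1; push_cast; ring
    rw [this, ← C_mul, inv_mul_cancel₀ hn0, C_1]
  have hGi : Irreducible G := by
    refine Monic.irreducible_of_irreducible_map (evalRingHom 0) G hGm ?_
    rw [hG, Polynomial.map_mul, map_C]
    refine (irreducible_isUnit_mul ?_).2 ?_
    · simpa using hn0
    · rw [← derivative_map]; exact h.hdirr
  have h2 := (hGm.irreducible_iff_irreducible_map_fraction_map (K := RatFunc ℚ)).1 hGi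
  rw [hG, Polynomial.map_mul, map_C] at h2
  refine (irreducible_isUnit_mul ?_).1 h2
  refine IsUnit.map C (IsUnit.map _ (IsUnit.map C ?_))
  simpa using hn0

/-- The generic discriminant has no factor in `T` alone: for fixed `T ≠ 0` only finitely many `t` make
`F + t T ^ (D - 1)` inseparable in `Y`, and at `T = 0` either the same holds (`D = 1`) or `F(0, Y)` is
separable. -/
lemma fam_no_vertical (h : FamHyp F m D q) (p : ℚ[X]) (hp : p.natDegree ≠ 0)
    (hdvd : p.map C ∣ famDisc F (m + 3) (D - 1)) : False := by
  obtain ⟨T0, hT0⟩ := IsAlgClosed.exists_eval₂_eq_zero (algebraMap ℚ ℂ) p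
    (by intro h'; exact hp (natDegree_eq_zero_iff_degree_le_zero.2 h'.le))
  set F1 : ℂ[X] := F.map (eval₂RingHom (algebraMap ℚ ℂ) T0) with hF1
  have hz : ∀ z : ℂ, discOf (F1 + C (z * T0 ^ (D - 1))) (m + 3) = 0 := by
    intro z
    rw [hF1, ← ev_famDisc]
    obtain ⟨r, hr⟩ := hdvd
    rw [hr, map_mul]
    have : ev (algebraMap ℚ ℂ) z T0 (p.map C) = 0 := by
      rw [ev, coe_eval₂RingHom, eval₂_map]
      rw [← hT0]
      congr 1
      exact RingHom.ext_rat _ _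
    rw [this, zero_mul]
  have hdeg : ∀ b, (F1 + C b).natDegree = m + 3 := fun b =>
    (fam_natDegree F (m + 3) (by omega) h.monic h.deg _ b).2
  by_cases hT : T0 ^ (D - 1) = 0
  · have hT00 : T0 = 0 := by
      by_contra h0; exact pow_ne_zero _ h0 hT
    have hD2 : 2 ≤ D := by
      by_contra! h2
      rw [show D - 1 = 0 by omega] at hT
      simp at hT
    have := hz 0
    rw [zero_mul, discOf_eq_zero_iff _ _ (by omega) (hdeg 0)] at this
    apply this
    have e : F1 + C 0 = (F.map (evalRingHom 0)).map (algebraMap ℚ ℂ) := by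
      rw [C_0, add_zero, hF1, Polynomial.map_map]
      congr 1
      refine Polynomial.ringHom_ext ?_ ?_ <;> simp [hT00]
    rw [e, derivative_map]
    exact (isCoprime_map _).2 (h.hsep hD2)
  · have hF1' : derivative F1 ≠ 0 := by
      intro h0
      have h1 := hdeg 0
      rw [C_0, add_zero] at h1
      have := derivative_eq_zero.1 h0
      omega
    have hfin : Set.Finite {z : ℂ | ∃ y, (derivative F1).eval y = 0 ∧ z = -F1.eval y / T0 ^ (D - 1)} := by
      have : Set.Finite {y : ℂ | (derivative F1).eval y = 0} := by
        refine (derivative F1).roots.toFinset.finite_toSet.subset ?_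
        intro y hy
        simp only [Finset.mem_coe, Multiset.mem_toFinset, mem_roots hF1']
        exact hy
      refine (this.image fun y => -F1.eval y / T0 ^ (D - 1)).subset ?_
      rintro z ⟨y, hy, rfl⟩
      exact ⟨y, hy, rfl⟩
    obtain ⟨z, hzn⟩ := hfin.exists_notMem
    obtain ⟨y, hy1, hy2⟩ := root_of_disc_zero _ _ (by omega) (hdeg _) (hz z)
    apply hzn
    refine ⟨y, by rwa [derivative_add, derivative_C, add_zero] at hy2, ?_⟩
    rw [eval_add, eval_C] at hy1
    rw [eq_div_iff hT]
    linear_combination hy1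

/-- The critical curve `F_Y = 0` is irreducible and dominates the discriminant curve through
`t = -F(T, Y) / T ^ (D - 1)`, so a factor of the discriminant that involves `t` vanishes at every point
of it. -/
lemma fam_factor_vanishes (h : FamHyp F m D q) (g : ℚ[X][X])
    (hg : (Bivariate.swap g).natDegree ≠ 0) (hdvd : g ∣ famDisc F (m + 3) (D - 1))
    (Y : LaurentSeries ℂ) (hY : (derivative (F.map psiL)).eval Y = 0) :
    ev qL (-(F.map psiL).eval Y / tt ^ (D - 1)) tt g = 0 := by
  let K := RatFunc ℚ
  let E := AlgebraicClosure K
  let ι : ℚ[X] →+* E := (algebraMap K E).comp (algebraMap ℚ[X] K)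
  have hι : Function.Injective ι := (algebraMap K E).injective.comp (IsFractionRing.injective ℚ[X] K)
  have hcharE : CharZero E := charZero_of_injective_algebraMap (algebraMap K E).injective
  let T' : E := ι X
  have hT' : T' ≠ 0 := by
    intro h0
    exact X_ne_zero (hι (h0.trans (map_zero ι).symm))
  have hιev : ι = eval₂RingHom (ι.comp C) T' := by
    refine Polynomial.ringHom_ext (fun a => ?_) ?_
    · rw [coe_eval₂RingHom, eval₂_C]; rfl
    · simp [T']
  obtain ⟨t', ht'⟩ := IsAlgClosed.exists_root ((Bivariate.swap g).map ι) (by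
    intro h0
    have := natDegree_eq_zero_iff_degree_le_zero.2 h0.le
    rw [natDegree_map_eq_of_injective hι] at this
    exact hg this)
  have hg0 : ev (ι.comp C) t' T' g = 0 := by
    rw [← ev_swap, ev, ← hιev]
    rw [IsRoot, eval_map] at ht'
    exact ht'
  have hdisc : discOf (F.map ι + C (t' * T' ^ (D - 1))) (m + 3) = 0 := by
    have := ev_famDisc F (m + 3) (D - 1) (ι.comp C) t' T'
    rw [← hιev] at this
    rw [← this]
    obtain ⟨r, hr⟩ := hdvd
    rw [hr, map_mul, hg0, zero_mul]
  obtain ⟨η, hη1, hη2⟩ := root_of_disc_zero _ _ (by omega)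
    (fam_natDegree F (m + 3) (by omega) h.monic h.deg ι _).2 hdisc
  -- the factor along the graph `t = -F(T, Z) / T ^ (D - 1)`
  let a := algebraMap ℚ[X] K
  have haX : a X ≠ 0 := by
    intro h0
    exact X_ne_zero (IsFractionRing.injective ℚ[X] K (h0.trans (map_zero a).symm))
  let A : K[X] := ev ((C.comp a).comp C) (-(F.map a) * C ((a X ^ (D - 1))⁻¹)) (C (a X)) g
  have hAeval : ∀ {L : Type} [Field L] (φ : K →+* L) (y : L), (A.map φ).eval y =
      ev ((φ.comp a).comp C) (-(F.map (φ.comp a)).eval y / (φ (a X)) ^ (D - 1)) (φ (a X)) g := by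
    intro L _ φ y
    have := ev_comp ((evalRingHom y).comp (mapRingHom φ)) ((C.comp a).comp C)
      (-(F.map a) * C ((a X ^ (D - 1))⁻¹)) (C (a X)) g
    refine Eq.trans ?_ (this.trans ?_)
    · rfl
    · congr 1
      congr 1
      · ext; simp
      · simp [Polynomial.map_map, div_eq_mul_inv]
      · simp
  have hirr := fam_derivative_irreducible h
  have hdvdA : (derivative F).map a ∣ A := by
    have hn : ¬ IsCoprime ((derivative F).map a) A := by
      rintro ⟨x, y, hxy⟩
      have e := congrArg (fun p => (p.map (algebraMap K E)).eval η) hxy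
      simp only [Polynomial.map_add, Polynomial.map_mul, eval_add, eval_mul, Polynomial.map_map, hAeval,
        Polynomial.map_one, eval_one] at e
      have e1 : eval η ((derivative F).map ((algebraMap K E).comp a)) = 0 := by
        rw [derivative_add, derivative_C, add_zero, derivative_map] at hη2
        exact hη2
      have e2 : -eval η (F.map ((algebraMap K E).comp a)) / (algebraMap K E (a X)) ^ (D - 1) = t' := by
        rw [eval_add, eval_C] at hη1
        have : (algebraMap K E (a X)) ^ (D - 1) ≠ 0 := pow_ne_zero _ hT'
        rw [div_eq_iff this]
        change -eval η (F.map ι) = t' * T' ^ (D - 1)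
        linear_combination -hη1
      rw [e1, e2] at e
      have e3 : ev (((algebraMap K E).comp a).comp C) t' (algebraMap K E (a X)) g = 0 := hg0
      rw [e3] at e
      simp at e
    by_contra hnd
    exact hn ((hirr.coprime_iff_not_dvd).2 hnd)
  obtain ⟨φ, hφ, -⟩ := exists_ratFunc_hom tt tt_ne_zero 1 one_pos (by simpa using tt_order)
  have hφa : φ.comp a = psiL := by
    refine RingHom.ext fun p => ?_
    exact hφ p
  have hφX : φ (a X) = tt := by
    rw [hφ]; simp
  have hz : (A.map φ).eval Y = 0 := by
    obtain ⟨r, hr⟩ := hdvdA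
    rw [hr, Polynomial.map_mul, eval_mul, Polynomial.map_map, hφa, ← derivative_map, hY, zero_mul]
  rw [hAeval, hφa, hφX] at hz
  convert hz using 2
  have : qL = psiL.comp C := by ext; simp [psiL]
  rw [this]

end

section

variable {F : ℚ[X][X]} {m D : ℕ} {q : ℚ[X]}

lemma fam_t_order (f : LaurentSeries ℂ) (hf : f ≠ 0) (D : ℕ) (a : ℤ) (hfo : f.order = a) :
    -f / tt ^ (D - 1) ≠ 0 ∧ (-f / tt ^ (D - 1)).order = a + ((D - 1 : ℕ) : ℤ) := by
  have ht : tt ^ (D - 1) ≠ 0 := pow_ne_zero _ tt_ne_zero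
  have h0 : -f / tt ^ (D - 1) ≠ 0 := div_ne_zero (neg_ne_zero.2 hf) ht
  refine ⟨h0, ?_⟩
  have e : (-f / tt ^ (D - 1)) * tt ^ (D - 1) = -f := div_mul_cancel₀ _ ht
  have e2 := congrArg HahnSeries.order e
  rw [HahnSeries.order_mul h0 ht, HahnSeries.order_neg, hfo, order_pow' _ tt_ne_zero, tt_order] at e2
  linarith

/-- Every point of the critical curve over `ℂ((u))`, with `T = 1/u`, gives a root `T` of the
discriminant specialized at `t = -F(T, Y) / T ^ (D - 1)`. -/
lemma fam_root (h : FamHyp F m D q) (Y : LaurentSeries ℂ)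
    (hY : (derivative (F.map psiL)).eval Y = 0) :
    ev qL (-(F.map psiL).eval Y / tt ^ (D - 1)) tt (famDisc F (m + 3) (D - 1)) = 0 := by
  have ht : tt ^ (D - 1) ≠ 0 := pow_ne_zero _ tt_ne_zero
  have hc : CharZero (LaurentSeries ℂ) := charZero_of_injective_ringHom (f := qL) qL.injective
  rw [ev_famDisc, div_mul_cancel₀ _ ht]
  refine disc_zero_of_root _ _ (by omega)
    (fam_natDegree F (m + 3) (by omega) h.monic h.deg _ _).2 Y ?_ ?_
  · rw [eval_add, eval_C]
    exact add_neg_cancel _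
  · rw [derivative_add, derivative_C, add_zero]; exact hY

lemma ev_eq_eval₂ (φ : RatFunc ℚ →+* LaurentSeries ℂ) (t1 : LaurentSeries ℂ)
    (hφ : ∀ p : ℚ[X], φ (algebraMap ℚ[X] (RatFunc ℚ) p) = eval₂ qL t1 p) (g : ℚ[X][X]) :
    eval₂ φ tt (g.map (algebraMap ℚ[X] (RatFunc ℚ))) = ev qL t1 tt g := by
  rw [eval₂_map, ev, coe_eval₂RingHom]
  congr 1
  exact RingHom.ext hφ

/-- The generic discriminant over `ℚ(t)`. -/
def famK (F : ℚ[X][X]) (m D : ℕ) : (RatFunc ℚ)[X] :=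
  (famDisc F (m + 3) (D - 1)).map (algebraMap ℚ[X] (RatFunc ℚ))

lemma famK_natDegree (h : FamHyp F m D q) : (famK F m D).natDegree = 2 * (m + 2) * D ∧
    (famK F m D).coeff (2 * (m + 2) * D) ≠ 0 := by
  obtain ⟨h1, c, hc, h2⟩ := famDisc_lead h
  have h3 : (famK F m D).coeff (2 * (m + 2) * D) ≠ 0 := by
    rw [famK, coeff_map, h2]
    exact (map_ne_zero_iff _ (IsFractionRing.injective ℚ[X] (RatFunc ℚ))).2 (C_ne_zero.2 hc)
  exact ⟨natDegree_eq_of_le_of_coeff_ne_zero (natDegree_map_le.trans h1) h3, h3⟩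

/-- The place with ramification `D (m + 2) + 1` over `t = ∞`. -/
lemma fam_place_two (h : FamHyp F m D q) : ∃ (t1 Y : LaurentSeries ℂ) (φ : RatFunc ℚ →+* LaurentSeries ℂ),
    t1 = -(F.map psiL).eval Y / tt ^ (D - 1) ∧ (derivative (F.map psiL)).eval Y = 0 ∧
    (∀ p : ℚ[X], φ (algebraMap ℚ[X] (RatFunc ℚ) p) = eval₂ qL t1 p) ∧
      ∀ c : RatFunc ℚ, c ≠ 0 → (φ c).order = -((D * (m + 2) + 1 : ℕ) : ℤ) * c.intDegree := by
  have hD := h.one_le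
  obtain ⟨Y, hY1, hY2, hY3⟩ := exists_place_two F m D h.one_le h.monic h.deg h.coeff_le (by
    rw [h.top, ← h.qdeg]; simpa using h.qirr.ne_zero)
  obtain ⟨h1, h2⟩ := fam_t_order _ hY2 D _ hY3
  obtain ⟨φ, hφ1, hφ2⟩ := exists_ratFunc_hom _ h1 ((D * (m + 2) + 1 : ℕ) : ℤ) (by positivity) (by
    rw [h2]; push_cast [Nat.cast_sub hD]; ring)
  exact ⟨_, Y, φ, rfl, hY1, hφ1, hφ2⟩

/-- The unramified place over `t = ∞`. -/
lemma fam_place_one (h : FamHyp F m D q) : ∃ (t1 Y : LaurentSeries ℂ) (φ : RatFunc ℚ →+* LaurentSeries ℂ),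
    t1 = -(F.map psiL).eval Y / tt ^ (D - 1) ∧ (derivative (F.map psiL)).eval Y = 0 ∧
    (∀ p : ℚ[X], φ (algebraMap ℚ[X] (RatFunc ℚ) p) = eval₂ qL t1 p) ∧
      ∀ c : RatFunc ℚ, c ≠ 0 → (φ c).order = -c.intDegree := by
  have hD := h.one_le
  obtain ⟨Y, hY1, hY2, hY3⟩ := exists_place_one F (m + 3) D h.one_le h.monic h.deg h.coeff_le q
    h.top h.qirr h.qdirr
  obtain ⟨h1, h2⟩ := fam_t_order _ hY2 D _ hY3
  obtain ⟨φ, hφ1, hφ2⟩ := exists_ratFunc_hom _ h1 1 one_pos (by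
    rw [h2]; push_cast [Nat.cast_sub hD]; ring)
  exact ⟨_, Y, φ, rfl, hY1, hφ1, fun c hc => by rw [hφ2 c hc]; ring⟩

/-- Every nonconstant factor of the generic discriminant vanishes at the place with ramification
`M = D (m + 2) + 1`, hence has degree at least `M`, more than half of the total degree `2 D (m + 2)`. -/
lemma famK_irreducible (h : FamHyp F m D q) : Irreducible (famK F m D) := by
  obtain ⟨h1, c, hc, h2⟩ := famDisc_lead h
  have hD := h.one_le
  have hcu : IsUnit (C (C c) : ℚ[X][X]) := IsUnit.map C (IsUnit.map C (isUnit_iff_ne_zero.2 hc))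
  set G : ℚ[X][X] := C (C c⁻¹) * famDisc F (m + 3) (D - 1) with hG
  have hGm : G.Monic := by
    refine monic_of_natDegree_le_of_coeff_eq_one (2 * (m + 2) * D) ((natDegree_C_mul_le _ _).trans h1) ?_
    rw [hG, coeff_C_mul, h2, ← C_mul, inv_mul_cancel₀ hc, C_1]
  have hGc : G.coeff (2 * (m + 2) * D) = 1 := by
    rw [hG, coeff_C_mul, h2, ← C_mul, inv_mul_cancel₀ hc, C_1]
  have hGd : G.natDegree = 2 * (m + 2) * D :=
    natDegree_eq_of_le_of_coeff_ne_zero ((natDegree_C_mul_le _ _).trans h1) (by rw [hGc]; exact one_ne_zero)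
  have hfG : famDisc F (m + 3) (D - 1) = C (C c) * G := by
    rw [hG, ← mul_assoc, ← C_mul, ← C_mul, mul_inv_cancel₀ hc, C_1, C_1, one_mul]
  have hGi : Irreducible G := by
    rw [hGm.irreducible_iff_natDegree']
    refine ⟨?_, ?_⟩
    · intro h0
      rw [h0, natDegree_one] at hGd
      have : 0 < 2 * (m + 2) * D := by positivity
      omega
    · intro f g hf hg hfg hmem
      rw [Finset.mem_Ioc, hGd] at hmem
      have hdvd : g ∣ famDisc F (m + 3) (D - 1) := by
        rw [hfG, ← hfg]; exact ⟨C (C c) * f, by ring⟩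
      by_cases hs : (Bivariate.swap g).natDegree = 0
      · obtain ⟨p, hp⟩ := natDegree_eq_zero.1 hs
        have hgp : g = p.map C := by
          rw [← Bivariate.swap_C, hp, Bivariate.swap_swap_apply]
        rw [hgp] at hdvd hmem
        rw [natDegree_map_eq_of_injective C_injective] at hmem
        exact fam_no_vertical h p (by omega) hdvd
      · obtain ⟨t1, Y, φ, ht1, hY, hφ1, hφ2⟩ := fam_place_two h
        have hv := fam_factor_vanishes h g hs hdvd Y hY
        rw [← ht1, ← ev_eq_eval₂ φ t1 hφ1] at hv
        let := φ.toAlgebra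
        have := natDegree_ge_of_root (K := RatFunc ℚ) (D * (m + 2) + 1) tt tt_ne_zero tt_order
          (fun c hc => by
            change _ ∣ (φ c).order
            rw [hφ2 c hc]
            exact ⟨-c.intDegree, by ring⟩) (g.map (algebraMap ℚ[X] (RatFunc ℚ)))
          (hg.map _).ne_zero hv
        rw [hg.natDegree_map] at this
        have e : 2 * (m + 2) * D / 2 = D * (m + 2) := by
          rw [show 2 * (m + 2) * D = 2 * (D * (m + 2)) by ring]; omega
        omega
  have h3 := (hGm.irreducible_iff_irreducible_map_fraction_map (K := RatFunc ℚ)).1 hGi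
  rw [famK, hfG, Polynomial.map_mul]
  refine (irreducible_isUnit_mul ?_).2 h3
  exact hcu.map (mapRingHom (algebraMap ℚ[X] (RatFunc ℚ)))

/-- The root field of the generic discriminant has no quadratic subextension. If `g ^ 2 = c` in the root
field, then `c` has even order at infinity by the unramified place, so at the ramified place `g` has order
divisible by the ramification index, and `no_quadratic` applies. -/
lemma famK_quad (h : FamHyp F m D q) (g : (RatFunc ℚ)[X]) (c : RatFunc ℚ)
    (hg : famK F m D ∣ g ^ 2 - C c) : ∃ c', famK F m D ∣ g - C c' := by
  have hirr := famK_irreducible h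
  have hD := h.one_le
  by_cases hc0 : c = 0
  · refine ⟨0, ?_⟩
    rw [hc0, C_0, sub_zero] at hg
    rw [C_0, sub_zero]
    exact hirr.prime.dvd_of_dvd_pow hg
  have hrt : ∀ (t1 Y : LaurentSeries ℂ) (φ : RatFunc ℚ →+* LaurentSeries ℂ),
      t1 = -(F.map psiL).eval Y / tt ^ (D - 1) → (derivative (F.map psiL)).eval Y = 0 →
      (∀ p : ℚ[X], φ (algebraMap ℚ[X] (RatFunc ℚ) p) = eval₂ qL t1 p) →
      eval₂ φ tt (famK F m D) = 0 ∧ (eval₂ φ tt g) ^ 2 = φ c := by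
    intro t1 Y φ ht1 hY hφ
    have e1 : eval₂ φ tt (famK F m D) = 0 := by
      rw [famK, ev_eq_eval₂ φ t1 hφ, ht1]
      exact fam_root h Y hY
    refine ⟨e1, ?_⟩
    obtain ⟨r, hr⟩ := hg
    have e2 := congrArg (eval₂ φ tt) hr
    rw [eval₂_mul, e1, zero_mul, eval₂_sub, eval₂_pow, eval₂_C] at e2
    exact sub_eq_zero.1 e2
  have heven : ∃ k : ℤ, c.intDegree = 2 * k := by
    obtain ⟨t1, Y, φ, ht1, hY, hφ1, hφ2⟩ := fam_place_one h
    obtain ⟨-, e2⟩ := hrt t1 Y φ ht1 hY hφ1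
    have h0 : eval₂ φ tt g ≠ 0 := by
      intro h0
      rw [h0, zero_pow two_ne_zero] at e2
      exact hc0 (by simpa using e2.symm)
    have e3 := congrArg HahnSeries.order e2
    rw [order_pow' _ h0, hφ2 c hc0] at e3
    exact ⟨-(eval₂ φ tt g).order, by push_cast at e3; linarith⟩
  obtain ⟨k, hk⟩ := heven
  obtain ⟨t1, Y, φ, ht1, hY, hφ1, hφ2⟩ := fam_place_two h
  obtain ⟨e1, e2⟩ := hrt t1 Y φ ht1 hY hφ1
  have h0 : eval₂ φ tt g ≠ 0 := by
    intro h0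
    rw [h0, zero_pow two_ne_zero] at e2
    exact hc0 (by simpa using e2.symm)
  have e3 := congrArg HahnSeries.order e2
  rw [order_pow' _ h0, hφ2 c hc0, hk] at e3
  let := φ.toAlgebra
  obtain ⟨c', hc'⟩ := no_quadratic (K := RatFunc ℚ) (D * (m + 2) + 1) tt tt_ne_zero tt_order
    (fun c hc => by
      change _ ∣ (φ c).order
      rw [hφ2 c hc]
      exact ⟨-c.intDegree, by ring⟩) (famK F m D) hirr.ne_zero e1
    (by
      rw [(famK_natDegree h).1, show 2 * (m + 2) * D = 2 * (D * (m + 2)) by ring]; omega)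
    g c e2 ⟨-k, by
      change (eval₂ φ tt g).order = _
      push_cast at e3 ⊢; linarith⟩
  refine ⟨c', ?_⟩
  have hz : eval₂ φ tt (g - C c') = 0 := by
    rw [eval₂_sub, eval₂_C]; exact sub_eq_zero.2 hc'
  by_contra hnd
  obtain ⟨x, y, hxy⟩ := (hirr.coprime_iff_not_dvd).2 hnd
  have := congrArg (eval₂ φ tt) hxy
  rw [eval₂_add, eval₂_mul, eval₂_mul, e1, hz, mul_zero, mul_zero, add_zero, eval₂_one] at this
  exact zero_ne_one this

end

/-! ### The large sieve -/

/-- Turán's second-moment inequality for weighted pairwise independent events: the weighted mass of the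
points lying in none of the events is at most the total mass divided by the sum of the probabilities. -/
lemma turan {X J : Type*} [Fintype X] [DecidableEq J] (W : X → ℝ) (hW : ∀ x, 0 ≤ W x) (P : Finset J)
    (E : J → X → ℝ) (ω : J → ℝ) (hω : ∀ p ∈ P, 0 ≤ ω p) (M : ℝ) (hM : 0 ≤ M)
    (hE : ∀ p ∈ P, ∀ x, E p x = 0 ∨ E p x = 1)
    (h0 : ∑ x, W x = M)
    (h1 : ∀ p ∈ P, ∑ x, W x * E p x = M * ω p)
    (h2 : ∀ p ∈ P, ∀ q ∈ P, p ≠ q → ∑ x, W x * (E p x * E q x) = M * (ω p * ω q))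
    (B : Finset X) (hB : ∀ x ∈ B, ∀ p ∈ P, E p x = 0) :
    (∑ x ∈ B, W x) * ∑ p ∈ P, ω p ≤ M := by
  set S := ∑ p ∈ P, ω p with hS
  have hS0 : 0 ≤ S := Finset.sum_nonneg hω
  have hvar : ∑ x, W x * (∑ p ∈ P, (E p x - ω p)) ^ 2 ≤ M * S := by
    have e : ∀ x, W x * (∑ p ∈ P, (E p x - ω p)) ^ 2 =
        ∑ p ∈ P, ∑ q ∈ P, (W x * (E p x * E q x) - W x * E p x * ω q - W x * E q x * ω p + W x * (ω p * ω q)) := by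
      intro x
      rw [sq, Finset.sum_mul_sum, Finset.mul_sum]
      refine Finset.sum_congr rfl fun p _ => ?_
      rw [Finset.mul_sum]
      refine Finset.sum_congr rfl fun q _ => ?_
      ring
    simp only [e]
    rw [Finset.sum_comm]
    have : ∀ p ∈ P, ∑ x, ∑ q ∈ P, (W x * (E p x * E q x) - W x * E p x * ω q - W x * E q x * ω p + W x * (ω p * ω q)) ≤ M * ω p := by
      intro p hp
      rw [Finset.sum_comm]
      have hq : ∀ q ∈ P, ∑ x, (W x * (E p x * E q x) - W x * E p x * ω q - W x * E q x * ω p + W x * (ω p * ω q)) ≤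
          if q = p then M * ω p else 0 := by
        intro q hq
        rw [Finset.sum_add_distrib, Finset.sum_sub_distrib, Finset.sum_sub_distrib, ← Finset.sum_mul,
          ← Finset.sum_mul, ← Finset.sum_mul, h1 p hp, h1 q hq, h0]
        split_ifs with hpq
        · subst hpq
          have : ∑ x, W x * (E q x * E q x) = M * ω q := by
            rw [← h1 q hq]
            refine Finset.sum_congr rfl fun x _ => ?_
            obtain h | h := hE q hq x <;> simp [h]
          rw [this]
          nlinarith [mul_nonneg hM (sq_nonneg (ω q))]
        · rw [h2 p hp q hq (Ne.symm hpq)]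
          apply le_of_eq; ring
      refine (Finset.sum_le_sum hq).trans ?_
      simp [hp]
    refine (Finset.sum_le_sum this).trans ?_
    rw [← Finset.mul_sum]
  have hlow : (∑ x ∈ B, W x) * S ^ 2 ≤ M * S := by
    refine le_trans ?_ hvar
    rw [Finset.sum_mul]
    refine le_trans (le_of_eq ?_) (Finset.sum_le_sum_of_subset_of_nonneg (Finset.subset_univ B)
      fun x _ _ => mul_nonneg (hW x) (sq_nonneg _))
    refine Finset.sum_congr rfl fun x hx => ?_
    congr 1
    rw [Finset.sum_sub_distrib, Finset.sum_eq_zero (fun p hp => hB x hx p hp)]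
    ring
  obtain h | h := hS0.eq_or_lt
  · rw [← h, mul_zero]; exact hM
  · refine le_of_mul_le_mul_right ?_ h
    nlinarith

/-- The Fejér weight on `ZMod M`: the squared modulus of the exponential sum of the `K` frequencies
`0, …, K - 1`. -/
def fejer (M K : ℕ) [NeZero M] (x : ZMod M) : ℝ :=
  ‖∑ k ∈ Finset.range K, ZMod.stdAddChar ((k : ZMod M) * x)‖ ^ 2

lemma fejer_nonneg (M K : ℕ) [NeZero M] (x : ZMod M) : 0 ≤ fejer M K x := sq_nonneg _

/-- The Fejér weight is exactly equidistributed modulo `m` when `m ≤ L`: the frequencies occurring in it are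
smaller than `K` in absolute value, so none but zero is a multiple of `L * K / m`. -/
lemma fejer_equi (L K m : ℕ) [NeZero (L * K)] [NeZero m] (hm : m ∣ L * K) (hmL : m ≤ L) (a : ZMod m) :
    ∑ x : ZMod (L * K), (if ZMod.castHom hm (ZMod m) x = a then fejer (L * K) K x else 0) =
      (K : ℝ) * (L * K) / m := by
  have hK0 : K ≠ 0 := by rintro rfl; exact NeZero.ne (L * 0) (by simp)
  have hm0 : m ≠ 0 := NeZero.ne m
  set A : Finset (ZMod (L * K)) := Finset.univ.filter fun x => ZMod.castHom hm (ZMod m) x = a with hA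
  have hcard : (A.card : ℝ) = (L * K) / m := by
    have hsurj : Function.Surjective (ZMod.castHom hm (ZMod m)) := ZMod.castHom_surjective hm
    have hall : ∀ b, (Finset.univ.filter fun x => ZMod.castHom hm (ZMod m) x = b).card = A.card := by
      intro b
      exact AddMonoidHom.card_fiber_eq_of_mem_range (ZMod.castHom hm (ZMod m)).toAddMonoidHom (hsurj b) (hsurj a)
    have := Finset.card_eq_sum_card_fiberwise (f := ZMod.castHom hm (ZMod m)) (s := Finset.univ)
      (t := Finset.univ) (fun _ _ => Finset.mem_coe.2 (Finset.mem_univ _))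
    simp only [hall, Finset.sum_const, Finset.card_univ, ZMod.card, smul_eq_mul] at this
    rw [eq_div_iff (by exact_mod_cast hm0)]
    rw [mul_comm]
    exact_mod_cast this.symm
  have hz : ∀ k ∈ Finset.range K, ∀ l ∈ Finset.range K, ∑ x ∈ A, ZMod.stdAddChar (((k : ZMod (L * K)) - (l : ZMod (L * K))) * x) =
      if k = l then (A.card : ℂ) else 0 := by
    intro k hk l hl
    rw [Finset.mem_range] at hk hl
    split_ifs with hkl
    · subst hkl; simp
    · set S := ∑ x ∈ A, ZMod.stdAddChar (((k : ZMod (L * K)) - (l : ZMod (L * K))) * x) with hS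
      have e : S = ZMod.stdAddChar (((k : ZMod (L * K)) - (l : ZMod (L * K))) * (m : ZMod (L * K))) * S := by
        rw [hS, Finset.mul_sum]
        refine Finset.sum_bij' (fun x _ => x - m) (fun x _ => x + m) ?_ ?_ ?_ ?_ ?_
        · intro x hx
          simp only [hA, Finset.mem_filter, Finset.mem_univ, true_and] at hx ⊢
          rw [map_sub, hx, map_natCast]; simp
        · intro x hx
          simp only [hA, Finset.mem_filter, Finset.mem_univ, true_and] at hx ⊢
          rw [map_add, hx, map_natCast]; simp
        · intro x _; ring
        · intro x _; ring
        · intro x _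
          rw [← AddChar.map_add_eq_mul]
          congr 1; ring
      have hne : ZMod.stdAddChar (((k : ZMod (L * K)) - (l : ZMod (L * K))) * (m : ZMod (L * K))) ≠ 1 := by
        intro h1
        have h2 : ((k : ZMod (L * K)) - l) * m = 0 := by
          apply ZMod.injective_stdAddChar
          rw [h1, AddChar.map_zero_eq_one]
        have h3 : ((((k : ℤ) - l) * m : ℤ) : ZMod (L * K)) = 0 := by push_cast; exact h2
        rw [ZMod.intCast_zmod_eq_zero_iff_dvd] at h3
        have h4 := Int.eq_zero_of_abs_lt_dvd h3 (by
          rw [abs_mul, Nat.abs_cast]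
          push_cast
          have hk' : |(k : ℤ) - l| < K := by rw [abs_lt]; omega
          have : (m : ℤ) ≤ L := by exact_mod_cast hmL
          have hm1 : (0 : ℤ) < m := by exact_mod_cast Nat.pos_of_ne_zero hm0
          nlinarith [abs_nonneg ((k : ℤ) - l)])
        rcases mul_eq_zero.1 h4 with h5 | h5
        · exact hkl (by omega)
        · exact hm0 (by exact_mod_cast h5)
      have : (1 - ZMod.stdAddChar (((k : ZMod (L * K)) - (l : ZMod (L * K))) * (m : ZMod (L * K)))) * S = 0 := by linear_combination e
      exact (mul_eq_zero.1 this).resolve_left (sub_ne_zero.2 hne.symm)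
  rw [← Finset.sum_filter]
  have hmain : ((∑ x ∈ A, fejer (L * K) K x : ℝ) : ℂ) = K * A.card := by
    rw [Complex.ofReal_sum]
    have e : ∀ x : ZMod (L * K), ((fejer (L * K) K x : ℝ) : ℂ) =
        ∑ k ∈ Finset.range K, ∑ l ∈ Finset.range K, ZMod.stdAddChar (((k : ZMod (L * K)) - (l : ZMod (L * K))) * x) := by
      intro x
      rw [fejer, Complex.ofReal_pow, ← Complex.mul_conj', map_sum, Finset.sum_mul_sum]
      refine Finset.sum_congr rfl fun k _ => Finset.sum_congr rfl fun l _ => ?_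
      rw [sub_mul, sub_eq_add_neg, AddChar.map_add_eq_mul]
      congr 1
      rw [AddChar.map_neg_eq_conj]
    simp only [e]
    rw [Finset.sum_comm]
    have : ∀ k ∈ Finset.range K, ∑ x ∈ A, ∑ l ∈ Finset.range K, ZMod.stdAddChar (((k : ZMod (L * K)) - (l : ZMod (L * K))) * x) = (A.card : ℂ) := by
      intro k hk
      rw [Finset.sum_comm, Finset.sum_congr rfl (fun l hl => hz k hk l hl)]
      have hk' := Finset.mem_range.1 hk
      simp [hk']
    rw [Finset.sum_congr rfl this]
    simp
  have : (∑ x ∈ A, fejer (L * K) K x : ℝ) = K * A.card := by exact_mod_cast hmain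
  rw [this, hcard]; ring

/-- On the interval `|x| ≤ H` the Fejér weight of modulus `8 * H * K` is within a factor four of its
maximum `K ^ 2`, all phases being at most `π / 4`. -/
lemma fejer_ge (H K : ℕ) (hH : 1 ≤ H) [NeZero (8 * H * K)] (x : ℤ) (hx : |x| ≤ H) :
    (K : ℝ) ^ 2 / 4 ≤ fejer (8 * H * K) K x := by
  have hK0 : K ≠ 0 := by rintro rfl; exact NeZero.ne (8 * H * 0) (by simp)
  have hKp : (0 : ℝ) < K := by positivity
  have hHp : (0 : ℝ) < H := by positivity
  have key : (K : ℝ) / 2 ≤ ‖∑ k ∈ Finset.range K, ZMod.stdAddChar ((k : ZMod (8 * H * K)) * (x : ZMod (8 * H * K)))‖ := by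
    refine le_trans ?_ (Complex.re_le_norm _)
    rw [Complex.re_sum]
    have : ∀ k ∈ Finset.range K, (1 / 2 : ℝ) ≤ (ZMod.stdAddChar ((k : ZMod (8 * H * K)) * (x : ZMod (8 * H * K)))).re := by
      intro k hk
      have hk : k < K := Finset.mem_range.1 hk
      have e : ((k : ZMod (8 * H * K)) * (x : ZMod (8 * H * K))) = (((k : ℤ) * x : ℤ) : ZMod (8 * H * K)) := by push_cast; rfl
      rw [e, ZMod.stdAddChar_coe]
      set θ : ℝ := 2 * Real.pi * (k * x) / (8 * H * K) with hθ
      have e2 : (2 * Real.pi * Complex.I * (((k : ℤ) * x : ℤ) : ℂ) / ((8 * H * K : ℕ) : ℂ)) = (θ : ℂ) * Complex.I := by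
        rw [hθ]; push_cast; ring
      rw [e2, Complex.exp_ofReal_mul_I_re]
      have habs : |θ| ≤ Real.pi / 3 := by
        rw [hθ, abs_div, abs_of_pos (show (0 : ℝ) < 8 * H * K by positivity), div_le_iff₀ (by positivity),
          abs_mul, abs_mul, abs_mul, abs_of_pos Real.pi_pos, Nat.abs_cast]
        have hx' : |(x : ℝ)| ≤ H := by exact_mod_cast hx
        have hkK : (k : ℝ) ≤ K := by exact_mod_cast hk.le
        have h1 : (k : ℝ) * |(x : ℝ)| ≤ K * H := mul_le_mul hkK hx' (abs_nonneg _) hKp.le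
        have hpi := Real.pi_pos
        rw [abs_two]
        have h2 : 0 ≤ Real.pi * (K * H - k * |(x : ℝ)|) := mul_nonneg hpi.le (by linarith)
        have h3 : 0 ≤ Real.pi * (K * H) := by positivity
        nlinarith
      rw [← Real.cos_abs, ← Real.cos_pi_div_three]
      exact Real.cos_le_cos_of_nonneg_of_le_pi (abs_nonneg _) (by linarith [Real.pi_pos]) habs
    calc (K : ℝ) / 2 = ∑ k ∈ Finset.range K, (1 / 2 : ℝ) := by simp; ring
      _ ≤ _ := Finset.sum_le_sum this
  rw [fejer]
  calc (K : ℝ) ^ 2 / 4 = (K / 2) ^ 2 := by ring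
    _ ≤ _ := by gcongr

/-- The product weight is exactly equidistributed over the residue vectors modulo `m`. -/
lemma prod_equi {ι : Type*} [Fintype ι] [DecidableEq ι] (L K m : ℕ) [NeZero (L * K)] [NeZero m]
    (hm : m ∣ L * K) (hmL : m ≤ L) (f : (ι → ZMod m) → ℝ) :
    ∑ x : ι → ZMod (L * K), (∏ i, fejer (L * K) K (x i)) * f (fun i => (x i).cast) =
      ((K : ℝ) * (L * K) / m) ^ Fintype.card ι * ∑ a, f a := by
  have e : ∀ x : ι → ZMod (L * K), (∏ i, fejer (L * K) K (x i)) * f (fun i => (x i).cast) =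
      ∑ a : ι → ZMod m, (∏ i, (if ZMod.castHom hm (ZMod m) (x i) = a i then fejer (L * K) K (x i) else 0)) * f a := by
    intro x
    rw [Finset.sum_eq_single (fun i => ((x i).cast : ZMod m))]
    · simp
    · intro b _ hb
      obtain ⟨i, hi⟩ : ∃ i, b i ≠ (x i).cast := by
        by_contra! hcon
        exact hb (funext hcon)
      rw [Finset.prod_eq_zero (Finset.mem_univ i), zero_mul]
      rw [ZMod.castHom_apply, if_neg hi.symm]
    · intro h; exact absurd (Finset.mem_univ _) h
  simp only [e]
  rw [Finset.sum_comm, Finset.mul_sum]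
  refine Finset.sum_congr rfl fun a _ => ?_
  rw [← Finset.sum_mul]
  congr 1
  have := Finset.prod_univ_sum (fun _ : ι => (Finset.univ : Finset (ZMod (L * K))))
    (fun i y => if ZMod.castHom hm (ZMod m) y = a i then fejer (L * K) K y else 0)
  rw [Fintype.piFinset_univ] at this
  rw [← this]
  simp only [fejer_equi L K m hm hmL]
  rw [Finset.prod_const, Finset.card_univ]

lemma ind_sum {ι : Type*} [Fintype ι] [DecidableEq ι] (p : ℕ) [NeZero p] (Ω : Set (ι → ZMod p)) :
    ∑ a, Ω.indicator (fun _ => (1 : ℝ)) a = Ω.ncard := by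
  classical
  rw [Set.ncard_eq_toFinset_card']
  simp [Set.indicator_apply, Set.toFinset_card, Fintype.card_subtype]

lemma ind_sum_mul {ι : Type*} [Fintype ι] [DecidableEq ι] (p q : ℕ) [NeZero p] [NeZero q] [NeZero (p * q)]
    (hpq : p.Coprime q) (f : (ι → ZMod p) → ℝ) (g : (ι → ZMod q) → ℝ) :
    ∑ a : ι → ZMod (p * q), f (fun i => (a i).cast) * g (fun i => (a i).cast) = (∑ a, f a) * ∑ a, g a := by
  rw [Finset.sum_mul_sum, ← Fintype.sum_prod_type']
  refine Fintype.sum_equiv ((Equiv.piCongrRight fun _ => (ZMod.chineseRemainder hpq).toEquiv).trans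
    (Equiv.arrowProdEquivProdArrow ι (fun _ => ZMod p) (fun _ => ZMod q))) _ _ fun a => ?_
  congr 2
  · funext i
    simp [ZMod.chineseRemainder]
  · funext i
    simp [ZMod.chineseRemainder]

/-- The large sieve for positive densities: there are at most `(32 H) ^ d / (c |P|)` integer points of height
at most `H` that avoid a set of residue classes of density at least `c` modulo each prime of `P`. The primes
are at most `√H`, so that the product weight is exactly equidistributed modulo products of two of them and
`turan` applies. -/
theorem sieve_bound {ι : Type*} [Fintype ι] [DecidableEq ι] (H : ℕ) (hH : 1 ≤ H) (P : Finset ℕ)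
    (hP : ∀ p ∈ P, p.Prime) (hP2 : ∀ p ∈ P, p * p ≤ H)
    (Ω : (p : ℕ) → Set (ι → ZMod p)) (c : ℝ)
    (hΩ : ∀ p ∈ P, c * (p : ℝ) ^ Fintype.card ι ≤ (Ω p).ncard)
    (bad : Finset (ι → ℤ)) (hbox : ∀ x ∈ bad, ∀ i, |x i| ≤ H)
    (hbad : ∀ x ∈ bad, ∀ p ∈ P, (fun i => ((x i : ℤ) : ZMod p)) ∉ Ω p) :
    (bad.card : ℝ) * (c * P.card) ≤ (32 * (H : ℝ)) ^ Fintype.card ι := by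
  classical
  set d := Fintype.card ι with hd
  set K := ∏ p ∈ P, p with hK
  have hK0 : 0 < K := Finset.prod_pos fun p hp => (hP p hp).pos
  have hM0 : 0 < 8 * H * K := by positivity
  have : NeZero (8 * H * K) := ⟨hM0.ne'⟩
  have hdvd : ∀ p ∈ P, p ∣ 8 * H * K := fun p hp => (Finset.dvd_prod_of_mem (fun p => p) hp).mul_left _
  have hdvd2 : ∀ p ∈ P, ∀ q ∈ P, p ≠ q → p * q ∣ 8 * H * K := fun p hp q hq hpq =>
    ((Nat.coprime_primes (hP p hp) (hP q hq)).2 hpq).mul_dvd_of_dvd_of_dvd (hdvd p hp) (hdvd q hq)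
  have hle1 : ∀ p ∈ P, p ≤ 8 * H := fun p hp => by
    have := hP2 p hp
    nlinarith [(hP p hp).pos]
  have hle2 : ∀ p ∈ P, ∀ q ∈ P, p * q ≤ 8 * H := fun p hp q hq => by
    have h1 := hP2 p hp
    have h2 := hP2 q hq
    rcases le_total p q with h | h
    · nlinarith
    · nlinarith
  set M : ℝ := ((K : ℝ) * ((8 * H : ℕ) * K)) ^ d with hM
  set W : (ι → ZMod (8 * H * K)) → ℝ := fun x => ∏ i, fejer (8 * H * K) K (x i) with hW
  set ω : ℕ → ℝ := fun p => (Ω p).ncard / (p : ℝ) ^ d with hω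
  set E : ℕ → (ι → ZMod (8 * H * K)) → ℝ := fun p x =>
    (Ω p).indicator (fun _ => (1 : ℝ)) (fun i => (x i).cast) with hE
  set φ : (ι → ℤ) → (ι → ZMod (8 * H * K)) := fun x i => (x i : ZMod (8 * H * K)) with hφ
  have key := turan W (fun x => Finset.prod_nonneg fun i _ => fejer_nonneg _ _ _) P E ω
    (fun p _ => by positivity) M (by positivity)
    (fun p _ x => by
      simp only [hE, Set.indicator_apply]
      split_ifs <;> simp)
    (by
      have := prod_equi (ι := ι) (8 * H) K 1 (one_dvd _) (by omega) (fun _ => 1)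
      simpa [hW, hM] using this)
    (fun p hp => by
      have : NeZero p := ⟨(hP p hp).ne_zero⟩
      have := prod_equi (ι := ι) (8 * H) K p (hdvd p hp) (hle1 p hp) ((Ω p).indicator fun _ => (1 : ℝ))
      rw [ind_sum] at this
      rw [hE, hW, this, hM, hω, div_pow]
      ring)
    (fun p hp q hq hpq => by
      have : NeZero p := ⟨(hP p hp).ne_zero⟩
      have : NeZero q := ⟨(hP q hq).ne_zero⟩
      have : NeZero (p * q) := ⟨mul_ne_zero (hP p hp).ne_zero (hP q hq).ne_zero⟩
      have h := prod_equi (ι := ι) (8 * H) K (p * q) (hdvd2 p hp q hq hpq) (hle2 p hp q hq)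
        (fun y => (Ω p).indicator (fun _ => (1 : ℝ)) (fun i => (y i).cast) *
          (Ω q).indicator (fun _ => (1 : ℝ)) (fun i => (y i).cast))
      rw [ind_sum_mul p q ((Nat.coprime_primes (hP p hp) (hP q hq)).2 hpq), ind_sum, ind_sum] at h
      have e1 : ∀ x : ZMod (8 * H * K), ((x.cast : ZMod (p * q)).cast : ZMod p) = x.cast := fun x => by
        have := RingHom.congr_fun (ZMod.castHom_comp (dvd_mul_right p q) (hdvd2 p hp q hq hpq)) x
        exact this
      have e2 : ∀ x : ZMod (8 * H * K), ((x.cast : ZMod (p * q)).cast : ZMod q) = x.cast := fun x => by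
        have := RingHom.congr_fun (ZMod.castHom_comp (dvd_mul_left q p) (hdvd2 p hp q hq hpq)) x
        exact this
      simp only [e1, e2] at h
      rw [hE, hW, h, hM, hω, div_pow]
      push_cast
      rw [mul_pow]
      ring)
    (bad.image φ)
    (fun x hx p hp => by
      obtain ⟨y, hy, rfl⟩ := Finset.mem_image.1 hx
      simp only [hE, hφ]
      rw [Set.indicator_of_notMem]
      have e : (fun i => (((y i : ℤ) : ZMod (8 * H * K)).cast : ZMod p)) = fun i => ((y i : ℤ) : ZMod p) := by
        funext i
        exact ZMod.cast_intCast (hdvd p hp) (y i)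
      rw [e]
      exact hbad y hy p hp)
  have hinj : Set.InjOn φ bad := by
    intro x hx y hy hxy
    funext i
    have h1 : ((x i : ℤ) : ZMod (8 * H * K)) = (y i : ZMod (8 * H * K)) := congrFun hxy i
    rw [ZMod.intCast_eq_intCast_iff_dvd_sub] at h1
    have h2 := Int.eq_zero_of_abs_lt_dvd h1 (by
      have a1 := hbox x hx i
      have a2 := hbox y hy i
      have : (8 * H : ℤ) ≤ ((8 * H * K : ℕ) : ℤ) := by
        push_cast
        have : (1 : ℤ) ≤ K := by exact_mod_cast hK0
        nlinarith
      rw [abs_le] at a1 a2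
      rw [abs_lt]
      constructor <;> omega)
    omega
  rw [Finset.sum_image hinj] at key
  have hlow : (bad.card : ℝ) * ((K : ℝ) ^ 2 / 4) ^ d ≤ ∑ x ∈ bad, W (φ x) := by
    rw [← nsmul_eq_mul]
    refine Finset.card_nsmul_le_sum _ _ _ fun x hx => ?_
    calc ((K : ℝ) ^ 2 / 4) ^ d = ∏ i : ι, ((K : ℝ) ^ 2 / 4) := by rw [Finset.prod_const, Finset.card_univ]
      _ ≤ _ := Finset.prod_le_prod (fun _ _ => by positivity) fun i _ => fejer_ge H K hH (x i) (hbox x hx i)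
  have hω' : c * P.card ≤ ∑ p ∈ P, ω p := by
    rw [mul_comm, ← nsmul_eq_mul]
    refine Finset.card_nsmul_le_sum _ _ _ fun p hp => ?_
    have : (0 : ℝ) < p := by exact_mod_cast (hP p hp).pos
    rw [hω, le_div_iff₀ (by positivity)]
    exact hΩ p hp
  have hK' : (0 : ℝ) < ((K : ℝ) ^ 2 / 4) ^ d := by positivity
  refine le_of_mul_le_mul_left ?_ hK'
  calc ((K : ℝ) ^ 2 / 4) ^ d * ((bad.card : ℝ) * (c * P.card)) = ((bad.card : ℝ) * ((K : ℝ) ^ 2 / 4) ^ d) * (c * P.card) := by ring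
    _ ≤ ((bad.card : ℝ) * ((K : ℝ) ^ 2 / 4) ^ d) * ∑ p ∈ P, ω p := by gcongr
    _ ≤ (∑ x ∈ bad, W (φ x)) * ∑ p ∈ P, ω p := by
        gcongr
    _ ≤ M := key
    _ = _ := by
        rw [hM, ← mul_pow]
        congr 1
        push_cast; ring

/-- Chebyshev's lower bound for the number of primes between `p0` and `√H`. -/
lemma primes_lower (p0 : ℕ) : ∃ H0 : ℕ, 3 ≤ H0 ∧ ∀ H ≥ H0, Real.sqrt H / (4 * Real.log H) ≤
    (((Finset.range (Nat.sqrt H + 1)).filter fun p => p.Prime ∧ p0 ≤ p).card : ℝ) := by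
  have h1 : ∀ᶠ s : ℕ in atTop, Real.log (s + 1) + p0 * Real.log s ≤ s * (Real.log 2 - 1 / 2) := by
    have hl : (fun x : ℝ => Real.log x) =o[atTop] (fun x => x) := Real.isLittleO_log_id_atTop
    have hl2 := hl.comp_tendsto tendsto_natCast_atTop_atTop
    have hpos : 0 < (Real.log 2 - 1 / 2) := by linarith [Real.log_two_gt_d9]
    have hp : 0 < (Real.log 2 - 1 / 2) / (2 * (p0 + 2)) := by positivity
    have h2 := hl2.def hp
    filter_upwards [h2, eventually_ge_atTop 2, (tendsto_natCast_atTop_atTop (R := ℝ)).eventually_ge_atTop (2 * Real.log 2 / (Real.log 2 - 1 / 2))] with s hs hs2 hs3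
    have hs2' : (2 : ℝ) ≤ s := by exact_mod_cast hs2
    simp only [Function.comp, Real.norm_eq_abs, Nat.abs_cast] at hs
    rw [abs_of_nonneg (Real.log_nonneg (by linarith))] at hs
    rw [div_le_iff₀ hpos] at hs3
    have h4 : Real.log (s + 1) ≤ Real.log 2 + Real.log s := by
      rw [← Real.log_mul (by norm_num) (by positivity)]
      exact Real.log_le_log (by positivity) (by linarith)
    have h5 : (p0 + 1) * Real.log s ≤ s * (Real.log 2 - 1 / 2) / 2 := by
      have h6 : (p0 + 1) * Real.log s ≤ (p0 + 2) * Real.log s := by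
        have := Real.log_nonneg (show (1 : ℝ) ≤ s by linarith)
        nlinarith
      refine h6.trans ?_
      calc (p0 + 2) * Real.log s ≤ (p0 + 2) * ((Real.log 2 - 1 / 2) / (2 * (p0 + 2)) * s) := by gcongr
        _ = s * (Real.log 2 - 1 / 2) / 2 := by field_simp
    linarith
  obtain ⟨S0, hS0⟩ := eventually_atTop.1 h1
  refine ⟨(S0 + 3) * (S0 + 3), by nlinarith, fun H hH => ?_⟩
  set s := Nat.sqrt H with hs
  have hsS : S0 + 3 ≤ s := Nat.le_sqrt.2 hH
  have h2 := hS0 s (by omega)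
  have hs3 : (3 : ℝ) ≤ s := by exact_mod_cast (by omega : 3 ≤ s)
  have hlogs : 0 < Real.log s := Real.log_pos (by linarith)
  have hsH : (s : ℝ) ^ 2 ≤ H := by exact_mod_cast Nat.sqrt_le' H
  have hHs : (H : ℝ) ≤ (s + 1) ^ 2 := by exact_mod_cast (Nat.lt_succ_sqrt' H).le
  have hlogH : 2 * Real.log s ≤ Real.log H := by
    have := Real.log_le_log (by positivity) hsH
    rwa [Real.log_pow] at this
  have hsq : Real.sqrt H ≤ 2 * s := by
    refine (Real.sqrt_le_sqrt hHs).trans ?_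
    rw [Real.sqrt_sq (by positivity)]; linarith
  have hpi := Chebyshev.pi_ge s
  have hcard : (Nat.primeCounting s : ℝ) ≤
      (((Finset.range (s + 1)).filter fun p => p.Prime ∧ p0 ≤ p).card : ℝ) + p0 := by
    have : Nat.primeCounting s ≤ ((Finset.range (s + 1)).filter fun p => p.Prime ∧ p0 ≤ p).card + p0 := by
      rw [Nat.primeCounting, Nat.primeCounting', Nat.count_eq_card_filter_range]
      calc _ ≤ (((Finset.range (s + 1)).filter fun p => p.Prime ∧ p0 ≤ p) ∪ Finset.range p0).card := by
            apply Finset.card_le_card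
            intro p hp
            simp only [Finset.mem_filter, Finset.mem_union, Finset.mem_range] at hp ⊢
            by_cases h : p0 ≤ p
            · exact Or.inl ⟨hp.1, hp.2, h⟩
            · exact Or.inr (by omega)
        _ ≤ _ := (Finset.card_union_le _ _).trans (by simp)
    exact_mod_cast this
  have h3 : (s : ℝ) / 2 / Real.log s ≤ Nat.primeCounting s - p0 := by
    have : (s : ℝ) / 2 / Real.log s + p0 ≤ (s * Real.log 2 - Real.log (s + 1)) / Real.log s := by
      rw [le_div_iff₀ hlogs, add_mul, div_mul_cancel₀ _ hlogs.ne']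
      linarith
    linarith
  calc Real.sqrt H / (4 * Real.log H) ≤ (2 * s) / (4 * (2 * Real.log s)) := by gcongr
    _ ≤ (s : ℝ) / 2 / Real.log s := by
      rw [div_div]
      rw [div_le_div_iff₀ (by positivity) (by positivity)]
      have : 0 ≤ s * Real.log s := by positivity
      nlinarith
    _ ≤ _ := by linarith

/-- Sieve bound with a positive proportion of classes removed for all large primes. -/
theorem sieve_asymp {ι : Type*} [Fintype ι] [DecidableEq ι]
    (Ω : (p : ℕ) → Set (ι → ZMod p)) (c : ℝ) (hc : 0 < c) (p0 : ℕ)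
    (hΩ : ∀ p, p.Prime → p0 ≤ p → c * (p : ℝ) ^ Fintype.card ι ≤ (Ω p).ncard) :
    ∃ (C : ℝ) (H0 : ℕ), 0 ≤ C ∧ ∀ H ≥ H0, ∀ bad : Finset (ι → ℤ), (∀ x ∈ bad, ∀ i, |x i| ≤ H) →
      (∀ x ∈ bad, ∀ p, p.Prime → p0 ≤ p → (fun i => ((x i : ℤ) : ZMod p)) ∉ Ω p) →
      (bad.card : ℝ) ≤ C * (H : ℝ) ^ Fintype.card ι * (Real.log H / Real.sqrt H) := by
  obtain ⟨H0, hH03, hH0⟩ := primes_lower p0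
  refine ⟨4 / c * 32 ^ Fintype.card ι, H0, by positivity, fun H hH bad hbox hbad => ?_⟩
  have h := sieve_bound H (by omega) ((Finset.range (Nat.sqrt H + 1)).filter fun p => p.Prime ∧ p0 ≤ p)
    (fun p hp => (Finset.mem_filter.1 hp).2.1)
    (fun p hp => by
      have := Finset.mem_range.1 (Finset.mem_filter.1 hp).1
      exact Nat.le_sqrt.1 (by omega)) Ω c
    (fun p hp => hΩ p (Finset.mem_filter.1 hp).2.1 (Finset.mem_filter.1 hp).2.2) bad hbox
    (fun x hx p hp => hbad x hx p (Finset.mem_filter.1 hp).2.1 (Finset.mem_filter.1 hp).2.2)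
  have hl := hH0 H hH
  have hHp : (3 : ℝ) ≤ H := by exact_mod_cast hH03.trans hH
  have hlog : 0 < Real.log H := Real.log_pos (by linarith)
  have hsq : 0 < Real.sqrt H := Real.sqrt_pos.2 (by linarith)
  have h2 : (bad.card : ℝ) * (c * (Real.sqrt H / (4 * Real.log H))) ≤ (32 * (H : ℝ)) ^ Fintype.card ι :=
    le_trans (by gcongr) h
  have e : (bad.card : ℝ) = ((bad.card : ℝ) * (c * (Real.sqrt H / (4 * Real.log H)))) * (4 / c * (Real.log H / Real.sqrt H)) := by
    field_simp
  rw [e]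
  calc _ ≤ (32 * (H : ℝ)) ^ Fintype.card ι * (4 / c * (Real.log H / Real.sqrt H)) := by gcongr
    _ = _ := by rw [mul_pow]; ring

/-! ### Counting polynomials over finite fields -/

/-- The polynomial of degree `< d` with coefficient vector `v`. -/
def low {R : Type*} [Semiring R] (d : ℕ) (v : Fin d → R) : R[X] := ∑ i : Fin d, C (v i) * X ^ (i : ℕ)

section low
variable {R : Type*} [CommRing R]

lemma low_coeff (d : ℕ) (v : Fin d → R) (k : ℕ) :
    (low d v).coeff k = if h : k < d then v ⟨k, h⟩ else 0 := by
  rw [low, finsetSum_coeff]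
  simp only [coeff_C_mul, coeff_X_pow]
  split_ifs with h
  · rw [Finset.sum_eq_single ⟨k, h⟩]
    · simp
    · intro b _ hb
      rw [if_neg, mul_zero]
      intro e
      exact hb (Fin.ext e.symm)
    · simp
  · refine Finset.sum_eq_zero fun i _ => ?_
    rw [if_neg (by have := i.2; omega), mul_zero]

lemma low_degree (d : ℕ) (v : Fin d → R) : (low d v).degree < d := by
  rw [degree_lt_iff_coeff_zero]
  intro m hm
  rw [low_coeff, dif_neg (by omega)]

lemma low_of_degree {d : ℕ} {f : R[X]} (h : f.degree < d) : low d (fun i => f.coeff i) = f := by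
  ext k
  rw [low_coeff]
  split_ifs with hk
  · rfl
  · exact ((degree_lt_iff_coeff_zero f d).1 h k (by omega)).symm

lemma low_map {S : Type*} [CommRing S] (φ : R →+* S) (d : ℕ) (v : Fin d → R) :
    (low d v).map φ = low d (fun i => φ (v i)) := by
  simp [low, Polynomial.map_sum]

lemma low_injective (d : ℕ) : Function.Injective (low (R := R) d) := by
  intro v w h
  funext i
  have := congrArg (fun f => f.coeff i) h
  simpa [low_coeff] using this

lemma monic_low (d : ℕ) (v : Fin d → R) : (X ^ d + low d v).Monic :=
  monic_X_pow_add (low_degree d v)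

lemma natDegree_monic_low [Nontrivial R] (d : ℕ) (v : Fin d → R) : (X ^ d + low d v).natDegree = d := by
  rw [natDegree_add_eq_left_of_degree_lt, natDegree_X_pow]
  rw [degree_X_pow]; exact low_degree d v

lemma monic_eq_low {d : ℕ} {f : R[X]} (hf : f.Monic) (hd : f.natDegree = d) :
    X ^ d + low d (fun i => f.coeff i) = f := by
  nontriviality R
  have h : low d (fun i => f.coeff i) = f - X ^ d := by
    rw [← low_of_degree (d := d) (f := f - X ^ d)]
    · congr 1
      funext i
      rw [coeff_sub, coeff_X_pow, if_neg (by have := i.2; omega), sub_zero]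
    · rw [← hd]
      have := degree_sub_lt_left (p := f) (q := X ^ f.natDegree) (by rw [degree_X_pow, degree_eq_natDegree hf.ne_zero])
        hf.ne_zero (by rw [hf.leadingCoeff, leadingCoeff_X_pow])
      rwa [degree_eq_natDegree hf.ne_zero] at this
  rw [h]; ring

end low

/-- In a field `K` with `p ^ d` elements, the elements of degree less than `d` number at most
`1 + p + ⋯ + p ^ (d - 1) ≤ p ^ d / 2`; the minimal polynomials of the others are irreducible of degree `d`,
and each of them has at most `d` roots. -/
lemma irr_count_aux (p : ℕ) [Fact p.Prime] (hp : 3 ≤ p) (d : ℕ) (K : Type) [Field K]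
    [Fintype K] [Algebra (ZMod p) K] (hrank : Module.finrank (ZMod p) K = d) :
    p ^ d ≤ 2 * d * {v : Fin d → ZMod p | Irreducible (X ^ d + low d v)}.ncard := by
  classical
  have hcardK : Fintype.card K = p ^ d := by
    rw [← Nat.card_eq_fintype_card, Module.natCard_eq_pow_finrank (K := ZMod p), hrank, Nat.card_zmod]
  have hItg : ∀ α : K, IsIntegral (ZMod p) α := fun α => Algebra.IsIntegral.isIntegral α
  set G : Finset K := Finset.univ.filter fun α => (minpoly (ZMod p) α).natDegree = d with hG
  set I : Finset (Fin d → ZMod p) := Finset.univ.filter fun v => Irreducible (X ^ d + low d v) with hI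
  have hIcard : {v : Fin d → ZMod p | Irreducible (X ^ d + low d v)}.ncard = I.card := by
    rw [← Set.ncard_coe_finset]; congr 1; ext v; simp [hI]
  rw [hIcard]
  -- elements of smaller degree lie in smaller finite fields
  have hsmall : (Finset.univ.filter fun α : K => ¬ (minpoly (ZMod p) α).natDegree = d).card ≤ ∑ e ∈ Finset.range d, p ^ e := by
    calc _ ≤ ((Finset.range d).biUnion fun e => (X ^ p ^ e - X : K[X]).roots.toFinset).card := by
          apply Finset.card_le_card
          intro α hα
          rw [Finset.mem_filter] at hα
          have hle : (minpoly (ZMod p) α).natDegree ≤ d := hrank ▸ minpoly.natDegree_le α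
          have hpos := minpoly.natDegree_pos (hItg α)
          rw [Finset.mem_biUnion]
          refine ⟨(minpoly (ZMod p) α).natDegree, Finset.mem_range.2 (lt_of_le_of_ne hle hα.2), ?_⟩
          set e := (minpoly (ZMod p) α).natDegree with he
          have hp1 : 1 < p := by omega
          have hne : (X ^ p ^ e - X : K[X]) ≠ 0 := FiniteField.X_pow_card_pow_sub_X_ne_zero K (by omega) hp1
          rw [Multiset.mem_toFinset, mem_roots hne, IsRoot.def, eval_sub, eval_pow, eval_X]
          have hf := IntermediateField.adjoin.finrank (hItg α)
          have hc : Nat.card (IntermediateField.adjoin (ZMod p) {α}) = p ^ e := by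
            rw [Module.natCard_eq_pow_finrank (K := ZMod p), hf, Nat.card_zmod]
          have : Fintype (IntermediateField.adjoin (ZMod p) {α}) := Fintype.ofFinite _
          have h2 := FiniteField.pow_card (IntermediateField.AdjoinSimple.gen (ZMod p) α)
          rw [← Nat.card_eq_fintype_card, hc] at h2
          have h3 := congrArg (fun z : IntermediateField.adjoin (ZMod p) {α} => (z : K)) h2
          simp only [IntermediateField.AdjoinSimple.coe_gen, SubmonoidClass.coe_pow] at h3
          rw [h3, sub_self]
      _ ≤ ∑ e ∈ Finset.range d, ((X ^ p ^ e - X : K[X]).roots.toFinset).card := Finset.card_biUnion_le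
      _ ≤ _ := by
          refine Finset.sum_le_sum fun e _ => ?_
          refine (Multiset.toFinset_card_le _).trans ((card_roots' _).trans ?_)
          refine (natDegree_sub_le _ _).trans (max_le (natDegree_X_pow_le _) ?_)
          refine natDegree_X_le.trans ?_
          exact Nat.one_le_pow _ _ (by omega)
  have hgeom : ∀ k, 2 * ∑ e ∈ Finset.range k, p ^ e ≤ p ^ k := by
    intro k
    induction k with
    | zero => simp
    | succ k ih =>
      rw [Finset.sum_range_succ, pow_succ]
      nlinarith [Nat.zero_le (p ^ k)]
  have htot := Finset.card_filter_add_card_filter_not (s := (Finset.univ : Finset K)) (fun α => (minpoly (ZMod p) α).natDegree = d)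
  rw [Finset.card_univ, hcardK, ← hG] at htot
  have hGI : G.card ≤ d * I.card := by
    have him : G.image (fun α => fun i : Fin d => (minpoly (ZMod p) α).coeff i) ⊆ I := by
      intro v hv
      obtain ⟨α, hα, rfl⟩ := Finset.mem_image.1 hv
      rw [hG, Finset.mem_filter] at hα
      rw [hI, Finset.mem_filter, monic_eq_low (minpoly.monic (hItg α)) hα.2]
      exact ⟨Finset.mem_univ _, minpoly.irreducible (hItg α)⟩
    refine le_trans (Finset.card_le_mul_card_image (f := fun α => fun i : Fin d => (minpoly (ZMod p) α).coeff i) G d ?_)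
      (Nat.mul_le_mul_left _ (Finset.card_le_card him))
    intro v _
    have hq : ((X ^ d + low d v).map (algebraMap (ZMod p) K)).Monic := (monic_low d v).map _
    calc _ ≤ (((X ^ d + low d v).map (algebraMap (ZMod p) K)).roots.toFinset).card := by
          apply Finset.card_le_card
          intro α hα
          obtain ⟨hα1, rfl⟩ := Finset.mem_filter.1 hα
          have hα2 := (Finset.mem_filter.1 hα1).2
          rw [Multiset.mem_toFinset, mem_roots hq.ne_zero, monic_eq_low (minpoly.monic (hItg α)) hα2, IsRoot.def,
            eval_map_algebraMap, minpoly.aeval]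
      _ ≤ d := by
          refine (Multiset.toFinset_card_le _).trans ((card_roots' _).trans ?_)
          rw [natDegree_map, natDegree_monic_low]
  have h1 := hgeom d
  have h2 : 2 * G.card ≤ 2 * (d * I.card) := by omega
  rw [mul_assoc]
  omega

/-- At least a proportion `1 / (2 * d)` of monic polynomials of degree `d` over `𝔽_p` is irreducible. -/
theorem irr_count (p : ℕ) [Fact p.Prime] (hp : 3 ≤ p) (d : ℕ) (hd : 1 ≤ d) :
    p ^ d ≤ 2 * d * {v : Fin d → ZMod p | Irreducible (X ^ d + low d v)}.ncard := by
  have : Fintype (GaloisField p d) := Fintype.ofFinite _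
  exact irr_count_aux p hp d (GaloisField p d) (GaloisField.finrank p (by omega))

/-- The density of a set of residue vectors is preserved under pull-back by surjective additive maps. -/
lemma density_comap {p : ℕ} [NeZero p] {κ ι : Type*} [Fintype κ] [Fintype ι]
    (f : (ι → ZMod p) →+ (κ → ZMod p)) (hf : Function.Surjective f) (S : Set (κ → ZMod p)) (c : ℝ)
    (hS : c * (p : ℝ) ^ Fintype.card κ ≤ S.ncard) :
    c * (p : ℝ) ^ Fintype.card ι ≤ (f ⁻¹' S).ncard := by
  classical
  set k := (Finset.univ.filter fun x => f x = 0).card with hk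
  have hall : ∀ b, (Finset.univ.filter fun x => f x = b).card = k := fun b =>
    AddMonoidHom.card_fiber_eq_of_mem_range f (hf b) (hf 0)
  have h1 : p ^ Fintype.card ι = p ^ Fintype.card κ * k := by
    have := Finset.card_eq_sum_card_fiberwise (f := f) (s := Finset.univ)
      (t := Finset.univ) (fun _ _ => Finset.mem_coe.2 (Finset.mem_univ _))
    simpa [hall] using this
  have h2 : (f ⁻¹' S).ncard = S.ncard * k := by
    rw [Set.ncard_eq_toFinset_card', Set.ncard_eq_toFinset_card']
    have := Finset.card_eq_sum_card_fiberwise (f := f) (s := (f ⁻¹' S).toFinset)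
      (t := S.toFinset) (fun x hx => by simpa using hx)
    rw [this, Finset.sum_congr rfl (g := fun _ => k)]
    · simp
    · intro b hb
      rw [← hall b]
      congr 1
      ext x
      simp only [Finset.mem_filter, Set.mem_toFinset, Set.mem_preimage, Finset.mem_univ, true_and, and_iff_right_iff_imp]
      rintro rfl
      simpa using hb
  have h1' : (p : ℝ) ^ Fintype.card ι = (p : ℝ) ^ Fintype.card κ * k := by exact_mod_cast h1
  rw [h1', h2, ← mul_assoc]
  push_cast
  gcongr

section

/-- Coefficient vectors of irreducible polynomials of degree exactly `m`. -/
def irrSet (R : Type*) [CommRing R] (m : ℕ) : Set (Fin (m + 1) → R) :=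
  {v | (low (m + 1) v).natDegree = m ∧ Irreducible (low (m + 1) v)}

/-- Coefficient vectors of monic irreducible polynomials of degree `n`. -/
def monIrrSet (R : Type*) [CommRing R] (n : ℕ) : Set (Fin n → R) :=
  {v | Irreducible (X ^ n + low n v)}

/-- Monic polynomials of degree `m + 1` that are linear times irreducible of degree `m`. -/
def linIrrSet (R : Type*) [CommRing R] (m : ℕ) : Set (Fin (m + 1) → R) :=
  {v | ∃ (a : R) (g : R[X]), Irreducible g ∧ g.Monic ∧ g.natDegree = m ∧ X ^ (m + 1) + low (m + 1) v = (X - C a) * g}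

/-- Monic polynomials of degree `r + 2` that are an irreducible quadratic times distinct linear factors. -/
def quadLinSet (R : Type*) [CommRing R] (r : ℕ) : Set (Fin (r + 2) → R) :=
  {v | ∃ (s : Finset R) (g : R[X]), Irreducible g ∧ g.Monic ∧ g.natDegree = 2 ∧
    X ^ (r + 2) + low (r + 2) v = g * ∏ a ∈ s, (X - C a)}

/-- Pairs of polynomials `(a₀, a₁)` of degree at most `D` with `a₁² - 4 a₀` irreducible of degree `2 D`. -/
def discSet (R : Type*) [CommRing R] (D : ℕ) : Set ((Fin 2 × Fin (D + 1)) → R) :=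
  {x | ((low (D + 1) fun j => x (1, j)) ^ 2 - 4 * (low (D + 1) fun j => x (0, j))).natDegree = 2 * D ∧
    Irreducible ((low (D + 1) fun j => x (1, j)) ^ 2 - 4 * (low (D + 1) fun j => x (0, j)))}

lemma dens_of_nat {p a N d : ℕ} (ha : 0 < a) (h : p ^ d ≤ a * N) : (1 / (a : ℝ)) * (p : ℝ) ^ d ≤ N := by
  rw [one_div, inv_mul_le_iff₀ (by positivity)]
  exact_mod_cast h

variable (p : ℕ) [Fact p.Prime]

lemma monIrr_count (hp : 3 ≤ p) (d : ℕ) (hd : 1 ≤ d) : p ^ d ≤ 2 * d * (monIrrSet (ZMod p) d).ncard :=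
  irr_count p hp d hd

lemma irrSet_count (hp : 3 ≤ p) (m : ℕ) (hm : 1 ≤ m) : p ^ (m + 1) ≤ 4 * m * (irrSet (ZMod p) m).ncard := by
  set f : (ZMod p)ˣ × (Fin m → ZMod p) → (Fin (m + 1) → ZMod p) := fun x i =>
    (C (x.1 : ZMod p) * (X ^ m + low m x.2)).coeff i with hf
  have hdeg : ∀ x : (ZMod p)ˣ × (Fin m → ZMod p), (C (x.1 : ZMod p) * (X ^ m + low m x.2)).natDegree = m := fun x => by
    rw [natDegree_C_mul x.1.ne_zero, natDegree_monic_low]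
  have hlow : ∀ x, low (m + 1) (f x) = C (x.1 : ZMod p) * (X ^ m + low m x.2) := fun x => by
    rw [hf]
    refine low_of_degree (lt_of_le_of_lt degree_le_natDegree ?_)
    rw [hdeg]
    exact_mod_cast Nat.lt_succ_self m
  have hle : (Set.univ ×ˢ monIrrSet (ZMod p) m : Set ((ZMod p)ˣ × (Fin m → ZMod p))).ncard ≤ (irrSet (ZMod p) m).ncard := by
    refine Set.ncard_le_ncard_of_injOn f ?_ ?_ (Set.toFinite _)
    · rintro x ⟨_, hx⟩
      simp only [irrSet, Set.mem_ofPred_eq]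
      rw [hlow]
      refine ⟨hdeg x, ?_⟩
      rw [irreducible_isUnit_mul (isUnit_C.2 x.1.isUnit)]
      exact hx
    · intro x _ y _ hxy
      have h1 : C (x.1 : ZMod p) * (X ^ m + low m x.2) = C (y.1 : ZMod p) * (X ^ m + low m y.2) := by
        rw [← hlow, ← hlow, hxy]
      have h2 := congrArg leadingCoeff h1
      simp only [leadingCoeff_mul, leadingCoeff_C, (monic_low m _).leadingCoeff, mul_one] at h2
      have h3 : x.1 = y.1 := Units.ext h2
      rw [h3] at h1
      have h4 := mul_left_cancel₀ (C_ne_zero.2 y.1.ne_zero) h1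
      exact Prod.ext h3 (low_injective m (add_left_cancel h4))
  rw [Set.ncard_prod, Set.ncard_univ, Nat.card_eq_fintype_card, ZMod.card_units] at hle
  have h1 := monIrr_count p hp m hm
  rw [pow_succ]
  have : p ≤ 2 * (p - 1) := by omega
  calc p ^ m * p ≤ (2 * m * (monIrrSet (ZMod p) m).ncard) * (2 * (p - 1)) := Nat.mul_le_mul h1 this
    _ = 4 * m * ((p - 1) * (monIrrSet (ZMod p) m).ncard) := by ring
    _ ≤ _ := Nat.mul_le_mul_left _ hle

lemma no_root_of_irr {F : Type*} [Field F] {g : F[X]} (hg : Irreducible g) (h2 : 2 ≤ g.natDegree) (a : F) : g.eval a ≠ 0 := by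
  intro h
  have := degree_eq_one_of_irreducible_of_root hg h
  rw [degree_eq_natDegree hg.ne_zero] at this
  have : g.natDegree = 1 := by exact_mod_cast this
  omega

lemma linIrr_count (hp : 3 ≤ p) (m : ℕ) (hm : 2 ≤ m) : p ^ (m + 1) ≤ 2 * m * (linIrrSet (ZMod p) m).ncard := by
  set f : ZMod p × (Fin m → ZMod p) → (Fin (m + 1) → ZMod p) := fun x i =>
    ((X - C x.1) * (X ^ m + low m x.2)).coeff i with hf
  have hmon : ∀ x : ZMod p × (Fin m → ZMod p), ((X - C x.1) * (X ^ m + low m x.2)).Monic := fun x =>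
    (monic_X_sub_C _).mul (monic_low _ _)
  have hdeg : ∀ x : ZMod p × (Fin m → ZMod p), ((X - C x.1) * (X ^ m + low m x.2)).natDegree = m + 1 := fun x => by
    rw [(monic_X_sub_C _).natDegree_mul (monic_low _ _), natDegree_X_sub_C, natDegree_monic_low, add_comm]
  have hlow : ∀ x, X ^ (m + 1) + low (m + 1) (f x) = (X - C x.1) * (X ^ m + low m x.2) := fun x =>
    monic_eq_low (hmon x) (hdeg x)
  have hle : (Set.univ ×ˢ monIrrSet (ZMod p) m : Set (ZMod p × (Fin m → ZMod p))).ncard ≤ (linIrrSet (ZMod p) m).ncard := by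
    refine Set.ncard_le_ncard_of_injOn f ?_ ?_ (Set.toFinite _)
    · rintro x ⟨_, hx⟩
      exact ⟨x.1, X ^ m + low m x.2, hx, monic_low _ _, natDegree_monic_low _ _, hlow x⟩
    · rintro x ⟨_, hx⟩ y ⟨_, hy⟩ hxy
      have h1 : (X - C x.1) * (X ^ m + low m x.2) = (X - C y.1) * (X ^ m + low m y.2) := by
        rw [← hlow, ← hlow, hxy]
      have h2 := congrArg (eval x.1) h1
      simp only [eval_mul, eval_sub, eval_X, eval_C, sub_self, zero_mul] at h2
      have h3 : x.1 = y.1 := by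
        rcases mul_eq_zero.1 h2.symm with h | h
        · exact sub_eq_zero.1 h
        · exact absurd h (no_root_of_irr hy (by rw [natDegree_monic_low]; exact hm) _)
      rw [h3] at h1
      have h4 := mul_left_cancel₀ (X_sub_C_ne_zero y.1) h1
      exact Prod.ext h3 (low_injective m (add_left_cancel h4))
  rw [Set.ncard_prod, Set.ncard_univ, Nat.card_eq_fintype_card, ZMod.card] at hle
  have h1 := monIrr_count p hp m (by omega)
  calc p ^ (m + 1) = p * p ^ m := by ring
    _ ≤ p * (2 * m * (monIrrSet (ZMod p) m).ncard) := Nat.mul_le_mul_left _ h1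
    _ = 2 * m * (p * (monIrrSet (ZMod p) m).ncard) := by ring
    _ ≤ _ := Nat.mul_le_mul_left _ hle

lemma quadLin_count (r : ℕ) (hp : 3 + 2 * r ≤ p) :
    p ^ (r + 2) ≤ 4 * (2 ^ r * r.factorial) * (quadLinSet (ZMod p) r).ncard := by
  classical
  set f : Finset (ZMod p) × (Fin 2 → ZMod p) → (Fin (r + 2) → ZMod p) := fun x i =>
    ((X ^ 2 + low 2 x.2) * ∏ a ∈ x.1, (X - C a)).coeff i with hf
  set T : Set (Finset (ZMod p)) := {s | s.card = r} with hT
  have hmon : ∀ x : Finset (ZMod p) × (Fin 2 → ZMod p), ((X ^ 2 + low 2 x.2) * ∏ a ∈ x.1, (X - C a)).Monic := fun x =>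
    (monic_low _ _).mul (monic_prod_of_monic _ _ fun a _ => monic_X_sub_C a)
  have hdeg : ∀ x : Finset (ZMod p) × (Fin 2 → ZMod p), x.1 ∈ T →
      ((X ^ 2 + low 2 x.2) * ∏ a ∈ x.1, (X - C a)).natDegree = r + 2 := fun x hx => by
    rw [(monic_low _ _).natDegree_mul (monic_prod_of_monic _ _ fun a _ => monic_X_sub_C a), natDegree_monic_low,
      natDegree_prod_of_monic _ _ fun a _ => monic_X_sub_C a]
    simp only [natDegree_X_sub_C, Finset.sum_const, smul_eq_mul, mul_one]
    have : x.1.card = r := hx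
    omega
  have hlow : ∀ x : Finset (ZMod p) × (Fin 2 → ZMod p), x.1 ∈ T →
      X ^ (r + 2) + low (r + 2) (f x) = (X ^ 2 + low 2 x.2) * ∏ a ∈ x.1, (X - C a) := fun x hx =>
    monic_eq_low (hmon x) (hdeg x hx)
  have hle : (T ×ˢ monIrrSet (ZMod p) 2 : Set (Finset (ZMod p) × (Fin 2 → ZMod p))).ncard ≤ (quadLinSet (ZMod p) r).ncard := by
    refine Set.ncard_le_ncard_of_injOn f ?_ ?_ (Set.toFinite _)
    · rintro x ⟨hxT, hx⟩
      exact ⟨x.1, X ^ 2 + low 2 x.2, hx, monic_low _ _, natDegree_monic_low _ _, hlow x hxT⟩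
    · rintro x ⟨hxT, hx⟩ y ⟨hyT, hy⟩ hxy
      have h1 : (X ^ 2 + low 2 x.2) * ∏ a ∈ x.1, (X - C a) = (X ^ 2 + low 2 y.2) * ∏ a ∈ y.1, (X - C a) := by
        rw [← hlow x hxT, ← hlow y hyT, hxy]
      have hroot : ∀ z : Finset (ZMod p) × (Fin 2 → ZMod p), z.2 ∈ monIrrSet (ZMod p) 2 → ∀ b,
          ((X ^ 2 + low 2 z.2) * ∏ a ∈ z.1, (X - C a)).eval b = 0 ↔ b ∈ z.1 := by
        intro z hz b
        rw [eval_mul, mul_eq_zero, or_iff_right (no_root_of_irr hz (by rw [natDegree_monic_low]) b), eval_prod,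
          Finset.prod_eq_zero_iff]
        simp [sub_eq_zero]
      have h3 : x.1 = y.1 := by
        ext b
        rw [← hroot x hx, ← hroot y hy, h1]
      rw [h3] at h1
      have h4 := mul_right_cancel₀ (Finset.prod_ne_zero_iff.2 fun a _ => X_sub_C_ne_zero a) h1
      exact Prod.ext h3 (low_injective 2 (add_left_cancel h4))
  have hTc : T.ncard = p.choose r := by
    have : T = ((Finset.univ : Finset (ZMod p)).powersetCard r : Set (Finset (ZMod p))) := by
      ext s; simp [hT]
    rw [this, Set.ncard_coe_finset, Finset.card_powersetCard, Finset.card_univ, ZMod.card]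
  rw [Set.ncard_prod, hTc] at hle
  have h1 := monIrr_count p (by omega) 2 (by omega)
  have h2 : (p + 1 - r) ^ r ≤ r.factorial * p.choose r := by
    rw [← Nat.descFactorial_eq_factorial_mul_choose]
    exact Nat.pow_sub_le_descFactorial p r
  have h3 : p ^ r ≤ 2 ^ r * (p + 1 - r) ^ r := by
    rw [← mul_pow]
    exact Nat.pow_le_pow_left (by omega) _
  calc p ^ (r + 2) = p ^ r * p ^ 2 := by ring
    _ ≤ (2 ^ r * (r.factorial * p.choose r)) * (2 * 2 * (monIrrSet (ZMod p) 2).ncard) :=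
        Nat.mul_le_mul (h3.trans (Nat.mul_le_mul_left _ h2)) h1
    _ = 4 * (2 ^ r * r.factorial) * (p.choose r * (monIrrSet (ZMod p) 2).ncard) := by ring
    _ ≤ _ := Nat.mul_le_mul_left _ hle

end

section

variable (p : ℕ) [Fact p.Prime]

lemma two_ne_zero_zmod (hp : 3 ≤ p) : (2 : ZMod p) ≠ 0 := by
  intro h
  have h' : ((2 : ℕ) : ZMod p) = 0 := by exact_mod_cast h
  rw [ZMod.natCast_eq_zero_iff] at h'
  have := Nat.le_of_dvd (by norm_num) h'
  omega

lemma sq_sub_monic (D : ℕ) (hD : 1 ≤ D) (w : Fin D → ZMod p) (c : Fin (D + 1) → ZMod p) :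
    ((X ^ D + low D w) ^ 2 - low (D + 1) c).Monic ∧ ((X ^ D + low D w) ^ 2 - low (D + 1) c).natDegree = 2 * D := by
  have h1 : ((X ^ D + low D w) ^ 2).Monic := (monic_low D w).pow 2
  have h2 : ((X ^ D + low D w) ^ 2).natDegree = 2 * D := by rw [(monic_low D w).natDegree_pow, natDegree_monic_low]
  have h3 : (low (D + 1) c).degree < ((X ^ D + low D w) ^ 2).degree := by
    rw [degree_eq_natDegree h1.ne_zero, h2]
    refine lt_of_lt_of_le (low_degree _ _) ?_
    exact_mod_cast (by omega : D + 1 ≤ 2 * D)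
  exact ⟨h1.sub_of_left h3, by
    rw [natDegree_eq_of_degree_eq (degree_sub_eq_left_of_degree_lt h3), h2]⟩

/-- The map `(b, c) ↦ b ^ 2 - c`, from pairs with `b` monic of degree `D` and `c` of degree at most `D` to
monic polynomials of degree `2 * D`, has fibres of size at most `p`, since the constant term of `b` determines
the pair. So the reducible values are taken at most `p` times each, which leaves at least `p` times as many
pairs as there are irreducible polynomials. -/
lemma sq_sub_count (hp : 3 ≤ p) (D : ℕ) (hD : 1 ≤ D) :
    p ^ (2 * D + 1) ≤ 4 * D * {x : (Fin D → ZMod p) × (Fin (D + 1) → ZMod p) |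
      Irreducible ((X ^ D + low D x.1) ^ 2 - low (D + 1) x.2)}.ncard := by
  classical
  set f : (Fin D → ZMod p) × (Fin (D + 1) → ZMod p) → (Fin (2 * D) → ZMod p) := fun x i =>
    ((X ^ D + low D x.1) ^ 2 - low (D + 1) x.2).coeff i with hf
  have hlow : ∀ x, X ^ (2 * D) + low (2 * D) (f x) = (X ^ D + low D x.1) ^ 2 - low (D + 1) x.2 := fun x =>
    monic_eq_low (sq_sub_monic p D hD x.1 x.2).1 (sq_sub_monic p D hD x.1 x.2).2
  set B := Finset.univ.filter fun x : (Fin D → ZMod p) × (Fin (D + 1) → ZMod p) =>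
    ¬ Irreducible ((X ^ D + low D x.1) ^ 2 - low (D + 1) x.2) with hB
  set A := Finset.univ.filter fun x : (Fin D → ZMod p) × (Fin (D + 1) → ZMod p) =>
    Irreducible ((X ^ D + low D x.1) ^ 2 - low (D + 1) x.2) with hA
  set I := Finset.univ.filter fun v : Fin (2 * D) → ZMod p => Irreducible (X ^ (2 * D) + low (2 * D) v) with hI
  set I' := Finset.univ.filter fun v : Fin (2 * D) → ZMod p => ¬ Irreducible (X ^ (2 * D) + low (2 * D) v) with hI'
  have hAB : A.card + B.card = p ^ (2 * D + 1) := by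
    rw [hA, hB, Finset.card_filter_add_card_filter_not]
    simp
    ring
  have hII : I.card + I'.card = p ^ (2 * D) := by
    rw [hI, hI', Finset.card_filter_add_card_filter_not]
    simp
  have hBI : B.card ≤ p * I'.card := by
    have him : B.image f ⊆ I' := by
      intro v hv
      obtain ⟨x, hx, rfl⟩ := Finset.mem_image.1 hv
      rw [hI', Finset.mem_filter, hlow]
      exact ⟨Finset.mem_univ _, (Finset.mem_filter.1 hx).2⟩
    refine le_trans (Finset.card_le_mul_card_image (f := f) B p ?_) (Nat.mul_le_mul_left _ (Finset.card_le_card him))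
    intro v _
    suffices hsuff : (B.filter fun a => f a = v).card ≤ (Finset.univ : Finset (ZMod p)).card from
      hsuff.trans_eq ((Finset.card_univ (α := ZMod p)).trans (ZMod.card p))
    refine Finset.card_le_card_of_injOn (fun x => x.1 ⟨0, hD⟩) (fun _ _ => Finset.mem_coe.2 (Finset.mem_univ _)) ?_
    intro x hx y hy hxy
    have hx' := (Finset.mem_filter.1 (Finset.mem_coe.1 hx)).2
    have hy' := (Finset.mem_filter.1 (Finset.mem_coe.1 hy)).2
    have h1 : (X ^ D + low D x.1) ^ 2 - low (D + 1) x.2 = (X ^ D + low D y.1) ^ 2 - low (D + 1) y.2 := by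
      rw [← hlow, ← hlow, hx', hy']
    have h2 : (low D x.1 - low D y.1) * (C 2 * X ^ D + (low D x.1 + low D y.1)) = low (D + 1) x.2 - low (D + 1) y.2 := by
      rw [map_ofNat C 2]
      linear_combination h1
    have hdeg : (C (2 : ZMod p) * X ^ D + (low D x.1 + low D y.1)).degree = ((D : ℕ) : WithBot ℕ) := by
      rw [degree_add_eq_left_of_degree_lt, degree_C_mul_X_pow _ (two_ne_zero_zmod p hp)]
      rw [degree_C_mul_X_pow _ (two_ne_zero_zmod p hp)]
      exact lt_of_le_of_lt (degree_add_le _ _) (max_lt (low_degree _ _) (low_degree _ _))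
    have h3 : low D x.1 - low D y.1 = 0 := by
      by_contra hne
      have h4 := congrArg degree h2
      rw [degree_mul, hdeg, degree_eq_natDegree hne] at h4
      have h5 : (low (D + 1) x.2 - low (D + 1) y.2).degree < ((D + 1 : ℕ) : WithBot ℕ) :=
        lt_of_le_of_lt (degree_sub_le _ _) (max_lt (low_degree _ _) (low_degree _ _))
      rw [← h4] at h5
      have h6 : (low D x.1 - low D y.1).natDegree + D < D + 1 := by exact_mod_cast h5
      have h7 := eq_C_of_natDegree_eq_zero (by omega : (low D x.1 - low D y.1).natDegree = 0)
      apply hne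
      rw [h7, coeff_sub, low_coeff, low_coeff, dif_pos (by omega), dif_pos (by omega)]
      have : x.1 ⟨0, hD⟩ = y.1 ⟨0, hD⟩ := hxy
      rw [this, sub_self, C_0]
    rw [h3, zero_mul] at h2
    exact Prod.ext (low_injective D (sub_eq_zero.1 h3)) (low_injective (D + 1) (sub_eq_zero.1 h2.symm))
  have h1 := monIrr_count p hp (2 * D) (by omega)
  have e1 : (monIrrSet (ZMod p) (2 * D)).ncard = I.card := by
    rw [← Set.ncard_coe_finset]; congr 1; ext v; simp [hI, monIrrSet]
  have e2 : {x : (Fin D → ZMod p) × (Fin (D + 1) → ZMod p) |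
      Irreducible ((X ^ D + low D x.1) ^ 2 - low (D + 1) x.2)}.ncard = A.card := by
    rw [← Set.ncard_coe_finset]; congr 1; ext v; simp [hA]
  rw [e1] at h1
  rw [e2]
  have h2 : p * I.card ≤ A.card := by
    have : p * I.card + p * I'.card = A.card + B.card := by rw [← mul_add, hII, hAB]; ring
    omega
  calc p ^ (2 * D + 1) = p * p ^ (2 * D) := by ring
    _ ≤ p * (2 * (2 * D) * I.card) := Nat.mul_le_mul_left _ h1
    _ = 4 * D * (p * I.card) := by ring
    _ ≤ _ := Nat.mul_le_mul_left _ h2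

lemma disc_count (hp : 3 ≤ p) (D : ℕ) (hD : 1 ≤ D) :
    p ^ (2 * (D + 1)) ≤ 8 * D * (discSet (ZMod p) D).ncard := by
  set T := {x : (Fin D → ZMod p) × (Fin (D + 1) → ZMod p) |
      Irreducible ((X ^ D + low D x.1) ^ 2 - low (D + 1) x.2)} with hT
  set f : (ZMod p)ˣ × ((Fin D → ZMod p) × (Fin (D + 1) → ZMod p)) → ((Fin 2 × Fin (D + 1)) → ZMod p) := fun x ij =>
    if ij.1 = 0 then ((x.1 : ZMod p) ^ 2 / 4) * x.2.2 ij.2 else (C (x.1 : ZMod p) * (X ^ D + low D x.2.1)).coeff ij.2 with hf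
  have h4 : (4 : ZMod p) ≠ 0 := by
    have := pow_ne_zero 2 (two_ne_zero_zmod p hp)
    norm_num at this
    exact this
  have hl0 : ∀ x, (low (D + 1) fun j => f x (0, j)) = C ((x.1 : ZMod p) ^ 2 / 4) * low (D + 1) x.2.2 := by
    intro x
    ext k
    rw [coeff_C_mul, low_coeff, low_coeff]
    split_ifs <;> simp [hf]
  have hl1 : ∀ x, (low (D + 1) fun j => f x (1, j)) = C (x.1 : ZMod p) * (X ^ D + low D x.2.1) := by
    intro x
    simp only [hf, one_ne_zero, if_false]
    refine low_of_degree (lt_of_le_of_lt degree_le_natDegree ?_)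
    rw [natDegree_C_mul x.1.ne_zero, natDegree_monic_low]
    exact_mod_cast Nat.lt_succ_self D
  have hd : ∀ x, (low (D + 1) fun j => f x (1, j)) ^ 2 - 4 * (low (D + 1) fun j => f x (0, j)) =
      C ((x.1 : ZMod p) ^ 2) * ((X ^ D + low D x.2.1) ^ 2 - low (D + 1) x.2.2) := by
    intro x
    have e4 : (4 : (ZMod p)[X]) = C 4 := by rw [map_ofNat C 4]
    rw [hl0, hl1, mul_sub, mul_pow, ← C_pow, ← mul_assoc, e4, ← C_mul, mul_div_cancel₀ _ h4]
  have hle : (Set.univ ×ˢ T : Set ((ZMod p)ˣ × ((Fin D → ZMod p) × (Fin (D + 1) → ZMod p)))).ncard ≤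
      (discSet (ZMod p) D).ncard := by
    refine Set.ncard_le_ncard_of_injOn f ?_ ?_ (Set.toFinite _)
    · rintro x ⟨_, hx⟩
      simp only [discSet, Set.mem_ofPred_eq]
      rw [hd]
      have hu : ((x.1 : ZMod p) ^ 2) ≠ 0 := pow_ne_zero 2 x.1.ne_zero
      rw [natDegree_C_mul hu, irreducible_isUnit_mul (isUnit_C.2 hu.isUnit)]
      exact ⟨(sq_sub_monic p D hD _ _).2, hx⟩
    · intro x _ y _ hxy
      have h1 : C (x.1 : ZMod p) * (X ^ D + low D x.2.1) = C (y.1 : ZMod p) * (X ^ D + low D y.2.1) := by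
        rw [← hl1, ← hl1, hxy]
      have h0 : C ((x.1 : ZMod p) ^ 2 / 4) * low (D + 1) x.2.2 = C ((y.1 : ZMod p) ^ 2 / 4) * low (D + 1) y.2.2 := by
        rw [← hl0, ← hl0, hxy]
      have h2 := congrArg leadingCoeff h1
      simp only [leadingCoeff_mul, leadingCoeff_C, (monic_low D _).leadingCoeff, mul_one] at h2
      have h3 : x.1 = y.1 := Units.ext h2
      rw [h3] at h1 h0
      have h5 := mul_left_cancel₀ (C_ne_zero.2 y.1.ne_zero) h1
      have h6 := mul_left_cancel₀ (C_ne_zero.2 (div_ne_zero (pow_ne_zero 2 y.1.ne_zero) h4)) h0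
      exact Prod.ext h3 (Prod.ext (low_injective D (add_left_cancel h5)) (low_injective (D + 1) h6))
  rw [Set.ncard_prod, Set.ncard_univ, Nat.card_eq_fintype_card, ZMod.card_units] at hle
  have h1 := sq_sub_count p hp D hD
  rw [← hT] at h1
  have : p ≤ 2 * (p - 1) := by omega
  calc p ^ (2 * (D + 1)) = p ^ (2 * D + 1) * p := by ring
    _ ≤ (4 * D * T.ncard) * (2 * (p - 1)) := Nat.mul_le_mul h1 this
    _ = 8 * D * ((p - 1) * T.ncard) := by ring
    _ ≤ _ := Nat.mul_le_mul_left _ hle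

end

/-! ### Reduction modulo primes and Galois groups -/

/-- The leading coefficient need not be one: the degree is only assumed not to drop modulo `p`. -/
lemma irreducible_rat_of_zmod (f : ℤ[X]) (p : ℕ) [Fact p.Prime]
    (hdeg : (f.map (Int.castRingHom (ZMod p))).natDegree = f.natDegree)
    (hirr : Irreducible (f.map (Int.castRingHom (ZMod p)))) :
    Irreducible (f.map (Int.castRingHom ℚ)) := by
  set φ := Int.castRingHom (ZMod p)
  have hf0 : f ≠ 0 := by rintro rfl; simp at hirr
  have hc0 : f.content ≠ 0 := by rwa [Ne, content_eq_zero_iff]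
  have hfc := f.eq_C_content_mul_primPart
  set g := f.primPart with hg
  have hfm : f.map φ = C (φ f.content) * g.map φ := by
    conv_lhs => rw [hfc]
    simp
  have hφc : φ f.content ≠ 0 := by
    intro h; rw [h] at hfm; simp at hfm; rw [hfm] at hirr; simp at hirr
  have hirr' : Irreducible (g.map φ) := by
    rw [hfm, mul_comm] at hirr
    exact (irreducible_mul_isUnit (isUnit_C.2 (Ne.isUnit hφc))).1 hirr
  have hgd : (g.map φ).natDegree = g.natDegree := by
    rw [hfm, natDegree_C_mul hφc] at hdeg
    rw [hdeg, hg, natDegree_primPart]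
  have hgirr : Irreducible g := by
    refine ⟨fun hu => hirr'.not_isUnit (hu.map (mapRingHom φ)), ?_⟩
    intro a b hab
    have ha0 : a ≠ 0 := by rintro rfl; rw [zero_mul] at hab; rw [hab] at hirr'; simp at hirr'
    have hb0 : b ≠ 0 := by rintro rfl; rw [mul_zero] at hab; rw [hab] at hirr'; simp at hirr'
    have hm : g.map φ = a.map φ * b.map φ := by rw [hab, Polynomial.map_mul]
    have hd1 := natDegree_mul ha0 hb0
    have hma : a.map φ ≠ 0 := by intro h; rw [h, zero_mul] at hm; rw [hm] at hirr'; simp at hirr'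
    have hmb : b.map φ ≠ 0 := by intro h; rw [h, mul_zero] at hm; rw [hm] at hirr'; simp at hirr'
    have hd2 := natDegree_mul hma hmb
    rw [← hm, hgd, hab, hd1] at hd2
    have h1 : (a.map φ).natDegree ≤ a.natDegree := natDegree_map_le
    have h2 : (b.map φ).natDegree ≤ b.natDegree := natDegree_map_le
    have hprim : g.IsPrimitive := f.isPrimitive_primPart
    have key : ∀ c : ℤ[X], c ∣ g → (c.map φ).natDegree = c.natDegree → IsUnit (c.map φ) →
        IsUnit c := by
      intro c hc hcd hu
      have h0 : c.natDegree = 0 := by rw [← hcd]; exact natDegree_eq_zero_of_isUnit hu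
      rw [eq_C_of_natDegree_eq_zero h0] at hc ⊢
      exact isUnit_C.2 (hprim _ hc)
    rcases hirr'.isUnit_or_isUnit hm with h | h
    · exact Or.inl (key a ⟨b, hab⟩ (by omega) h)
    · exact Or.inr (key b ⟨a, by rw [hab, mul_comm]⟩ (by omega) h)
  have h3 := (IsPrimitive.Int.irreducible_iff_irreducible_map_cast f.isPrimitive_primPart).1 hgirr
  rw [hfc, Polynomial.map_mul, Polynomial.map_C, mul_comm]
  exact (irreducible_mul_isUnit (isUnit_C.2 (Ne.isUnit (by simpa using hc0)))).2 h3

/-- A doubly transitive permutation group containing a transposition is the full symmetric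
group; double transitivity is given as transitivity together with an element fixing `r` and
transitive on the remaining points. -/
lemma perm_eq_top {α : Type*} [Fintype α] [DecidableEq α] (G : Subgroup (Equiv.Perm α))
    (htrans : ∀ a b : α, ∃ σ ∈ G, σ a = b)
    (hfix : ∃ r : α, ∀ a b : α, a ≠ r → b ≠ r → ∃ σ ∈ G, σ r = r ∧ σ a = b)
    (hswap : ∃ a b : α, a ≠ b ∧ Equiv.swap a b ∈ G) : G = ⊤ := by
  obtain ⟨r, hr⟩ := hfix
  obtain ⟨a, b, hab, hs⟩ := hswap
  have conj : ∀ σ ∈ G, ∀ x y, Equiv.swap x y ∈ G → Equiv.swap (σ x) (σ y) ∈ G := by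
    intro σ hσ x y hxy
    rw [Equiv.swap_apply_apply]
    exact G.mul_mem (G.mul_mem hσ hxy) (G.inv_mem hσ)
  obtain ⟨τ, hτ, hτa⟩ := htrans a r
  have h1 := conj τ hτ a b hs
  rw [hτa] at h1
  have hb : τ b ≠ r := by rw [← hτa]; exact fun h => hab (τ.injective h).symm
  have h2 : ∀ z, z ≠ r → Equiv.swap r z ∈ G := by
    intro z hz
    obtain ⟨σ, hσ, h3, h4⟩ := hr _ z hb hz
    have := conj σ hσ _ _ h1
    rwa [h3, h4] at this
  rw [eq_top_iff, ← Equiv.Perm.closure_isSwap, Subgroup.closure_le]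
  rintro _ ⟨x, y, hxy, rfl⟩
  obtain ⟨σ, hσ, hσx⟩ := htrans r x
  have hy : σ.symm y ≠ r := by
    intro h; rw [Equiv.symm_apply_eq] at h; exact hxy (by rw [h, hσx])
  have := conj σ hσ _ _ (h2 _ hy)
  rwa [hσx, Equiv.apply_symm_apply] at this

universe w

/-- Existence of Frobenius elements above a residue map `φ : A → 𝔽_p`. -/
lemma exists_frob {A K : Type*} {L : Type w} [CommRing A] [IsDomain A] [IsIntegrallyClosed A]
    [IsNoetherianRing A] [Field K] [Algebra A K] [IsFractionRing A K] [Field L] [Algebra K L]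
    [Algebra A L] [IsScalarTower A K L] [FiniteDimensional K L] [IsGalois K L]
    (p : ℕ) [Fact p.Prime] (φ : A →+* ZMod p) :
    ∃ (E : Type w) (_ : Field E) (_ : Algebra (ZMod p) E) (_ : Finite E) (σ : L ≃ₐ[K] L)
      (e : integralClosure A L →+* E),
      (∀ b c : integralClosure A L, (c : L) = σ b → e c = e b ^ p) ∧
      ∀ a : A, e (algebraMap A (integralClosure A L) a) = algebraMap (ZMod p) E (φ a) := by
  set B := integralClosure A L with hB
  have hφs : Function.Surjective φ := ZMod.ringHom_surjective φ
  have hmax : (RingHom.ker φ).IsMaximal := RingHom.ker_isMaximal_of_surjective φ hφs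
  have hcomm : SMulCommClass (L ≃ₐ[K] L) A L := ⟨fun g a x => by
    rw [Algebra.smul_def, Algebra.smul_def, smul_mul']
    congr 1
    rw [IsScalarTower.algebraMap_apply A K L, AlgEquiv.smul_def, AlgEquiv.commutes]⟩
  have hinj : Function.Injective (algebraMap A L) := by
    rw [IsScalarTower.algebraMap_eq A K L]
    exact (algebraMap K L).injective.comp (IsFractionRing.injective A K)
  have hinjB : Function.Injective (algebraMap A B) := by
    intro x y h
    apply hinj
    rw [IsScalarTower.algebraMap_apply A B L, h, ← IsScalarTower.algebraMap_apply A B L]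
  have hfs : FaithfulSMul A B := (faithfulSMul_iff_algebraMap_injective A B).2 hinjB
  have hfin : Module.Finite A B := IsIntegralClosure.finite A K L B
  have hinv : Algebra.IsInvariant A B (L ≃ₐ[K] L) := by
    refine ⟨fun b hb => ?_⟩
    have h1 : (b : L) ∈ (⊥ : IntermediateField K L) := by
      rw [IsGalois.mem_bot_iff_fixed]
      intro f
      exact congrArg Subtype.val (hb f)
    rw [IntermediateField.mem_bot] at h1
    obtain ⟨k, hk⟩ := h1
    have hbi : IsIntegral A (b : L) := b.2
    rw [← hk, isIntegral_algebraMap_iff (algebraMap K L).injective] at hbi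
    obtain ⟨a, ha⟩ := IsIntegrallyClosed.algebraMap_eq_of_integral hbi
    refine ⟨a, Subtype.ext ?_⟩
    rw [← hk, ← ha, ← IsScalarTower.algebraMap_apply]
    rfl
  obtain ⟨Q, hQmax, hQ⟩ := Ideal.exists_maximal_ideal_liesOver_of_isIntegral (S := B) (RingHom.ker φ)
  have hunder : Q.under A = RingHom.ker φ := hQ.over.symm
  let eq : (A ⧸ Q.under A) ≃+* ZMod p :=
    (Ideal.quotEquivOfEq hunder).trans (RingHom.quotientKerEquivOfSurjective hφs)
  have hfinq : Finite (A ⧸ Q.under A) := Finite.of_equiv _ eq.symm.toEquiv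
  have hfinBQ : Finite (B ⧸ Q) := by
    have : Module.Finite A (B ⧸ Q) := inferInstance
    have : Module.Finite (A ⧸ Q.under A) (B ⧸ Q) := Module.Finite.of_restrictScalars_finite A _ _
    exact Module.finite_of_finite (A ⧸ Q.under A)
  have hprime : Q.IsPrime := hQmax.isPrime
  obtain ⟨σ, hσ⟩ := IsArithFrobAt.exists_of_isInvariant A (L ≃ₐ[K] L) Q
  let _ : Field (B ⧸ Q) := Ideal.Quotient.field Q
  let ψ : ZMod p →+* B ⧸ Q := (algebraMap (A ⧸ Q.under A) (B ⧸ Q)).comp eq.symm.toRingHom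
  let _ : Algebra (ZMod p) (B ⧸ Q) := ψ.toAlgebra
  have hcard : Nat.card (A ⧸ Q.under A) = p := by
    rw [Nat.card_congr eq.toEquiv, Nat.card_zmod]
  refine ⟨B ⧸ Q, inferInstance, inferInstance, hfinBQ, σ, Ideal.Quotient.mk Q, ?_, ?_⟩
  · intro b c hc
    have h1 : c = σ • b := Subtype.ext hc
    have h2 := hσ.mk_apply b
    rw [hcard] at h2
    rw [h1]
    exact h2
  · intro a
    change _ = ψ (φ a)
    have : eq.symm (φ a) = Ideal.Quotient.mk _ a := by
      rw [RingEquiv.symm_apply_eq]; rfl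
    simp only [ψ, RingHom.comp_apply]
    change _ = algebraMap (A ⧸ Q.under A) (B ⧸ Q) (eq.symm (φ a))
    rw [this]
    rfl

/-- Roots of an irreducible polynomial over `𝔽_p` form one Frobenius orbit. -/
lemma frob_orbit {p : ℕ} [Fact p.Prime] {E : Type*} [Field E] [Algebra (ZMod p) E] [Finite E]
    {g : (ZMod p)[X]} (hg : Irreducible g) {a b : E} (ha : aeval a g = 0) (hb : aeval b g = 0) :
    ∃ k : ℕ, b = a ^ p ^ k := by
  have h1 : minpoly (ZMod p) a = minpoly (ZMod p) b := by
    rw [← minpoly.eq_of_irreducible hg ha, ← minpoly.eq_of_irreducible hg hb]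
  have : Algebra.IsAlgebraic (ZMod p) E := inferInstance
  obtain ⟨σ, hσ⟩ := (isConjRoot_iff_exists_algEquiv (K := ZMod p) (x := b) (y := a)).1 h1.symm
  obtain ⟨k, hk⟩ := (FiniteField.bijective_frobeniusAlgEquivOfAlgebraic_pow (ZMod p) E).2 σ
  refine ⟨k, ?_⟩
  rw [← hσ, ← hk]
  simp [FiniteField.coe_frobeniusAlgEquivOfAlgebraic_iterate, AlgEquiv.coe_pow]

/-- If the reduction of `P` along `φ` is separable, then some Frobenius element permutes the roots of `P` in `L`
in the same way as the `p`-th power map permutes the roots of the reduction. -/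
lemma frob_perm {A : Type*} {K : Type*} {L : Type w} [CommRing A] [IsDomain A] [IsIntegrallyClosed A]
    [IsNoetherianRing A] [Field K] [Algebra A K] [IsFractionRing A K]
    [Field L] [Algebra K L] [Algebra A L] [IsScalarTower A K L] [FiniteDimensional K L] [IsGalois K L]
    (P : A[X]) (hP : P.Monic) (p : ℕ) [Fact p.Prime] (φ : A →+* ZMod p)
    (hsep : (P.map φ).Separable) (f : K[X]) (hf : f = P.map (algebraMap A K))
    [Fact ((f.map (algebraMap K L)).Splits)] :
    Fintype.card (f.rootSet L) = P.natDegree ∧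
    ∃ (E : Type w) (_ : Field E) (_ : Algebra (ZMod p) E) (_ : Finite E)
      (π : Equiv.Perm (f.rootSet L)) (ε : f.rootSet L → E),
      π ∈ (Gal.galActionHom f L).range ∧ Function.Injective ε ∧
      (∀ r, ε (π r) = ε r ^ p) ∧ (∀ a : E, aeval a (P.map φ) = 0 ↔ ∃ r, ε r = a) := by
  classical
  set B := integralClosure A L with hB
  obtain ⟨E, i1, i2, i3, σ, e, he1, he2⟩ := exists_frob (A := A) (K := K) (L := L) p φ
  have hfm : f.Monic := by rw [hf]; exact hP.map _
  have hfL : f.map (algebraMap K L) = P.map (algebraMap A L) := by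
    rw [hf, Polynomial.map_map, ← IsScalarTower.algebraMap_eq]
  have hItg : ∀ r ∈ (f.map (algebraMap K L)).roots, r ∈ B := by
    intro r hr
    rw [mem_roots (by exact (hfm.map _).ne_zero), hfL] at hr
    exact ⟨P, hP, by rw [← eval_map]; exact hr⟩
  set s := (f.map (algebraMap K L)).roots with hs
  have hsplit : f.map (algebraMap K L) = (s.map fun a => X - C a).prod :=
    Splits.eq_prod_roots_of_monic Fact.out (hfm.map _)
  set β : {x // x ∈ s} → B := fun r => ⟨r.1, hItg r.1 r.2⟩ with hβ
  have hPB : P.map (algebraMap A B) = ((s.attach.map β).map fun a => X - C a).prod := by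
    have hinj : Function.Injective (algebraMap B L) := Subtype.val_injective
    apply Polynomial.map_injective _ hinj
    rw [Polynomial.map_map, ← IsScalarTower.algebraMap_eq, ← hfL, hsplit,
      Polynomial.map_multiset_prod, Multiset.map_map, Multiset.map_map]
    conv_lhs => rw [← Multiset.attach_map_val s]
    rw [Multiset.map_map]
    congr 1
    apply Multiset.map_congr rfl
    intro x _
    simp [hβ]
    try rfl
  have hcomp : e.comp (algebraMap A B) = (algebraMap (ZMod p) E).comp φ := by
    ext a; exact he2 a
  have hPE : (P.map φ).map (algebraMap (ZMod p) E) =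
      (((s.attach.map fun r => e (β r))).map fun a => X - C a).prod := by
    rw [Polynomial.map_map, ← hcomp, ← Polynomial.map_map, hPB, Polynomial.map_multiset_prod,
      Multiset.map_map, Multiset.map_map, Multiset.map_map]
    congr 1
    apply Multiset.map_congr rfl
    intro x _
    simp
  have hnd : (s.attach.map fun r => e (β r)).Nodup := by
    apply nodup_of_separable_prod
    rw [← hPE]
    exact hsep.map
  have hsnd : s.Nodup := Multiset.nodup_attach.1 (Multiset.Nodup.of_map _ hnd)
  have hmem : ∀ r, r ∈ f.rootSet L ↔ r ∈ s := by
    intro r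
    rw [rootSet, Finset.mem_coe, Multiset.mem_toFinset, aroots_def]
  refine ⟨?_, ?_⟩
  · rw [card_rootSet_eq_natDegree]
    · rw [hf, hP.natDegree_map]
    · have hs2 : (f.map (algebraMap K L)).Separable := by
        rw [← nodup_roots_iff_of_splits (hfm.map _).ne_zero Fact.out]
        exact hsnd
      exact (separable_map _).1 hs2
    · exact Fact.out
  · set ε : f.rootSet L → E := fun r => e (β ⟨r.1, (hmem r.1).1 r.2⟩) with hε
    refine ⟨E, i1, i2, i3, Gal.galActionHom f L (Gal.restrict f L σ), ε, ⟨_, rfl⟩, ?_, ?_, ?_⟩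
    · intro r r' h
      have := Multiset.inj_on_of_nodup_map hnd _ (Multiset.mem_attach s ⟨r.1, (hmem r.1).1 r.2⟩) _
        (Multiset.mem_attach s ⟨r'.1, (hmem r'.1).1 r'.2⟩) h
      exact Subtype.ext (congrArg (fun x => x.1) this)
    · intro r
      refine he1 _ _ ?_
      exact Gal.restrict_smul σ r
    · intro a
      have h1 : aeval a (P.map φ) = eval a ((P.map φ).map (algebraMap (ZMod p) E)) := by
        rw [eval_map_algebraMap]
      rw [h1, hPE, ← IsRoot.def, ← mem_roots, roots_multiset_prod_X_sub_C]
      · rw [Multiset.mem_map]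
        constructor
        · rintro ⟨x, _, hx⟩
          exact ⟨⟨x.1, (hmem _).2 x.2⟩, hx⟩
        · rintro ⟨r, hr⟩
          exact ⟨_, Multiset.mem_attach _ _, hr⟩
      · exact (monic_multisetProd_X_sub_C _).ne_zero

lemma pow_iter {α E : Type*} [Monoid E] {p : ℕ} (π : Equiv.Perm α) (ε : α → E)
    (h : ∀ r, ε (π r) = ε r ^ p) (k : ℕ) (r : α) : ε ((π ^ k) r) = ε r ^ p ^ k := by
  induction k with
  | zero => simp
  | succ k ih => rw [pow_succ', Equiv.Perm.mul_apply, h, ih, ← pow_mul, pow_succ]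

section
variable {A : Type*} {K : Type*} [CommRing A] [IsDomain A] [IsIntegrallyClosed A]
    [IsNoetherianRing A] [Field K] [CharZero K] [Algebra A K] [IsFractionRing A K]

lemma sep_lin_mul {p : ℕ} [Fact p.Prime] (s : Finset (ZMod p)) (g : (ZMod p)[X]) (hg : Irreducible g)
    (hd : 2 ≤ g.natDegree) : (g * ∏ a ∈ s, (X - C a)).Separable := by
  refine Separable.mul (PerfectField.separable_of_irreducible hg) ?_ ?_
  · exact (separable_prod_X_sub_C_iff' (f := id)).2 (fun x _ y _ h => h)
  · refine IsCoprime.prod_right fun a _ => ?_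
    rw [hg.coprime_iff_not_dvd]
    intro h
    have := natDegree_le_of_dvd h (X_sub_C_ne_zero a)
    rw [natDegree_X_sub_C] at this
    omega

/-- A monic polynomial over `A` whose reductions at suitable `𝔽_p`-points of `A` exhibit the three
factorization patterns below has the full symmetric group as Galois group. -/
theorem gal_symm_aux (P : A[X]) (hP : P.Monic) (n : ℕ) (hn : P.natDegree = n) (hn2 : 2 ≤ n)
    (h2 : ∃ p : ℕ, ∃ _ : Fact p.Prime, ∃ φ : A →+* ZMod p, Irreducible (P.map φ))
    (h3 : 3 ≤ n → ∃ p : ℕ, ∃ _ : Fact p.Prime, ∃ (φ : A →+* ZMod p) (a : ZMod p) (g : (ZMod p)[X]),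
      Irreducible g ∧ g.natDegree = n - 1 ∧ P.map φ = (X - C a) * g)
    (h4 : ∃ p : ℕ, ∃ _ : Fact p.Prime, ∃ (φ : A →+* ZMod p) (s : Finset (ZMod p)) (g : (ZMod p)[X]),
      Irreducible g ∧ g.natDegree = 2 ∧ P.map φ = g * ∏ a ∈ s, (X - C a))
    (f : K[X]) (hf : f = P.map (algebraMap A K)) :
    Nonempty (f.Gal ≃* Equiv.Perm (Fin n)) := by
  classical
  have hfact : Fact ((f.map (algebraMap K f.SplittingField)).Splits) := ⟨SplittingField.splits f⟩
  have hgal : IsGalois K f.SplittingField := { }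
  set L := f.SplittingField
  set G := (Gal.galActionHom f L).range with hG
  have hcard : Fintype.card (f.rootSet L) = n := by
    obtain ⟨p, _, φ, hi⟩ := h2
    rw [← hn]
    exact (frob_perm P hP p φ (PerfectField.separable_of_irreducible hi) f hf).1
  have htrans : ∀ a b : f.rootSet L, ∃ σ ∈ G, σ a = b := by
    obtain ⟨p, _, φ, hi⟩ := h2
    obtain ⟨-, E, _, _, _, π, ε, hπ, hε, hp, hr⟩ :=
      frob_perm P hP p φ (PerfectField.separable_of_irreducible hi) f hf (L := L)
    intro a b
    obtain ⟨k, hk⟩ := frob_orbit hi ((hr (ε a)).2 ⟨a, rfl⟩) ((hr (ε b)).2 ⟨b, rfl⟩)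
    exact ⟨π ^ k, G.pow_mem hπ k, hε (by rw [pow_iter π ε hp, hk])⟩
  have hfix : ∃ r : f.rootSet L, ∀ a b : f.rootSet L, a ≠ r → b ≠ r →
      ∃ σ ∈ G, σ r = r ∧ σ a = b := by
    by_cases h : 3 ≤ n
    · obtain ⟨p, _, φ, a, g, hg, hgd, hPg⟩ := h3 h
      have hsep : (P.map φ).Separable := by
        have := sep_lin_mul {a} g hg (by omega)
        rwa [Finset.prod_singleton, mul_comm, ← hPg] at this
      obtain ⟨-, E, _, _, _, π, ε, hπ, hε, hp, hr⟩ := frob_perm P hP p φ hsep f hf (L := L)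
      obtain ⟨r, hra⟩ := (hr (algebraMap (ZMod p) E a)).1 (by simp [hPg])
      refine ⟨r, ?_⟩
      have hπr : π r = r := hε (by rw [hp, hra, ← map_pow, ZMod.pow_card])
      have hroot : ∀ x, x ≠ r → aeval (ε x) g = 0 := by
        intro x hx
        have := (hr (ε x)).2 ⟨x, rfl⟩
        rw [hPg, map_mul, mul_eq_zero] at this
        rcases this with h | h
        · exfalso
          simp only [map_sub, aeval_X, aeval_C, sub_eq_zero] at h
          exact hx (hε (by rw [h, hra]))
        · exact h
      intro x y hx hy
      obtain ⟨k, hk⟩ := frob_orbit hg (hroot x hx) (hroot y hy)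
      exact ⟨π ^ k, G.pow_mem hπ k, Equiv.Perm.pow_apply_eq_self_of_apply_eq_self hπr k,
        hε (by rw [pow_iter π ε hp, hk])⟩
    · have hc2 : Fintype.card (f.rootSet L) = 2 := by omega
      have hne : Nonempty (f.rootSet L) := Fintype.card_pos_iff.1 (by omega)
      obtain ⟨r⟩ := hne
      refine ⟨r, fun a b ha hb => ⟨1, G.one_mem, rfl, ?_⟩⟩
      by_contra hab
      have h3 : ({r, a, b} : Finset (f.rootSet L)).card = 3 := by
        rw [Finset.card_eq_three]
        exact ⟨r, a, b, ha.symm, hb.symm, hab, rfl⟩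
      have := Finset.card_le_univ ({r, a, b} : Finset (f.rootSet L))
      omega
  have hswap : ∃ a b : f.rootSet L, a ≠ b ∧ Equiv.swap a b ∈ G := by
    obtain ⟨p, _, φ, s, g, hg, hgd, hPg⟩ := h4
    have hsep : (P.map φ).Separable := by
      have := sep_lin_mul s g hg (by omega)
      rwa [← hPg] at this
    obtain ⟨-, E, _, _, _, π, ε, hπ, hε, hp, hr⟩ := frob_perm P hP p φ hsep f hf (L := L)
    have hfixed : ∀ r, (∃ a ∈ s, ε r = algebraMap (ZMod p) E a) → π r = r := by
      rintro r ⟨a, -, ha⟩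
      exact hε (by rw [hp, ha, ← map_pow, ZMod.pow_card])
    have hdich : ∀ r, aeval (ε r) g = 0 ∨ ∃ a ∈ s, ε r = algebraMap (ZMod p) E a := by
      intro r
      have := (hr (ε r)).2 ⟨r, rfl⟩
      rw [hPg, map_mul, mul_eq_zero] at this
      refine this.imp id fun h => ?_
      rw [map_prod, Finset.prod_eq_zero_iff] at h
      obtain ⟨a, ha, h⟩ := h
      simp only [map_sub, aeval_X, aeval_C, sub_eq_zero] at h
      exact ⟨a, ha, h⟩
    have hsupp : π.support.image ε ⊆ (g.map (algebraMap (ZMod p) E)).roots.toFinset := by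
      intro x hx
      obtain ⟨r, hr1, rfl⟩ := Finset.mem_image.1 hx
      rw [Equiv.Perm.mem_support] at hr1
      have h5 := (hdich r).resolve_right fun h => hr1 (hfixed r h)
      rw [Multiset.mem_toFinset, mem_roots (by
        rw [Ne, Polynomial.map_eq_zero]; exact hg.ne_zero), IsRoot.def, eval_map_algebraMap]
      exact h5
    have hle : π.support.card ≤ 2 := by
      rw [← Finset.card_image_of_injective _ hε]
      refine (Finset.card_le_card hsupp).trans ((Multiset.toFinset_card_le _).trans ?_)
      refine (card_roots' _).trans ?_
      rw [natDegree_map, hgd]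
    have hne1 : π ≠ 1 := by
      intro h1
      have hall : ∀ r, ε r ^ p = ε r := fun r => by rw [← hp, h1]; rfl
      -- if Frobenius fixes all roots, then `g` has at most one root among them, so that there are
      -- at most `|s| + 1 = n - 1` roots in total
      have h7 : ∃ x : E, Finset.univ.image ε ⊆ insert x (s.image (algebraMap (ZMod p) E)) := by
        by_cases hex : ∃ r, aeval (ε r) g = 0
        · obtain ⟨r, hr0⟩ := hex
          refine ⟨ε r, fun x hx => ?_⟩
          obtain ⟨r', -, rfl⟩ := Finset.mem_image.1 hx
          rcases hdich r' with h | ⟨a, ha, h⟩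
          · obtain ⟨k, hk⟩ := frob_orbit hg hr0 h
            have : (π ^ k) r = r := by rw [h1, one_pow]; rfl
            rw [← pow_iter π ε hp, this] at hk
            rw [hk]
            exact Finset.mem_insert_self _ _
          · exact Finset.mem_insert_of_mem (Finset.mem_image.2 ⟨a, ha, h.symm⟩)
        · push Not at hex
          refine ⟨0, fun x hx => ?_⟩
          obtain ⟨r, -, rfl⟩ := Finset.mem_image.1 hx
          obtain ⟨a, ha, h⟩ := (hdich r).resolve_left (hex r)
          exact Finset.mem_insert_of_mem (Finset.mem_image.2 ⟨a, ha, h.symm⟩)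
      obtain ⟨x, h7⟩ := h7
      have h8 := Finset.card_le_card h7
      rw [Finset.card_image_of_injective _ hε, Finset.card_univ, hcard] at h8
      have h9 : s.card + 2 = n := by
        rw [← hn, ← hP.natDegree_map φ, hPg, natDegree_mul hg.ne_zero
          (Finset.prod_ne_zero_iff.2 fun a _ => X_sub_C_ne_zero a), hgd,
          natDegree_prod _ _ (fun a _ => X_sub_C_ne_zero a)]
        simp [add_comm]
      have h10 : (s.image (algebraMap (ZMod p) E)).card ≤ s.card := Finset.card_image_le
      have h11 := Finset.card_insert_le x (s.image (algebraMap (ZMod p) E))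
      omega
    have hge : 2 ≤ π.support.card := by
      have := Equiv.Perm.one_lt_card_support_of_ne_one hne1
      omega
    obtain ⟨a, b, hab, hs⟩ := Equiv.Perm.card_support_eq_two.1 (le_antisymm hle hge)
    exact ⟨a, b, hab, hs ▸ hπ⟩
  have htop := perm_eq_top G htrans hfix hswap
  have hbij : Function.Bijective (Gal.galActionHom f L) :=
    ⟨Gal.galActionHom_injective f L, MonoidHom.range_eq_top.1 htop⟩
  have e1 := MulEquiv.ofBijective _ hbij
  have e2 : f.rootSet L ≃ Fin n := Fintype.equivFinOfCardEq hcard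
  exact ⟨e1.trans e2.permCongrHom⟩
end

lemma int_multiple (q : ℚ[X]) : ∃ (c : ℤ) (f : ℤ[X]), c ≠ 0 ∧
    f.map (Int.castRingHom ℚ) = C (c : ℚ) * q := by
  obtain ⟨b, hb, h⟩ := IsLocalization.integerNormalization_spec (nonZeroDivisors ℤ) q
  refine ⟨b, IsLocalization.integerNormalization (nonZeroDivisors ℤ) q, nonZeroDivisors.ne_zero hb, ?_⟩
  refine (Eq.trans ?_ h).trans ?_
  · rfl
  · ext i
    simp

/-- Galois group criterion for `P(T,Y)` from the reductions of `P(0,Y)` modulo primes. A Frobenius element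
of the first kind is transitive, one of the second kind fixes a root and is transitive on the others, and one of
the third kind is a transposition. -/
theorem gal_symm (P : ℤ[X][X]) (hP : P.Monic) (n : ℕ) (hn : P.natDegree = n) (hn2 : 2 ≤ n)
    (h2 : ∃ p : ℕ, ∃ _ : Fact p.Prime,
      Irreducible ((P.map (evalRingHom 0)).map (Int.castRingHom (ZMod p))))
    (h3 : 3 ≤ n → ∃ p : ℕ, ∃ _ : Fact p.Prime, ∃ (a : ZMod p) (g : (ZMod p)[X]),
      Irreducible g ∧ g.natDegree = n - 1 ∧
        (P.map (evalRingHom 0)).map (Int.castRingHom (ZMod p)) = (X - C a) * g)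
    (h4 : ∃ p : ℕ, ∃ _ : Fact p.Prime, ∃ (s : Finset (ZMod p)) (g : (ZMod p)[X]),
      Irreducible g ∧ g.natDegree = 2 ∧
        (P.map (evalRingHom 0)).map (Int.castRingHom (ZMod p)) = g * ∏ a ∈ s, (X - C a)) :
    Nonempty ((toQT P).Gal ≃* Equiv.Perm (Fin n)) := by
  let alg : Algebra ℤ[X] (RatFunc ℚ) := ((algebraMap ℚ[X] (RatFunc ℚ)).comp
    (mapRingHom (Int.castRingHom ℚ))).toAlgebra
  have halg : ∀ f : ℤ[X], algebraMap ℤ[X] (RatFunc ℚ) f =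
    algebraMap ℚ[X] (RatFunc ℚ) (f.map (Int.castRingHom ℚ)) := fun f => rfl
  have hinj : Function.Injective (algebraMap ℤ[X] (RatFunc ℚ)) :=
    (RatFunc.algebraMap_injective ℚ).comp
      (Polynomial.map_injective _ (RingHom.injective_int (Int.castRingHom ℚ)))
  have hf : FaithfulSMul ℤ[X] (RatFunc ℚ) := (faithfulSMul_iff_algebraMap_injective _ _).2 hinj
  have hfrac : IsFractionRing ℤ[X] (RatFunc ℚ) := by
    refine IsFractionRing.of_field ℤ[X] (RatFunc ℚ) fun z => ?_
    obtain ⟨c, a, hc, ha⟩ := int_multiple z.num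
    obtain ⟨d, b, hd, hb⟩ := int_multiple z.denom
    refine ⟨a * C d, b * C c, ?_⟩
    rw [halg, halg, Polynomial.map_mul, Polynomial.map_mul, ha, hb, Polynomial.map_C,
      Polynomial.map_C]
    simp only [map_mul, eq_intCast]
    conv_lhs => rw [← RatFunc.num_div_denom z]
    have h1 : algebraMap ℚ[X] (RatFunc ℚ) z.denom ≠ 0 :=
      RatFunc.algebraMap_ne_zero (RatFunc.denom_ne_zero z)
    have h2 : algebraMap ℚ[X] (RatFunc ℚ) (C (c : ℚ)) ≠ 0 :=
      RatFunc.algebraMap_ne_zero (by simpa using hc)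
    have h3 : algebraMap ℚ[X] (RatFunc ℚ) (C (d : ℚ)) ≠ 0 :=
      RatFunc.algebraMap_ne_zero (by simpa using hd)
    field_simp
  have hmm : ∀ p : ℕ, P.map ((Int.castRingHom (ZMod p)).comp (evalRingHom 0)) =
      (P.map (evalRingHom 0)).map (Int.castRingHom (ZMod p)) := fun p => by
    rw [Polynomial.map_map]
  refine gal_symm_aux (K := RatFunc ℚ) P hP n hn hn2 ?_ ?_ ?_ (toQT P) rfl
  · obtain ⟨p, hp, h⟩ := h2
    exact ⟨p, hp, (Int.castRingHom (ZMod p)).comp (evalRingHom 0), by rwa [hmm]⟩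
  · intro h
    obtain ⟨p, hp, a, g, h⟩ := h3 h
    exact ⟨p, hp, (Int.castRingHom (ZMod p)).comp (evalRingHom 0), a, g, by rwa [hmm]⟩
  · obtain ⟨p, hp, s, g, h⟩ := h4
    exact ⟨p, hp, (Int.castRingHom (ZMod p)).comp (evalRingHom 0), s, g, by rwa [hmm]⟩

/-! ### Reducible discriminants along lines -/

/-- The polynomial `Y^n + ∑_{i<n} (∑_{j≤D} x_{ij} T^j) Y^i`. -/
def bp (n D : ℕ) {R : Type*} [CommRing R] (x : Fin n × Fin (D + 1) → R) : R[X][X] :=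
  X ^ n + low n (fun i => low (D + 1) (fun j => x (i, j)))

lemma bp_map (n D : ℕ) {R S : Type*} [CommRing R] [CommRing S] (φ : R →+* S)
    (x : Fin n × Fin (D + 1) → R) : (bp n D x).map (mapRingHom φ) = bp n D (fun i => φ (x i)) := by
  rw [bp, bp, Polynomial.map_add, low_map]
  simp [low_map]

/-- `R` has degree at most `d`, its coefficients have degree at most `b`, and after evaluating at an
integer point of height `H`, all its coefficients are at most `C₀ H^b`. -/
def BoundedBy {ι : Type*} (R : (MvPolynomial ι ℤ)[X][X]) (d b C₀ : ℕ) : Prop :=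
  ∀ H : ℕ, 1 ≤ H → ∀ y : ι → ℤ, (∀ i, |y i| ≤ H) →
    (R.map (mapRingHom (MvPolynomial.eval y))).natDegree ≤ d ∧
    (∀ i, ((R.map (mapRingHom (MvPolynomial.eval y))).coeff i).natDegree ≤ b) ∧
    ∀ i j, |((R.map (mapRingHom (MvPolynomial.eval y))).coeff i).coeff j| ≤ C₀ * (H : ℤ) ^ b

lemma mv_bound {ι : Type*} (c : MvPolynomial ι ℤ) : ∃ C₀ b : ℕ, ∀ H : ℕ, 1 ≤ H → ∀ y : ι → ℤ,
    (∀ i, |y i| ≤ H) → |MvPolynomial.eval y c| ≤ C₀ * (H : ℤ) ^ b := by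
  induction c using MvPolynomial.induction_on with
  | C a => exact ⟨a.natAbs, 0, fun H _ y _ => by simp⟩
  | add p q hp hq =>
    obtain ⟨C₁, b₁, h₁⟩ := hp
    obtain ⟨C₂, b₂, h₂⟩ := hq
    refine ⟨C₁ + C₂, b₁ + b₂, fun H hH y hy => ?_⟩
    have hH' : (1 : ℤ) ≤ H := by exact_mod_cast hH
    rw [map_add]
    refine (abs_add_le _ _).trans ?_
    push_cast
    rw [add_mul]
    refine add_le_add ((h₁ H hH y hy).trans ?_) ((h₂ H hH y hy).trans ?_)
    · exact mul_le_mul_of_nonneg_left (pow_le_pow_right₀ hH' (by omega)) (by positivity)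
    · exact mul_le_mul_of_nonneg_left (pow_le_pow_right₀ hH' (by omega)) (by positivity)
  | mul_X p i hp =>
    obtain ⟨C₁, b₁, h₁⟩ := hp
    refine ⟨C₁, b₁ + 1, fun H hH y hy => ?_⟩
    rw [map_mul, MvPolynomial.eval_X, abs_mul, pow_succ, ← mul_assoc]
    exact mul_le_mul (h₁ H hH y hy) (hy i) (abs_nonneg _) (by positivity)

lemma exists_boundedBy {ι : Type*} (R : (MvPolynomial ι ℤ)[X][X]) : ∃ d b C₀ : ℕ, BoundedBy R d b C₀ := by
  choose Cf bf hf using fun c : MvPolynomial ι ℤ => mv_bound c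
  set d := R.natDegree with hd
  set b₀ := ∑ i ∈ Finset.range (d + 1), (R.coeff i).natDegree with hb₀
  set b₁ := ∑ i ∈ Finset.range (d + 1), ∑ j ∈ Finset.range (b₀ + 1), bf ((R.coeff i).coeff j) with hb₁
  set C₁ := ∑ i ∈ Finset.range (d + 1), ∑ j ∈ Finset.range (b₀ + 1), Cf ((R.coeff i).coeff j) with hC₁
  have hdeg : ∀ i, (R.coeff i).natDegree ≤ b₀ := by
    intro i
    by_cases hi : i < d + 1
    · exact Finset.single_le_sum (f := fun i => (R.coeff i).natDegree) (fun _ _ => Nat.zero_le _)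
        (Finset.mem_range.2 hi)
    · rw [coeff_eq_zero_of_natDegree_lt (by omega), natDegree_zero]; exact Nat.zero_le _
  refine ⟨d, b₀ + b₁, C₁, fun H hH y hy => ⟨natDegree_map_le, fun i => ?_, fun i j => ?_⟩⟩
  · rw [coeff_map, coe_mapRingHom]
    exact natDegree_map_le.trans ((hdeg i).trans (by omega))
  · have hH' : (1 : ℤ) ≤ H := by exact_mod_cast hH
    rw [coeff_map, coe_mapRingHom, coeff_map]
    by_cases hij : i < d + 1 ∧ j < b₀ + 1
    · have h1 : bf ((R.coeff i).coeff j) ≤ b₁ :=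
        (Finset.single_le_sum (f := fun j => bf ((R.coeff i).coeff j)) (fun _ _ => Nat.zero_le _)
          (Finset.mem_range.2 hij.2)).trans
        (Finset.single_le_sum (f := fun i => ∑ j ∈ Finset.range (b₀ + 1), bf ((R.coeff i).coeff j))
          (fun _ _ => Nat.zero_le _) (Finset.mem_range.2 hij.1))
      have h2 : Cf ((R.coeff i).coeff j) ≤ C₁ :=
        (Finset.single_le_sum (f := fun j => Cf ((R.coeff i).coeff j)) (fun _ _ => Nat.zero_le _)
          (Finset.mem_range.2 hij.2)).trans
        (Finset.single_le_sum (f := fun i => ∑ j ∈ Finset.range (b₀ + 1), Cf ((R.coeff i).coeff j))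
          (fun _ _ => Nat.zero_le _) (Finset.mem_range.2 hij.1))
      refine (hf _ H hH y hy).trans ?_
      refine mul_le_mul (by exact_mod_cast h2) (pow_le_pow_right₀ hH' (by omega)) (by positivity)
        (by positivity)
    · have h0 : (R.coeff i).coeff j = 0 := by
        by_cases hi : i < d + 1
        · exact coeff_eq_zero_of_natDegree_lt (lt_of_le_of_lt (hdeg i) (by omega))
        · rw [coeff_eq_zero_of_natDegree_lt (p := R) (by omega), coeff_zero]
      rw [h0, map_zero, abs_zero]
      positivity

lemma BoundedBy.mono {ι : Type*} {R : (MvPolynomial ι ℤ)[X][X]} {d b C₀ d' b' C₁ : ℕ}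
    (h : BoundedBy R d b C₀) (hd : d ≤ d') (hb : b ≤ b') (hC : C₀ ≤ C₁) : BoundedBy R d' b' C₁ := by
  intro H hH y hy
  obtain ⟨h1, h2, h3⟩ := h H hH y hy
  have hH' : (1 : ℤ) ≤ H := by exact_mod_cast hH
  refine ⟨h1.trans hd, fun i => (h2 i).trans hb, fun i j => (h3 i j).trans ?_⟩
  exact mul_le_mul (by exact_mod_cast hC) (pow_le_pow_right₀ hH' hb) (by positivity) (by positivity)

lemma exists_boundedBy_family {ι κ : Type*} (s : Finset κ) (R : κ → (MvPolynomial ι ℤ)[X][X]) :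
    ∃ d b C₀ : ℕ, ∀ k ∈ s, BoundedBy (R k) d b C₀ := by
  choose d b C₀ h using fun k => exists_boundedBy (R k)
  refine ⟨∑ k ∈ s, d k, ∑ k ∈ s, b k, ∑ k ∈ s, C₀ k, fun k hk => (h k).mono ?_ ?_ ?_⟩
  · exact Finset.single_le_sum (f := d) (fun _ _ => Nat.zero_le _) hk
  · exact Finset.single_le_sum (f := b) (fun _ _ => Nat.zero_le _) hk
  · exact Finset.single_le_sum (f := C₀) (fun _ _ => Nat.zero_le _) hk

/-- The resolvent of the (monicized) discriminant of the family `F + t T^(D-1)`. -/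
def famRes {A : Type*} [CommRing A] (F : A[X][X]) (m D k u : ℕ) : A[X][X] :=
  resolvent (monicize (famDisc F (m + 3) (D - 1)) (2 * (m + 2) * D)) (2 * (m + 2) * D) k u

lemma famRes_map {A B : Type*} [CommRing A] [CommRing B] (φ : A →+* B) (F : A[X][X]) (m D k u : ℕ) :
    (famRes F m D k u).map (mapRingHom φ) = famRes (F.map (mapRingHom φ)) m D k u := by
  rw [famRes, famRes, resolvent_map, monicize_map, famDisc_map]

/-- Along the family `F + t T^(D-1)` over an integral `F` as in `FamHyp`, the discriminant is
reducible for only `O(√H)` values of `t`, uniformly in `F`. -/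
theorem fibre_bound (m D : ℕ) : ∃ K H0 : ℕ, ∀ H ≥ H0, ∀ y : Fin (m + 3) × Fin (D + 1) → ℤ,
    (∀ i, |y i| ≤ H) → (∃ q, FamHyp (toQ (bp (m + 3) D y)) m D q) → ∀ s : Finset ℤ,
    (∀ t ∈ s, |t| ≤ H ∧ ¬ Irreducible ((discOf (bp (m + 3) D y + C (C t * X ^ (D - 1))) (m + 3)).map
      (Int.castRingHom ℚ))) → s.card ≤ K * (Nat.sqrt H + 1) := by
  classical
  set N := 2 * (m + 2) * D with hN
  set U := 4 ^ N * N + 1 with hU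
  set Fu : (MvPolynomial (Fin (m + 3) × Fin (D + 1)) ℤ)[X][X] :=
    bp (m + 3) D (fun i => MvPolynomial.X i) with hFu
  obtain ⟨d, b, C₀, hbd⟩ := exists_boundedBy_family (Finset.range (N + 1) ×ˢ Finset.range U)
    (fun ku => famRes Fu m D ku.1 ku.2)
  obtain ⟨K, H0, hK⟩ := integral_points d b C₀
  refine ⟨(N + 1) * K, H0 + 1, ?_⟩
  rintro H hH y hy ⟨q, hq⟩ s hs
  set F := bp (m + 3) D y with hF
  have hFuF : Fu.map (mapRingHom (MvPolynomial.eval y)) = F := by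
    rw [hFu, bp_map, hF]
    congr 1
    funext i
    exact MvPolynomial.eval_X i
  have hN1 : 1 ≤ N := by
    have := hq.one_le
    rw [hN]; nlinarith
  obtain ⟨hl1, c, hc, hl2⟩ := famDisc_lead hq
  have hdisc : famDisc (toQ F) (m + 3) (D - 1) =
      (famDisc F (m + 3) (D - 1)).map (mapRingHom (Int.castRingHom ℚ)) := by
    rw [famDisc_map]
  obtain ⟨hk1, hk2⟩ := famK_natDegree hq
  have hkirr := famK_irreducible hq
  set G := monicize (famK (toQ F) m D) N with hG
  have hGres : ∀ k u, (toQ (famRes F m D k u)).map (algebraMap ℚ[X] (RatFunc ℚ)) =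
      resolvent G N k u := by
    intro k u
    rw [toQ, famRes_map, famRes, resolvent_map, monicize_map]
    rfl
  -- one `u < U` makes all resolvents of the generic discriminant free of small factors
  obtain ⟨u, huU, hu⟩ := resolvent_coprime
    ((monicize_irreducible_iff _ N hN1 hk1.le hk2).2 hkirr) (monicize_monic (famK (toQ F) m D) N)
    (monicize_natDegree _ N) (monicize_quad _ N hN1 hk1.le hk2 (famK_quad hq))
  -- each reducible specialization yields an integral point on one of the resolvent curves
  have hroot : ∀ t ∈ s, ∃ k ∈ (Finset.range (N + 1)).filter (fun k => 1 ≤ k ∧ 2 * k ≤ N), ∃ z : ℤ,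
      (famRes F m D k u).evalEval t z = 0 := by
    intro t ht
    obtain ⟨-, ht⟩ := hs t ht
    rw [← famDisc_eval] at ht
    set E := (famDisc F (m + 3) (D - 1)).map (evalRingHom t) with hE
    have hEQ : E.map (Int.castRingHom ℚ) =
        (famDisc (toQ F) (m + 3) (D - 1)).map (evalRingHom (t : ℚ)) := by
      rw [hdisc, hE, Polynomial.map_map, Polynomial.map_map]
      congr 1
      refine RingHom.ext fun f => ?_
      simp [eval_intCast_map]
    have hEd : (E.map (Int.castRingHom ℚ)).natDegree ≤ N := by
      rw [hEQ]; exact natDegree_map_le.trans hl1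
    have hEc : (E.map (Int.castRingHom ℚ)).coeff N ≠ 0 := by
      rw [hEQ, coeff_map, hl2]; simpa using hc
    have hred : ¬ Irreducible ((monicize E N).map (Int.castRingHom ℚ)) := by
      rw [monicize_map, monicize_irreducible_iff _ N hN1 hEd hEc]
      exact ht
    obtain ⟨k, hk1, hk2, hk⟩ := exists_root_resolvent (monicize E N) (monicize_monic E N) N
      (monicize_natDegree E N) hN1 hred
    obtain ⟨z, hz⟩ := hk u
    refine ⟨k, Finset.mem_filter.2 ⟨Finset.mem_range.2 (by omega), hk1, hk2⟩, z, ?_⟩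
    rw [← map_evalRingHom_eval, famRes, resolvent_map, monicize_map]
    exact hz
  have hcover : s ⊆ ((Finset.range (N + 1)).filter (fun k => 1 ≤ k ∧ 2 * k ≤ N)).biUnion
      (fun k => s.filter fun t => ∃ z : ℤ, (famRes F m D k u).evalEval t z = 0) := by
    intro t ht
    obtain ⟨k, hk, hz⟩ := hroot t ht
    exact Finset.mem_biUnion.2 ⟨k, hk, Finset.mem_filter.2 ⟨ht, hz⟩⟩
  refine (Finset.card_le_card hcover).trans ((Finset.card_biUnion_le_card_mul _ _
    (K * (Nat.sqrt H + 1)) ?_).trans ?_)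
  · intro k hk
    obtain ⟨hkr, hk1, hk2⟩ := Finset.mem_filter.1 hk
    obtain ⟨b1, b2, b3⟩ := hbd (k, u) (Finset.mem_product.2 ⟨hkr, Finset.mem_range.2 huU⟩) H
      (by omega) y hy
    simp only [famRes_map, hFuF] at b1 b2 b3
    obtain ⟨c1, c2⟩ := hu k hk1 hk2
    refine hK H (by omega) (famRes F m D k u) (resolvent_monic _ _ _ _) b1 b2 b3 ⟨?_, ?_⟩ _ ?_
    · rw [← derivative_map, hGres]
      exact c1
    · intro A hA hAd
      rw [hGres]
      refine c2 _ ?_ (natDegree_map_le.trans hAd)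
      rwa [Ne, Polynomial.map_eq_zero_iff (RatFunc.algebraMap_injective ℚ)]
    · intro t ht
      rw [Finset.mem_filter] at ht
      exact ⟨(hs t ht.1).1, ht.2⟩
  · rw [mul_assoc]
    refine Nat.mul_le_mul_right _ ((Finset.card_filter_le _ _).trans ?_)
    rw [Finset.card_range]

section
variable {R : Type*} [CommRing R] (n D : ℕ) (x : Fin n × Fin (D + 1) → R)

lemma bp_coeff (i : ℕ) : (bp n D x).coeff i =
    (if i = n then 1 else 0) + if h : i < n then low (D + 1) (fun j => x (⟨i, h⟩, j)) else 0 := by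
  rw [bp, coeff_add, coeff_X_pow, low_coeff]

lemma bp_coeff_lt (i : Fin n) (j : Fin (D + 1)) : ((bp n D x).coeff i).coeff j = x (i, j) := by
  rw [bp_coeff, if_neg (by have := i.2; omega), dif_pos i.2, zero_add, low_coeff, dif_pos j.2]

lemma low_natDegree (d : ℕ) (v : Fin (d + 1) → R) : (low (d + 1) v).natDegree ≤ d := by
  rw [natDegree_le_iff_coeff_eq_zero]
  intro N hN
  rw [low_coeff, dif_neg (by omega)]

lemma bp_coeff_natDegree (i : ℕ) : ((bp n D x).coeff i).natDegree ≤ D := by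
  rw [bp_coeff]
  split_ifs with h1 h2 h2
  · omega
  · simp
  · rw [zero_add]; exact low_natDegree _ _
  · simp

lemma bp_monic : (bp n D x).Monic := monic_low n _

lemma bp_natDegree [Nontrivial R] : (bp n D x).natDegree = n := natDegree_monic_low n _

lemma bp_zero : (bp n D x).map (evalRingHom 0) = X ^ n + low n (fun i => x (i, 0)) := by
  rw [bp, Polynomial.map_add, low_map]
  simp only [Polynomial.map_pow, map_X, coe_evalRingHom]
  congr 2
  funext i
  rw [← coeff_zero_eq_eval_zero, low_coeff, dif_pos (by omega)]
  rfl

end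

lemma bp_top (n D : ℕ) (x : Fin n × Fin (D + 1) → ℤ) :
    topCoeffPoly (bp n D x) n D = low n (fun i => x (i, Fin.last D)) := by
  rw [topCoeffPoly, low, Finset.sum_range]
  refine Finset.sum_congr rfl fun i _ => ?_
  have := bp_coeff_lt n D x i (Fin.last D)
  rw [Fin.val_last] at this
  rw [this]

/-- The index of the coefficient `a_{0,D-1}` along which the family varies. -/
def i0 (m D : ℕ) : Fin (m + 3) × Fin (D + 1) := (0, ⟨D - 1, by omega⟩)

/-- Every coefficient vector is a member of the family varying `a_{0,D-1}`. -/
lemma bp_update (m D : ℕ) (x : Fin (m + 3) × Fin (D + 1) → ℤ) :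
    bp (m + 3) D x = bp (m + 3) D (Function.update x (i0 m D) 0) +
      C (C (x (i0 m D)) * X ^ (D - 1)) := by
  ext i j
  rw [coeff_add, coeff_add, bp_coeff, bp_coeff, coeff_add, coeff_add, coeff_C]
  rw [add_assoc]
  congr 1
  by_cases hi : i < m + 3
  · rw [dif_pos hi, dif_pos hi, low_coeff, low_coeff]
    by_cases hj : j < D + 1
    · rw [dif_pos hj, dif_pos hj]
      by_cases h : ((⟨i, hi⟩, ⟨j, hj⟩) : Fin (m + 3) × Fin (D + 1)) = i0 m D
      · rw [h, Function.update_self]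
        simp only [i0, Prod.mk.injEq, Fin.ext_iff] at h
        rw [if_pos (by simpa using h.1), coeff_C_mul, coeff_X_pow, if_pos h.2]
        simp
      · rw [Function.update_of_ne h]
        split_ifs with hi0
        · rw [coeff_C_mul, coeff_X_pow, if_neg, mul_zero, add_zero]
          intro hj0
          apply h
          simp only [i0, Prod.mk.injEq, Fin.ext_iff]
          exact ⟨by simpa using hi0, hj0⟩
        · simp
    · rw [dif_neg hj, dif_neg hj]
      split_ifs
      · rw [coeff_C_mul, coeff_X_pow, if_neg (by omega)]; simp
      · simp
  · rw [dif_neg hi, dif_neg hi, if_neg (by omega)]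
    simp

/-- The genericity conditions of `FamHyp` follow from conditions on the full polynomial of `x`. For `D = 1` the
varied coefficient is the constant term of `P(0, Y)`, and it does not affect the derivative. -/
lemma famHyp_of (m D : ℕ) (hD : 1 ≤ D) (x : Fin (m + 3) × Fin (D + 1) → ℤ)
    (q h : ℤ[X]) (hq : q = low (m + 3) (fun i => x (i, Fin.last D)))
    (hh : h = X ^ (m + 3) + low (m + 3) (fun i => x (i, 0)))
    (h1 : q.natDegree = m + 2) (h2 : Irreducible (q.map (Int.castRingHom ℚ)))
    (h3 : Irreducible ((derivative q).map (Int.castRingHom ℚ)))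
    (h4 : Irreducible ((derivative h).map (Int.castRingHom ℚ)))
    (h5 : Irreducible (h.map (Int.castRingHom ℚ))) :
    FamHyp (toQ (bp (m + 3) D (Function.update x (i0 m D) 0))) m D (q.map (Int.castRingHom ℚ)) := by
  set y := Function.update x (i0 m D) 0 with hy
  have hmap : ((toQ (bp (m + 3) D y)).map (evalRingHom 0)) =
      (X ^ (m + 3) + low (m + 3) (fun i => y (i, 0))).map (Int.castRingHom ℚ) := by
    rw [toQ, bp_map, bp_zero, Polynomial.map_add, low_map]
    simp
  have hyeq : ∀ i : Fin (m + 3), ∀ j, (i, j) ≠ i0 m D → y (i, j) = x (i, j) := fun i j h =>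
    Function.update_of_ne h _ _
  have hder : derivative (X ^ (m + 3) + low (m + 3) (fun i => y (i, 0))) = derivative h := by
    rw [hh]
    ext k
    rw [coeff_derivative, coeff_derivative, coeff_add, coeff_add, low_coeff, low_coeff]
    split_ifs with hk
    · rw [hyeq]
      simp [i0, Fin.ext_iff]
    · rfl
  refine ⟨(bp_monic _ _ _).map _, ?_, hD, ?_, ?_, h2, ?_, ?_, ?_, ?_⟩
  · rw [toQ, (bp_monic _ _ _).natDegree_map, bp_natDegree]
  · intro i
    rw [toQ, coeff_map, coe_mapRingHom]
    exact natDegree_map_le.trans (bp_coeff_natDegree _ _ _ _)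
  · intro i
    rw [toQ, coeff_map, coe_mapRingHom, coeff_map, coeff_map, hq]
    congr 1
    rw [bp_coeff, low_coeff, coeff_add]
    by_cases hi : i < m + 3
    · rw [dif_pos hi, dif_pos hi, if_neg (by omega), low_coeff, dif_pos (by omega), coeff_zero,
        zero_add, hyeq]
      · rfl
      · simp only [i0, Ne, Prod.mk.injEq, Fin.ext_iff]
        omega
    · rw [dif_neg hi, dif_neg hi, coeff_zero, add_zero]
      split_ifs
      · rw [coeff_one, if_neg (by omega)]
      · rfl
  · rw [natDegree_map_eq_of_injective (RingHom.injective_int _), h1]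
  · rwa [derivative_map]
  · rw [hmap, derivative_map, hder]; exact h4
  · intro hD2
    have : X ^ (m + 3) + low (m + 3) (fun i => y (i, 0)) = h := by
      rw [hh]
      congr 2
      funext i
      rw [hyeq]
      simp only [i0, Ne, Prod.mk.injEq, Fin.ext_iff, Fin.val_zero]
      omega
    rw [hmap, this]
    exact PerfectField.separable_of_irreducible h5

/-- The integer vectors whose polynomial satisfies the genericity conditions but has reducible
discriminant are negligible: by `fibre_bound`, each line in the direction of `a_{0,D-1}` has `O(√H)` of them. -/
theorem fibre_count (m D : ℕ) : ∃ (C₀ : ℝ) (H0 : ℕ), 0 ≤ C₀ ∧ ∀ H ≥ H0,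
    ∀ bad : Finset (Fin (m + 3) × Fin (D + 1) → ℤ), (∀ x ∈ bad, ∀ i, |x i| ≤ (H : ℤ)) →
    (∀ x ∈ bad,
      (∃ q, FamHyp (toQ (bp (m + 3) D (Function.update x (i0 m D) 0))) m D q) ∧
      ¬ Irreducible ((discOf (bp (m + 3) D x) (m + 3)).map (Int.castRingHom ℚ))) →
    (bad.card : ℝ) ≤ C₀ * (H : ℝ) ^ Fintype.card (Fin (m + 3) × Fin (D + 1)) *
      (Real.log H / Real.sqrt H) := by
  classical
  obtain ⟨K, H0, hK⟩ := fibre_bound m D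
  set ι := Fin (m + 3) × Fin (D + 1) with hι
  set d := Fintype.card ι with hd
  have hd1 : 1 ≤ d := Fintype.card_pos_iff.2 ⟨i0 m D⟩
  refine ⟨2 * K * 3 ^ (d - 1), H0 + 3, by positivity, fun H hH bad hbox hbad => ?_⟩
  set upd : (ι → ℤ) → (ι → ℤ) := fun x => Function.update x (i0 m D) 0 with hupd
  have hfib : ∀ a ∈ bad.image upd, (bad.filter fun x => upd x = a).card ≤ K * (Nat.sqrt H + 1) := by
    intro a ha
    obtain ⟨x0, hx0, rfl⟩ := Finset.mem_image.1 ha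
    set s := bad.filter fun x => upd x = upd x0 with hs
    have hinj : Set.InjOn (fun x : ι → ℤ => x (i0 m D)) s := by
      intro x hx x' hx' h
      have e1 : upd x = upd x' := by
        rw [(Finset.mem_filter.1 hx).2, (Finset.mem_filter.1 hx').2]
      funext i
      by_cases hi : i = i0 m D
      · rw [hi]; exact h
      · have := congrFun e1 i
        simpa [hupd, Function.update_of_ne hi] using this
    rw [← Finset.card_image_of_injOn hinj]
    refine hK H (by omega) (upd x0) ?_ (hbad x0 hx0).1 _ ?_
    · intro i
      by_cases hi : i = i0 m D
      · rw [hi]; simp [hupd]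
      · simp only [hupd, Function.update_of_ne hi]; exact hbox x0 hx0 i
    · intro t ht
      obtain ⟨x, hx, rfl⟩ := Finset.mem_image.1 ht
      obtain ⟨hx1, hx2⟩ := Finset.mem_filter.1 hx
      refine ⟨hbox x hx1 _, ?_⟩
      rw [← hx2]
      simp only [hupd]
      rw [← bp_update]
      exact (hbad x hx1).2
  have himg : (bad.image upd).card ≤ (2 * H + 1) ^ (d - 1) := by
    have hsub : bad.image upd ⊆ Fintype.piFinset
        (fun i => if i = i0 m D then ({0} : Finset ℤ) else Finset.Icc (-(H : ℤ)) H) := by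
      intro a ha
      obtain ⟨x, hx, rfl⟩ := Finset.mem_image.1 ha
      rw [Fintype.mem_piFinset]
      intro i
      split_ifs with hi
      · rw [hi]; simp [hupd]
      · simp only [hupd, Function.update_of_ne hi]
        rw [Finset.mem_Icc, ← abs_le]; exact hbox x hx i
    refine (Finset.card_le_card hsub).trans (le_of_eq ?_)
    rw [Fintype.card_piFinset]
    have : ∀ i, (if i = i0 m D then ({0} : Finset ℤ) else Finset.Icc (-(H : ℤ)) H).card =
        if i = i0 m D then 1 else 2 * H + 1 := by
      intro i
      split_ifs
      · simp
      · rw [Int.card_Icc]; omega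
    simp only [this]
    rw [Finset.prod_ite, Finset.prod_const_one, one_mul, Finset.prod_const, Finset.filter_ne']
    rw [Finset.card_erase_of_mem (Finset.mem_univ _), Finset.card_univ]
  have hcard : bad.card ≤ K * (Nat.sqrt H + 1) * (2 * H + 1) ^ (d - 1) :=
    (Finset.card_le_mul_card_image bad _ hfib).trans (Nat.mul_le_mul_left _ himg)
  have hH3 : (3 : ℝ) ≤ H := by exact_mod_cast (by omega : 3 ≤ H)
  have hsq : (0 : ℝ) < Real.sqrt H := Real.sqrt_pos.2 (by linarith)
  have hsq1 : (1 : ℝ) ≤ Real.sqrt H := Real.one_le_sqrt.2 (by linarith)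
  have hlog : 1 ≤ Real.log H := by
    rw [Real.le_log_iff_exp_le (by linarith)]
    exact (Real.exp_one_lt_d9.le.trans (by norm_num)).trans hH3
  have hns : (Nat.sqrt H : ℝ) ≤ Real.sqrt H := Real.nat_sqrt_le_real_sqrt
  calc (bad.card : ℝ) ≤ K * (Nat.sqrt H + 1) * (2 * H + 1) ^ (d - 1) := by exact_mod_cast hcard
    _ ≤ K * (2 * Real.sqrt H) * (3 * H) ^ (d - 1) := by
        gcongr
        · linarith
        · linarith
    _ = 2 * K * 3 ^ (d - 1) * (H : ℝ) ^ (d - 1) * Real.sqrt H := by rw [mul_pow]; ring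
    _ = 2 * K * 3 ^ (d - 1) * (H : ℝ) ^ d * (1 / Real.sqrt H) := by
        have h1 : (H : ℝ) ^ d = (H : ℝ) ^ (d - 1) * (Real.sqrt H * Real.sqrt H) := by
          rw [Real.mul_self_sqrt (by linarith), ← pow_succ, Nat.sub_add_cancel hd1]
        rw [h1]
        field_simp
    _ ≤ _ := by gcongr

/-! ### Negligible sets of coefficient vectors -/

/-- A set of integer vectors is negligible if it meets the box of size `H` in
`O(H ^ d * log H / √H)` points, `d` being the dimension. -/
def Negl {ι : Type*} [Fintype ι] (B : Set (ι → ℤ)) : Prop :=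
  ∃ (C₀ : ℝ) (H0 : ℕ), 0 ≤ C₀ ∧ ∀ H ≥ H0, ∀ bad : Finset (ι → ℤ),
    (∀ x ∈ bad, ∀ i, |x i| ≤ (H : ℤ)) → (∀ x ∈ bad, x ∈ B) →
    (bad.card : ℝ) ≤ C₀ * (H : ℝ) ^ Fintype.card ι * (Real.log H / Real.sqrt H)

section
variable {ι : Type*} [Fintype ι]

lemma Negl.mono {A B : Set (ι → ℤ)} (hB : Negl B) (h : A ⊆ B) : Negl A := by
  obtain ⟨c, H0, hc, hh⟩ := hB
  exact ⟨c, H0, hc, fun H hH bad h1 h2 => hh H hH bad h1 fun x hx => h (h2 x hx)⟩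

lemma Negl.union {A B : Set (ι → ℤ)} (hA : Negl A) (hB : Negl B) : Negl (A ∪ B) := by
  classical
  obtain ⟨c, H0, hc, hh⟩ := hA
  obtain ⟨c', H0', hc', hh'⟩ := hB
  refine ⟨c + c', max H0 H0', by positivity, fun H hH bad h1 h2 => ?_⟩
  have e1 := hh H (le_trans (le_max_left _ _) hH) (bad.filter fun x => x ∈ A)
    (fun x hx => h1 x (Finset.mem_filter.1 hx).1) (fun x hx => (Finset.mem_filter.1 hx).2)
  have e2 := hh' H (le_trans (le_max_right _ _) hH) (bad.filter fun x => ¬ x ∈ A)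
    (fun x hx => h1 x (Finset.mem_filter.1 hx).1)
    (fun x hx => (h2 x (Finset.mem_filter.1 hx).1).resolve_left (Finset.mem_filter.1 hx).2)
  have e3 : (bad.card : ℝ) = (bad.filter fun x => x ∈ A).card + (bad.filter fun x => ¬ x ∈ A).card := by
    exact_mod_cast (Finset.card_filter_add_card_filter_not (fun x => x ∈ A)).symm
  rw [e3, add_mul, add_mul]
  exact add_le_add e1 e2

/-- Weighted selection of coordinates. -/
def selHom {R κ : Type*} [CommRing R] (c : κ → R) (e : κ → ι) : (ι → R) →+ (κ → R) where
  toFun x := fun k => c k * x (e k)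
  map_zero' := by funext k; simp
  map_add' x y := by funext k; simp [mul_add]

lemma selHom_surjective {ι F κ : Type*} [Field F] (c : κ → F) (hc : ∀ k, c k ≠ 0)
    (e : κ → ι) (he : Function.Injective e) : Function.Surjective (selHom c e) := by
  intro y
  refine ⟨Function.extend e (fun k => (c k)⁻¹ * y k) 0, ?_⟩
  funext k
  simp only [selHom, AddMonoidHom.coe_mk, ZeroHom.coe_mk]
  rw [he.extend_apply, mul_inv_cancel_left₀ (hc k)]

/-- The large sieve in the form used below: vectors that avoid, at every large prime, a set of
residues pulled back along `selHom` from a set of positive density are negligible. -/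
lemma negl_sieve {κ : Type*} [Fintype κ] [DecidableEq ι] (e : κ → ι) (he : Function.Injective e)
    (c : (p : ℕ) → κ → ZMod p) (S : (p : ℕ) → Set (κ → ZMod p)) (a : ℕ) (ha : 0 < a) (p0 : ℕ)
    (hc : ∀ p, p.Prime → p0 ≤ p → ∀ k, c p k ≠ 0)
    (hS : ∀ p, [Fact p.Prime] → p0 ≤ p → p ^ Fintype.card κ ≤ a * (S p).ncard)
    (B : Set (ι → ℤ))
    (hB : ∀ x, (∀ p, [Fact p.Prime] → p0 ≤ p → (fun k => c p k * ((x (e k) : ℤ) : ZMod p)) ∈ S p →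
      x ∉ B)) : Negl B := by
  obtain ⟨C₀, H0, hC, h⟩ := sieve_asymp (fun p => (selHom (c p) e) ⁻¹' S p) (1 / (a : ℝ)) (by positivity) p0
    (fun p hp hp0 => by
      have : Fact p.Prime := ⟨hp⟩
      refine density_comap _ (selHom_surjective _ (hc p hp hp0) _ he) _ _ ?_
      exact dens_of_nat ha (hS p hp0))
  refine ⟨C₀, H0, hC, fun H hH bad h1 h2 => h H hH bad h1 fun x hx p hp hp0 hmem => ?_⟩
  have : Fact p.Prime := ⟨hp⟩
  exact hB x p hp0 hmem (h2 x hx)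

end

section
variable (r D : ℕ)

/-- Condition (c) fails only on a negligible set. -/
lemma negl_top : Negl {x : Fin (r + 2) × Fin (D + 1) → ℤ |
    ¬ ((low (r + 2) (fun i => x (i, Fin.last D))).natDegree = r + 1 ∧
      Irreducible ((low (r + 2) (fun i => x (i, Fin.last D))).map (Int.castRingHom ℚ)))} := by
  refine negl_sieve (fun i : Fin (r + 2) => (i, Fin.last D)) (fun i j h => (Prod.ext_iff.1 h).1)
    (fun p _ => 1) (fun p => irrSet (ZMod p) (r + 1)) (4 * (r + 1)) (by omega) 3
    (fun p hp _ k => by have : Fact p.Prime := ⟨hp⟩; exact one_ne_zero)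
    (fun p _ hp => by rw [Fintype.card_fin]; exact irrSet_count p hp (r + 1) (by omega)) _ ?_
  intro x p _ hp hmem hbad
  apply hbad
  simp only [one_mul] at hmem
  have hm : (low (r + 2) (fun i => x (i, Fin.last D))).map (Int.castRingHom (ZMod p)) =
      low (r + 2) (fun i => ((x (i, Fin.last D) : ℤ) : ZMod p)) := by rw [low_map]; rfl
  have h1 : (low (r + 2) (fun i => x (i, Fin.last D))).natDegree = r + 1 := by
    refine le_antisymm (low_natDegree _ _) ?_
    have := natDegree_map_le (f := Int.castRingHom (ZMod p)) (p := low (r + 2) (fun i => x (i, Fin.last D)))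
    rw [hm, hmem.1] at this
    exact this
  refine ⟨h1, irreducible_rat_of_zmod _ p ?_ ?_⟩
  · rw [hm, hmem.1, h1]
  · rw [hm]; exact hmem.2

lemma row0_map (p : ℕ) (x : Fin (r + 2) × Fin (D + 1) → ℤ) :
    ((bp (r + 2) D x).map (evalRingHom 0)).map (Int.castRingHom (ZMod p)) =
      X ^ (r + 2) + low (r + 2) (fun i => ((x (i, 0) : ℤ) : ZMod p)) := by
  rw [bp_zero, Polynomial.map_add, low_map]
  simp

lemma negl_monIrr : Negl {x : Fin (r + 2) × Fin (D + 1) → ℤ |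
    ¬ ∃ p, ∃ _ : Fact p.Prime, Irreducible (((bp (r + 2) D x).map (evalRingHom 0)).map (Int.castRingHom (ZMod p)))} := by
  refine negl_sieve (fun i : Fin (r + 2) => (i, 0)) (fun i j h => (Prod.ext_iff.1 h).1)
    (fun p _ => 1) (fun p => monIrrSet (ZMod p) (r + 2)) (2 * (r + 2)) (by omega) 3
    (fun p hp _ k => by have : Fact p.Prime := ⟨hp⟩; exact one_ne_zero)
    (fun p _ hp => by rw [Fintype.card_fin]; exact monIrr_count p hp (r + 2) (by omega)) _ ?_
  intro x p hpF hp hmem hbad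
  apply hbad
  simp only [one_mul] at hmem
  exact ⟨p, hpF, by rw [row0_map]; exact hmem⟩

lemma negl_linIrr (hr : 1 ≤ r) : Negl {x : Fin (r + 2) × Fin (D + 1) → ℤ |
    ¬ ∃ p, ∃ _ : Fact p.Prime, ∃ (a : ZMod p) (g : (ZMod p)[X]), Irreducible g ∧ g.natDegree = r + 1 ∧
      ((bp (r + 2) D x).map (evalRingHom 0)).map (Int.castRingHom (ZMod p)) = (X - C a) * g} := by
  refine negl_sieve (fun i : Fin (r + 2) => (i, 0)) (fun i j h => (Prod.ext_iff.1 h).1)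
    (fun p _ => 1) (fun p => linIrrSet (ZMod p) (r + 1)) (2 * (r + 1)) (by omega) 3
    (fun p hp _ k => by have : Fact p.Prime := ⟨hp⟩; exact one_ne_zero)
    (fun p _ hp => by rw [Fintype.card_fin]; exact linIrr_count p hp (r + 1) (by omega)) _ ?_
  intro x p hpF hp hmem hbad
  apply hbad
  simp only [one_mul] at hmem
  obtain ⟨a, g, h1, _, h3, h4⟩ := hmem
  exact ⟨p, hpF, a, g, h1, h3, by rw [row0_map]; exact h4⟩

lemma negl_quadLin : Negl {x : Fin (r + 2) × Fin (D + 1) → ℤ |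
    ¬ ∃ p, ∃ _ : Fact p.Prime, ∃ (s : Finset (ZMod p)) (g : (ZMod p)[X]), Irreducible g ∧ g.natDegree = 2 ∧
      ((bp (r + 2) D x).map (evalRingHom 0)).map (Int.castRingHom (ZMod p)) = g * ∏ a ∈ s, (X - C a)} := by
  refine negl_sieve (fun i : Fin (r + 2) => (i, 0)) (fun i j h => (Prod.ext_iff.1 h).1)
    (fun p _ => 1) (fun p => quadLinSet (ZMod p) r) (4 * (2 ^ r * r.factorial)) (by positivity) (3 + 2 * r)
    (fun p hp _ k => by have : Fact p.Prime := ⟨hp⟩; exact one_ne_zero)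
    (fun p _ hp => by rw [Fintype.card_fin]; exact quadLin_count p r hp) _ ?_
  intro x p hpF hp hmem hbad
  apply hbad
  simp only [one_mul] at hmem
  obtain ⟨a, g, h1, _, h3, h4⟩ := hmem
  exact ⟨p, hpF, a, g, h1, h3, by rw [row0_map]; exact h4⟩

end

lemma cast_ne_zero_zmod {p k : ℕ} (hk : 0 < k) (hp : k < p) : (k : ZMod p) ≠ 0 := by
  rw [Ne, ZMod.natCast_eq_zero_iff]
  exact fun h => absurd (Nat.le_of_dvd hk h) (by omega)

lemma derivative_low {R : Type*} [CommRing R] (d : ℕ) (v : Fin (d + 1) → R) :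
    derivative (low (d + 1) v) = low d (fun i => ((i : ℕ) + 1 : ℕ) * v i.succ) := by
  ext k
  rw [coeff_derivative, low_coeff, low_coeff]
  by_cases h : k < d
  · rw [dif_pos (by omega), dif_pos h]
    push_cast
    exact mul_comm _ _
  · rw [dif_neg (by omega), dif_neg h, zero_mul]

section
variable (m D : ℕ)

lemma negl_derivTop : Negl {x : Fin (m + 3) × Fin (D + 1) → ℤ |
    ¬ Irreducible ((derivative (low (m + 3) (fun i => x (i, Fin.last D)))).map (Int.castRingHom ℚ))} := by
  refine negl_sieve (fun i : Fin (m + 2) => (i.succ, Fin.last D))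
    (fun i j h => Fin.succ_injective _ (Prod.ext_iff.1 h).1)
    (fun p i => (((i : ℕ) + 1 : ℕ) : ZMod p)) (fun p => irrSet (ZMod p) (m + 1)) (4 * (m + 1)) (by omega) (m + 4)
    (fun p hp hp0 k => cast_ne_zero_zmod (by omega) (by have := k.2; omega))
    (fun p _ hp => by rw [Fintype.card_fin]; exact irrSet_count p (by omega) (m + 1) (by omega)) _ ?_
  intro x p _ hp hmem hbad
  apply hbad
  rw [derivative_low]
  have hm : (low (m + 2) (fun i => (((i : ℕ) + 1 : ℕ) : ℤ) * x (i.succ, Fin.last D))).map (Int.castRingHom (ZMod p)) =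
      low (m + 2) (fun i => (((i : ℕ) + 1 : ℕ) : ZMod p) * ((x (i.succ, Fin.last D) : ℤ) : ZMod p)) := by
    rw [low_map]; congr 1; funext i; simp
  refine irreducible_rat_of_zmod _ p ?_ ?_
  · refine le_antisymm natDegree_map_le ?_
    rw [hm, hmem.1]
    exact low_natDegree _ _
  · rw [hm]; exact hmem.2

/-- Dividing by the leading coefficient `m + 3` of the derivative gives the weights
`(i + 1) / (m + 3)` in the application of `negl_sieve`. -/
lemma negl_derivMon : Negl {x : Fin (m + 3) × Fin (D + 1) → ℤ |
    ¬ Irreducible ((derivative (X ^ (m + 3) + low (m + 3) (fun i => x (i, 0)))).map (Int.castRingHom ℚ))} := by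
  refine negl_sieve (fun i : Fin (m + 2) => (i.succ, 0))
    (fun i j h => Fin.succ_injective _ (Prod.ext_iff.1 h).1)
    (fun p i => (((m + 3 : ℕ) : ZMod p))⁻¹ * (((i : ℕ) + 1 : ℕ) : ZMod p)) (fun p => monIrrSet (ZMod p) (m + 2))
    (2 * (m + 2)) (by omega) (m + 4)
    (fun p hp hp0 k => by
      have : Fact p.Prime := ⟨hp⟩
      exact mul_ne_zero (inv_ne_zero (cast_ne_zero_zmod (by omega) (by omega)))
        (cast_ne_zero_zmod (by omega) (by have := k.2; omega)))
    (fun p _ hp => by rw [Fintype.card_fin]; exact monIrr_count p (by omega) (m + 2) (by omega)) _ ?_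
  intro x p hpF hp hmem hbad
  apply hbad
  have hne : (((m + 3 : ℕ) : ZMod p)) ≠ 0 := cast_ne_zero_zmod (by omega) (by omega)
  have hm : (derivative (X ^ (m + 3) + low (m + 3) (fun i => x (i, 0)))).map (Int.castRingHom (ZMod p)) =
      C (((m + 3 : ℕ) : ZMod p)) * (X ^ (m + 2) + low (m + 2) (fun i =>
        (((m + 3 : ℕ) : ZMod p))⁻¹ * (((i : ℕ) + 1 : ℕ) : ZMod p) * ((x (i.succ, 0) : ℤ) : ZMod p))) := by
    rw [derivative_add, derivative_low, derivative_X_pow, Polynomial.map_add, low_map, mul_add]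
    congr 1
    · simp only [Polynomial.map_mul, Polynomial.map_natCast, Polynomial.map_pow, map_X, map_natCast]
      rfl
    · ext k
      rw [coeff_C_mul, low_coeff, low_coeff]
      split_ifs with hk
      · rw [mul_assoc, mul_inv_cancel_left₀ hne]
        simp
      · simp
  have hdeg : ((derivative (X ^ (m + 3) + low (m + 3) (fun i => x (i, 0)))).map
      (Int.castRingHom (ZMod p))).natDegree = m + 2 := by
    rw [hm, natDegree_C_mul hne, natDegree_monic_low]
  refine irreducible_rat_of_zmod _ p ?_ ?_
  · refine le_antisymm natDegree_map_le ?_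
    rw [hdeg]
    refine (natDegree_derivative_le _).trans ?_
    rw [natDegree_monic_low]; omega
  · rw [hm, irreducible_isUnit_mul (isUnit_C.2 hne.isUnit)]
    exact hmem

end

lemma discOf_two {R : Type*} [CommRing R] (a b : R) :
    discOf (X ^ 2 + C b * X + C a) 2 = b ^ 2 - 4 * a := by
  rw [discOf, resultantOf, Matrix.det_fin_three]
  simp [sylvesterMatrix, coeff_X, coeff_C, coeff_one]
  ring

/-- For `n = 2` the discriminant is `a₁² - 4 a₀`, and the sieve applies to it directly. -/
lemma negl_disc_two (D : ℕ) (hD : 1 ≤ D) : Negl {x : Fin 2 × Fin (D + 1) → ℤ |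
    ¬ Irreducible ((discOf (bp 2 D x) 2).map (Int.castRingHom ℚ))} := by
  refine negl_sieve id (fun i j h => h)
    (fun p i => 1) (fun p => discSet (ZMod p) D) (8 * D) (by omega) 3
    (fun p hp _ k => by have : Fact p.Prime := ⟨hp⟩; exact one_ne_zero)
    (fun p _ hp => by
      rw [Fintype.card_prod, Fintype.card_fin, Fintype.card_fin]
      exact disc_count p hp D hD) _ ?_
  intro x p _ hp hmem hbad
  apply hbad
  simp only [one_mul, id_eq] at hmem
  have hx : discOf (bp 2 D x) 2 = (low (D + 1) fun j => x (1, j)) ^ 2 - 4 * (low (D + 1) fun j => x (0, j)) := by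
    rw [← discOf_two]
    congr 1
    rw [bp, low, Fin.sum_univ_two]
    simp
    ring
  have hm : ((low (D + 1) fun j => x (1, j)) ^ 2 - 4 * (low (D + 1) fun j => x (0, j))).map (Int.castRingHom (ZMod p)) =
     (low (D + 1) fun j => ((x (1, j) : ℤ) : ZMod p)) ^ 2 - 4 * (low (D + 1) fun j => ((x (0, j) : ℤ) : ZMod p)) := by
    rw [Polynomial.map_sub, Polynomial.map_mul, Polynomial.map_pow, low_map, low_map]
    simp
  rw [hx]
  refine irreducible_rat_of_zmod _ p ?_ ?_
  · refine le_antisymm natDegree_map_le ?_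
    rw [hm, hmem.1]
    refine (natDegree_sub_le _ _).trans (max_le ?_ ?_)
    · exact natDegree_pow_le_of_le 2 (low_natDegree _ _)
    · rw [show (4 : ℤ[X]) = C 4 from rfl]
      refine (natDegree_C_mul_le _ _).trans ((low_natDegree _ _).trans (by omega))
  · rw [hm]; exact hmem.2

/-! ### Density of the good polynomials -/

/-- The three conditions (a), (b), (c) on `P`. -/
def Good (n D : ℕ) (P : ℤ[X][X]) : Prop :=
  Nonempty ((toQT P).Gal ≃* Equiv.Perm (Fin n)) ∧
  Irreducible ((discOf P n).map (Int.castRingHom ℚ)) ∧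
  (topCoeffPoly P n D).natDegree = n - 1 ∧
  Irreducible ((topCoeffPoly P n D).map (Int.castRingHom ℚ))

lemma negl_two (D : ℕ) (hD : 1 ≤ D) : Negl {x : Fin 2 × Fin (D + 1) → ℤ | ¬ Good 2 D (bp 2 D x)} := by
  refine ((negl_top 0 D).union ((negl_monIrr 0 D).union ((negl_quadLin 0 D).union (negl_disc_two D hD)))).mono ?_
  intro x hx
  by_contra hcon
  simp only [Set.mem_union, Set.mem_ofPred_eq, not_or, not_not] at hcon
  obtain ⟨h1, h2, h4, h5⟩ := hcon
  refine hx ⟨?_, h5, ?_, ?_⟩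
  · exact gal_symm _ (bp_monic _ _ _) 2 (bp_natDegree _ _ _) le_rfl h2 (by omega) h4
  · rw [bp_top]; exact h1.1
  · rw [bp_top]; exact h1.2

lemma negl_ge_three (m D : ℕ) (hD : 1 ≤ D) :
    Negl {x : Fin (m + 3) × Fin (D + 1) → ℤ | ¬ Good (m + 3) D (bp (m + 3) D x)} := by
  have hfib : Negl {x : Fin (m + 3) × Fin (D + 1) → ℤ |
      (∃ q, FamHyp (toQ (bp (m + 3) D (Function.update x (i0 m D) 0))) m D q) ∧
      ¬ Irreducible ((discOf (bp (m + 3) D x) (m + 3)).map (Int.castRingHom ℚ))} := fibre_count m D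
  refine ((negl_top (m + 1) D).union ((negl_monIrr (m + 1) D).union ((negl_quadLin (m + 1) D).union
    ((negl_linIrr (m + 1) D (by omega)).union ((negl_derivTop m D).union ((negl_derivMon m D).union hfib)))))).mono ?_
  intro x hx
  by_contra hcon
  simp only [Set.mem_union, Set.mem_ofPred_eq, not_or, not_not] at hcon
  obtain ⟨h1, h2, h4, h3, h5, h6, h7⟩ := hcon
  refine hx ⟨?_, ?_, ?_, ?_⟩
  · exact gal_symm _ (bp_monic _ _ _) (m + 3) (bp_natDegree _ _ _) (by omega) h2 (fun _ => h3) h4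
  · refine not_not.1 fun hd => h7 ⟨⟨_, famHyp_of m D hD x _ _ rfl rfl h1.1 h1.2 h5 h6 ?_⟩, hd⟩
    obtain ⟨p, hp, hirr⟩ := h2
    have hbz := bp_zero (m + 3) D x
    have hmon : (X ^ (m + 3) + low (m + 3) (fun i => x (i, 0))).Monic := monic_low _ _
    refine irreducible_rat_of_zmod _ p (hmon.natDegree_map _) ?_
    rw [← hbz]; exact hirr
  · rw [bp_top]; exact h1.1
  · rw [bp_top]; exact h1.2

lemma negl_bad (n D : ℕ) (hn : 2 ≤ n) (hD : 1 ≤ D) :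
    Negl {x : Fin n × Fin (D + 1) → ℤ | ¬ Good n D (bp n D x)} := by
  obtain rfl | hn3 := hn.eq_or_lt
  · exact negl_two D hD
  · obtain ⟨m, rfl⟩ := Nat.exists_eq_add_of_le hn3
    rw [show (2 + 1 + m) = m + 3 by omega]
    exact negl_ge_three m D hD

/-- The coefficient vectors of height at most `H`. -/
def box (n D H : ℕ) : Finset (Fin n × Fin (D + 1) → ℤ) :=
  Fintype.piFinset fun _ => Finset.Icc (-(H : ℤ)) H

lemma mem_box {n D H : ℕ} {x : Fin n × Fin (D + 1) → ℤ} : x ∈ box n D H ↔ ∀ i, |x i| ≤ (H : ℤ) := by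
  simp [box, abs_le]

lemma box_card (n D H : ℕ) : (box n D H).card = (2 * H + 1) ^ Fintype.card (Fin n × Fin (D + 1)) := by
  rw [box, Fintype.card_piFinset, Finset.prod_const, Int.card_Icc, Finset.card_univ]
  congr 1; omega

lemma bp_injective (n D : ℕ) : Function.Injective (bp (R := ℤ) n D) := by
  intro x y h
  funext ⟨i, j⟩
  rw [← bp_coeff_lt n D x i j, h, bp_coeff_lt]

/-- For `H ≥ 1` the leading coefficient `1` does not violate the height bound, whence `Q(n,D,H)` is a full box. -/
lemma qset_eq (n D H : ℕ) (hH : 1 ≤ H) :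
    QSet n D ∩ {P | QHeightLE P H} = bp n D '' (box n D H : Set (Fin n × Fin (D + 1) → ℤ)) := by
  ext P
  constructor
  · rintro ⟨⟨hm, hd, hc⟩, hh⟩
    refine ⟨fun ij => (P.coeff ij.1).coeff ij.2, ?_, ?_⟩
    · exact mem_box.2 fun ij => hh _ _
    · rw [bp]
      have : (fun i : Fin n => low (D + 1) fun j => (P.coeff (i : ℕ)).coeff (j : ℕ)) = fun i : Fin n => P.coeff i := by
        funext i
        refine low_of_degree (lt_of_le_of_lt degree_le_natDegree ?_)
        exact_mod_cast Nat.lt_succ_of_le (hc i)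
      exact (congrArg (fun z => X ^ n + low n z) this).trans (monic_eq_low hm hd)
  · rintro ⟨x, hx, rfl⟩
    refine ⟨⟨bp_monic _ _ _, bp_natDegree _ _ _, fun i => bp_coeff_natDegree _ _ _ i⟩, fun i j => ?_⟩
    have hx' := mem_box.1 hx
    rw [bp_coeff]
    by_cases hi : i < n
    · rw [if_neg (by omega), dif_pos hi, zero_add, low_coeff]
      split_ifs
      · exact hx' _
      · simp
    · rw [dif_neg hi, add_zero]
      split_ifs
      · rw [coeff_one]
        split_ifs
        · simpa using hH
        · simp
      · simp

lemma isBigO_of_negl (n D : ℕ) (h : Negl {x : Fin n × Fin (D + 1) → ℤ | ¬ Good n D (bp n D x)}) :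
    (fun H : ℕ => (1 : ℝ) - (({P ∈ QSet n D | Good n D P} ∩ {P | QHeightLE P H}).ncard : ℝ) /
          ((QSet n D ∩ {P | QHeightLE P H}).ncard : ℝ)) =O[atTop]
      fun H : ℕ => Real.log H / Real.sqrt H := by
  classical
  obtain ⟨C₀, H0, hC, hb⟩ := h
  refine IsBigO.of_bound C₀ ?_
  filter_upwards [eventually_ge_atTop H0, eventually_ge_atTop 1] with H hH hH1
  set good := (box n D H).filter fun x => Good n D (bp n D x) with hgood
  set bad := (box n D H).filter fun x => ¬ Good n D (bp n D x) with hbad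
  have e1 : (QSet n D ∩ {P | QHeightLE P H}).ncard = (box n D H).card := by
    rw [qset_eq n D H hH1, Set.ncard_image_of_injective _ (bp_injective n D), Set.ncard_coe_finset]
  have e2 : ({P ∈ QSet n D | Good n D P} ∩ {P | QHeightLE P H}).ncard = good.card := by
    have : {P ∈ QSet n D | Good n D P} ∩ {P | QHeightLE P H} =
        bp n D '' (good : Set (Fin n × Fin (D + 1) → ℤ)) := by
      have hq := qset_eq n D H hH1
      ext P
      constructor
      · rintro ⟨⟨h1, h2⟩, h3⟩
        have : P ∈ QSet n D ∩ {P | QHeightLE P H} := ⟨h1, h3⟩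
        rw [hq] at this
        obtain ⟨x, hx, rfl⟩ := this
        exact ⟨x, Finset.mem_coe.2 (Finset.mem_filter.2 ⟨hx, h2⟩), rfl⟩
      · rintro ⟨x, hx, rfl⟩
        have hx' := Finset.mem_filter.1 (Finset.mem_coe.1 hx)
        have : bp n D x ∈ QSet n D ∩ {P | QHeightLE P H} := by
          rw [hq]; exact ⟨x, hx'.1, rfl⟩
        exact ⟨⟨this.1, hx'.2⟩, this.2⟩
    rw [this, Set.ncard_image_of_injective _ (bp_injective n D), Set.ncard_coe_finset]
  have e3 : (good.card : ℝ) + bad.card = (box n D H).card := by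
    exact_mod_cast Finset.card_filter_add_card_filter_not _
  have hbox : (0 : ℝ) < (box n D H).card := by rw [box_card]; positivity
  have hle := hb H hH bad (fun x hx => mem_box.1 (Finset.mem_filter.1 hx).1)
    (fun x hx => (Finset.mem_filter.1 hx).2)
  rw [e1, e2]
  have e4 : (1 : ℝ) - good.card / (box n D H).card = bad.card / (box n D H).card := by
    field_simp
    linarith
  have hL : 0 ≤ Real.log H / Real.sqrt H :=
    div_nonneg (Real.log_natCast_nonneg H) (Real.sqrt_nonneg _)
  rw [e4, Real.norm_of_nonneg (by positivity), Real.norm_of_nonneg hL, div_le_iff₀ hbox]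
  refine hle.trans ?_
  have hp : (H : ℝ) ^ Fintype.card (Fin n × Fin (D + 1)) ≤ (box n D H).card := by
    rw [box_card]
    push_cast
    exact pow_le_pow_left₀ (by positivity) (by linarith [Nat.cast_nonneg (α := ℝ) H]) _
  calc C₀ * (H : ℝ) ^ Fintype.card (Fin n × Fin (D + 1)) * (Real.log H / Real.sqrt H)
      = (C₀ * (Real.log H / Real.sqrt H)) * (H : ℝ) ^ Fintype.card (Fin n × Fin (D + 1)) := by ring
    _ ≤ _ := mul_le_mul_of_nonneg_left hp (mul_nonneg hC hL)

end S9

theorem stmt9 (n D : ℕ) (hn : 2 ≤ n) (hD : 1 ≤ D) :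
    (fun H : ℕ => (1 : ℝ) -
        (({P ∈ QSet n D |
            Nonempty ((toQT P).Gal ≃* Equiv.Perm (Fin n)) ∧
            Irreducible ((discOf P n).map (Int.castRingHom ℚ)) ∧
            (topCoeffPoly P n D).natDegree = n - 1 ∧
            Irreducible ((topCoeffPoly P n D).map (Int.castRingHom ℚ))} ∩
            {P | QHeightLE P H}).ncard : ℝ) /
          ((QSet n D ∩ {P | QHeightLE P H}).ncard : ℝ)) =O[atTop]
      fun H : ℕ => Real.log H / Real.sqrt H := by
  exact S9.isBigO_of_negl n D (S9.negl_bad n D hn hD)
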